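/- There is a constant q₀ depending only on n such that the following holds whenever q ≥ q₀: for every J ⊆ [n] with 1 ∈ J or n ∈ J, if 𝓕_J is a ratio-sharp EKR-set of flags of type J, then there exist i ∈ {1, n} ∩ J and an EKR-set 𝓕_i of totally isotropic i-spaces of maximum cardinality among all EKR-sets of i-spaces such that 𝓕_J = { F : F is a flag of type J and F_i ∈ 𝓕_i }. -/

import Mathlib

open scoped Classical

open Module

section Defs

variable {F V : Type} [Field F] [AddCommGroup V] [Module F V]

/-- The orthogonal complement of a subspace with respect to a bilinear form. -/
def bperp (B : V →ₗ[F] V →ₗ[F] F) (W : Submodule F V) : Submodule F V :=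
  ⨅ w ∈ W, LinearMap.ker (B w)

/-- A subspace is totally isotropic for `B`. -/
def IsTotIso (B : V →ₗ[F] V →ₗ[F] F) (W : Submodule F V) : Prop :=
  ∀ u ∈ W, ∀ w ∈ W, B u w = 0

/-- `B` is an alternating form. -/
def IsAltForm (B : V →ₗ[F] V →ₗ[F] F) : Prop := ∀ v, B v v = 0

/-- `B` is nondegenerate. -/
def NondegForm (B : V →ₗ[F] V →ₗ[F] F) : Prop := ∀ v, (∀ w, B v w = 0) → v = 0

/-- A flag of type `J` of totally isotropic subspaces: entries outside `J` are `⊥`. -/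
structure SFlag (B : V →ₗ[F] V →ₗ[F] F) (J : Finset ℕ) where
  space : ℕ → Submodule F V
  isotropic : ∀ i ∈ J, IsTotIso B (space i)
  finrank_eq : ∀ i ∈ J, Module.finrank F (space i) = i
  mono : ∀ i ∈ J, ∀ j ∈ J, i ≤ j → space i ≤ space j
  eq_bot : ∀ i, i ∉ J → space i = ⊥

/-- Two flags of type `J` are opposite. -/
def FlagOpp {B : V →ₗ[F] V →ₗ[F] F} {J : Finset ℕ} (C C' : SFlag B J) : Prop :=
  ∀ i ∈ J, bperp B (C.space i) ⊓ C'.space i = ⊥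

/-- An EKR-set of flags of type `J`: no two members are opposite. -/
def IsEKRFlags {B : V →ₗ[F] V →ₗ[F] F} {J : Finset ℕ} (𝓕 : Set (SFlag B J)) : Prop :=
  ∀ C ∈ 𝓕, ∀ C' ∈ 𝓕, ¬ FlagOpp C C'

/-- Two subspaces are opposite. -/
def SpaceOpp (B : V →ₗ[F] V →ₗ[F] F) (S T : Submodule F V) : Prop :=
  bperp B S ⊓ T = ⊥

/-- An EKR-set of totally isotropic `s`-spaces: no two members are opposite. -/
def IsEKRSpaces (B : V →ₗ[F] V →ₗ[F] F) (s : ℕ) (𝓕 : Set (Submodule F V)) : Prop :=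
  (∀ S ∈ 𝓕, IsTotIso B S ∧ Module.finrank F S = s) ∧
    ∀ S ∈ 𝓕, ∀ T ∈ 𝓕, ¬ SpaceOpp B S T

/-- An `s`-space `S` is heavy with respect to a set `𝓕` of flags: every flag whose
`s`-th entry equals `S` belongs to `𝓕`. -/
def Heavy {B : V →ₗ[F] V →ₗ[F] F} {J : Finset ℕ} (𝓕 : Set (SFlag B J)) (s : ℕ)
    (S : Submodule F V) : Prop :=
  ∀ C : SFlag B J, C.space s = S → C ∈ 𝓕

end Defs

/-- `z_k = ∏_{i=1}^k (q^i-1)/(q-1)`. -/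
noncomputable def zpol (q k : ℕ) : ℝ :=
  ∏ i ∈ Finset.Icc 1 k, ((q : ℝ) ^ i - 1) / ((q : ℝ) - 1)

/-- The Gaussian binomial coefficient `[m choose k]_q` as a real number. -/
noncomputable def gaussq (q m k : ℕ) : ℝ :=
  ∏ i ∈ Finset.Icc 1 k, ((q : ℝ) ^ (m - k + i) - 1) / ((q : ℝ) ^ i - 1)

/-- `Φ_m^s` in `PS(n,1,q)`: the number of totally isotropic `s`-spaces containing a
fixed totally isotropic `m`-space. -/
noncomputable def PhiP (q n m s : ℕ) : ℝ :=
  gaussq q (n - m) (s - m) * ∏ i ∈ Finset.Icc 1 (s - m), ((q : ℝ) ^ (n - m + 1 - i) + 1)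


section BraidAlgebra

variable {M : Type*} [Monoid M]

/-- The palindromic product `s m * ... * s 0 * ... * s m`. -/
def Kd (s : ℕ → M) : ℕ → M
  | 0 => s 0
  | m + 1 => s (m + 1) * Kd s m * s (m + 1)

/-- The longest-element product. -/
def Ad (s : ℕ → M) : ℕ → M
  | 0 => Kd s 0
  | m + 1 => Kd s (m + 1) * Ad s m

/-- Braid relations of type `B_n`. -/
structure BraidB (s : ℕ → M) (n : ℕ) : Prop where
  far : ∀ i j, i + 2 ≤ j → j < n → s i * s j = s j * s i
  a2 : ∀ i, 1 ≤ i → i + 1 < n → s i * s (i + 1) * s i = s (i + 1) * s i * s (i + 1)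
  b2 : 1 < n → s 1 * s 0 * s 1 * s 0 = s 0 * (s 1 * s 0 * s 1)

variable {s : ℕ → M} {n : ℕ}

lemma Kd_comm_far (h : BraidB s n) : ∀ m k, m + 2 ≤ k → k < n → Commute (Kd s m) (s k) := by
  intro m
  induction m with
  | zero => intro k hk hkn; exact h.far 0 k hk hkn
  | succ m ih =>
    intro k hk hkn
    have h1 : Commute (s (m+1)) (s k) := h.far _ _ hk hkn
    exact (h1.mul_left (ih k (by omega) hkn)).mul_left h1

lemma Kd_comm_lt (h : BraidB s n) : ∀ m k, k < m → m < n → Commute (Kd s m) (s k) := by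
  intro m
  induction m with
  | zero => intro k hk; omega
  | succ m ih =>
    intro k hk hmn
    rcases Nat.lt_or_ge k m with hkm | hkm
    · have h1 : Commute (s (m+1)) (s k) := (h.far k (m+1) (by omega) hmn).symm
      exact (h1.mul_left (ih k hkm (by omega))).mul_left h1
    · obtain rfl : k = m := by omega
      rcases k with _ | k
      · exact h.b2 hmn
      · have hc : Kd s k * s (k+2) = s (k+2) * Kd s k := Kd_comm_far h k (k+2) (by omega) hmn
        have ha := h.a2 (k+1) (by omega) hmn
        show s (k+2) * (s (k+1) * Kd s k * s (k+1)) * s (k+2) * s (k+1)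
          = s (k+1) * (s (k+2) * (s (k+1) * Kd s k * s (k+1)) * s (k+2))
        calc s (k+2) * (s (k+1) * Kd s k * s (k+1)) * s (k+2) * s (k+1)
            = s (k+2) * s (k+1) * Kd s k * (s (k+1) * s (k+2) * s (k+1)) := by
              simp only [mul_assoc]
          _ = s (k+2) * s (k+1) * (Kd s k * s (k+2)) * s (k+1) * s (k+2) := by
              rw [ha]; simp only [mul_assoc]
          _ = (s (k+2) * s (k+1) * s (k+2)) * Kd s k * s (k+1) * s (k+2) := by
              rw [hc]; simp only [mul_assoc]
          _ = _ := by rw [← ha]; simp only [mul_assoc]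

lemma comm_Kd_of (x : M) : ∀ m, (∀ k ≤ m, Commute x (s k)) → Commute x (Kd s m) := by
  intro m
  induction m with
  | zero => intro h; exact h 0 le_rfl
  | succ m ih =>
    intro h
    have h1 := h (m+1) le_rfl
    exact (h1.mul_right (ih fun k hk => h k (by omega))).mul_right h1

lemma comm_Ad_of (x : M) : ∀ m, (∀ k ≤ m, Commute x (s k)) → Commute x (Ad s m) := by
  intro m
  induction m with
  | zero => intro h; exact h 0 le_rfl
  | succ m ih =>
    intro h
    exact (comm_Kd_of x (m+1) h).mul_right (ih fun k hk => h k (by omega))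

lemma Ad_comm (h : BraidB s n) : ∀ m k, k ≤ m → m < n → Commute (Ad s m) (s k) := by
  intro m
  induction m with
  | zero => intro k hk _; obtain rfl : k = 0 := by omega
            exact Commute.refl _
  | succ m ih =>
    intro k hk hmn
    rcases Nat.lt_or_ge k (m+1) with hkm | hkm
    · exact (Kd_comm_lt h (m+1) k hkm hmn).mul_left (ih k (by omega) (by omega))
    · obtain rfl : k = m + 1 := by omega
      have hKK : Kd s (m+1) * Kd s m = Kd s m * Kd s (m+1) :=
        comm_Kd_of (Kd s (m+1)) m fun k hk => Kd_comm_lt h (m+1) k (by omega) hmn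
      have key : Commute (Kd s (m+1) * Kd s m) (s (m+1)) := by
        show Kd s (m+1) * Kd s m * s (m+1) = s (m+1) * (Kd s (m+1) * Kd s m)
        calc _ = s (m+1) * (Kd s m * (s (m+1) * Kd s m * s (m+1))) := by
              show s (m+1) * Kd s m * s (m+1) * Kd s m * s (m+1) = _
              simp only [mul_assoc]
          _ = s (m+1) * (Kd s m * Kd s (m+1)) := rfl
          _ = _ := by rw [hKK]
      rcases m with _ | m
      · exact key
      · have h3 : Commute (Ad s m) (s (m+2)) :=
          (comm_Ad_of (s (m+2)) m fun k hk => (h.far k (m+2) (by omega) hmn).symm).symm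
        have : Ad s (m+2) = Kd s (m+2) * Kd s (m+1) * Ad s m := by
          simp only [Ad, mul_assoc]
        show Commute (Ad s (m+2)) _
        rw [this]
        exact key.mul_left h3

end BraidAlgebra


section DetArg
set_option linter.unusedSectionVars false

variable {E : Type*} [AddCommGroup E] [Module ℝ E] [FiniteDimensional ℝ E]

/-- The `q`-eigenspace. -/
def Uq (q : ℝ) (s : ℕ → End ℝ E) (i : ℕ) : Submodule ℝ E := LinearMap.ker (s i - q • 1)

lemma mem_Uq {q : ℝ} {s : ℕ → End ℝ E} {i : ℕ} {x : E} : x ∈ Uq q s i ↔ s i x = q • x := by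
  simp [Uq, sub_eq_zero]

lemma abs_det_quad {q : ℝ} (hq : 1 < q) (s : ℕ → End ℝ E) (i : ℕ)
    (h : s i * s i = (q - 1) • s i + q • 1) :
    |LinearMap.det (s i)| = q ^ (finrank ℝ (Uq q s i)) := by
  have hx : ∀ x, s i (s i x) = (q - 1) • s i x + q • x := fun x => by
    have := congrArg (fun f : End ℝ E => f x) h
    simpa using this
  have he : Uq q s i ≤ (Uq q s i).comap (s i) := by
    intro x hx
    rw [Submodule.mem_comap]
    rw [mem_Uq] at *
    rw [hx, map_smul, hx]
  rw [LinearMap.det_eq_det_mul_det (Uq q s i) (s i) he]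
  have he' : ∀ x ∈ Uq q s i, s i x ∈ Uq q s i := fun x hx => he hx
  have h1 : (s i).restrict he' = q • LinearMap.id := by
    ext x
    have := mem_Uq.1 x.2
    simpa using this
  have h2 : (Uq q s i).mapQ (Uq q s i) (s i) he = (-1 : ℝ) • LinearMap.id := by
    apply LinearMap.ext
    intro y
    obtain ⟨x, rfl⟩ := Submodule.Quotient.mk_surjective _ y
    rw [Submodule.mapQ_apply]
    simp only [LinearMap.smul_apply, LinearMap.id_apply]
    rw [← Submodule.Quotient.mk_smul, Submodule.Quotient.eq, mem_Uq]
    rw [map_sub, hx, map_smul]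
    module
  have h1' : LinearMap.det ((s i).restrict he') = q ^ finrank ℝ (Uq q s i) := by
    rw [h1, LinearMap.det_smul, LinearMap.det_id, mul_one]
  refine (congrArg (fun z => |z * _|) h1').trans ?_
  rw [h2, LinearMap.det_smul]
  simp only [LinearMap.det_id, mul_one, abs_mul, abs_pow, abs_neg, abs_one, one_pow]
  rw [abs_of_pos (by linarith)]

lemma det_main {q : ℝ} (hq : 1 < q) {n : ℕ} (hn : 2 ≤ n) (s : ℕ → End ℝ E) (hB : BraidB s n)
    (hquad : ∀ i < n, s i * s i = (q - 1) • s i + q • 1)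
    (hfix : ∀ x, (∀ i < n, s i x = q • x) → x = 0) (μ : ℝ) (hA : Ad s (n - 1) = μ • 1)
    (hd : 0 < finrank ℝ E) :
    |μ| ≤ q ^ (n * (n - 1)) ∧ (|μ| = q ^ (n * (n - 1)) →
      ∀ x, ∃ w : ℕ → E, x = ∑ i ∈ Finset.range n, w i ∧
        ∀ i < n, ∀ j < n, j ≠ i → s j (w i) = q • w i) := by
  obtain ⟨m, rfl⟩ : ∃ m, n = m + 1 := ⟨n - 1, by omega⟩
  simp only [Nat.add_sub_cancel] at *
  set d := finrank ℝ E with hd'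
  set a : ℕ → ℕ := fun i => finrank ℝ (Uq q s i) with ha
  have hdet : ∀ i < m + 1, |LinearMap.det (s i)| = q ^ a i := fun i hi =>
    abs_det_quad hq s i (hquad i hi)
  have hq0 : 0 < q := by linarith
  have hstep : ∀ i, 1 ≤ i → i + 1 < m + 1 → a i = a (i+1) := by
    intro i hi him
    have := congrArg (fun f => |LinearMap.det f|) (hB.a2 i hi him)
    simp only [map_mul, abs_mul, hdet i (by omega), hdet (i+1) him, ← pow_add] at this
    have := pow_right_injective₀ hq0 hq.ne' this
    omega
  have hconst : ∀ i, 1 ≤ i → i < m + 1 → a i = a 1 := by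
    intro i hi
    induction i, hi using Nat.le_induction with
    | base => intro _; rfl
    | succ i hi ih => intro him; rw [← hstep i hi him, ih (by omega)]
  have hK : ∀ k, k < m + 1 → |LinearMap.det (Kd s k)| = q ^ (a 0 + 2 * k * a 1) := by
    intro k
    induction k with
    | zero => intro h; simpa [Kd] using hdet 0 h
    | succ k ih =>
      intro h
      simp only [Kd, map_mul, abs_mul, ih (by omega), hdet (k+1) h, hconst (k+1) (by omega) h,
        ← pow_add]
      congr 1; ring
  have hAd : ∀ k, k < m + 1 → |LinearMap.det (Ad s k)| = q ^ ((k+1) * a 0 + k * (k+1) * a 1) := by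
    intro k
    induction k with
    | zero => intro h; simpa [Ad] using hK 0 h
    | succ k ih =>
      intro h
      simp only [Ad, map_mul, abs_mul, ih (by omega), hK (k+1) h, ← pow_add]
      congr 1; ring
  have hmu : |μ| ^ d = q ^ ((m+1) * (a 0 + m * a 1)) := by
    have := hAd m (by omega)
    rw [hA, LinearMap.det_smul, map_one, mul_one, abs_pow] at this
    rw [this]; congr 1; ring
  -- the injection
  let φ : E →ₗ[ℝ] (Π i : Fin (m+1), E ⧸ Uq q s i) := LinearMap.pi fun i => (Uq q s i).mkQ
  have hφ0 : ∀ x (i : Fin (m+1)), φ x i = 0 ↔ s i x = q • x := by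
    intro x i
    simp only [φ, LinearMap.pi_apply, Submodule.mkQ_apply, Submodule.Quotient.mk_eq_zero, mem_Uq]
  have hinj : Function.Injective φ := by
    rw [injective_iff_map_eq_zero]
    intro x hx
    apply hfix
    intro i hi
    exact (hφ0 x ⟨i, hi⟩).1 (by rw [hx]; rfl)
  have hdimQ : ∀ i, finrank ℝ (E ⧸ Uq q s i) + a i = d := fun i =>
    Submodule.finrank_quotient_add_finrank _
  have hrank : finrank ℝ (Π i : Fin (m+1), E ⧸ Uq q s i) + (a 0 + m * a 1) = (m+1) * d := by
    rw [Module.finrank_pi_fintype]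
    have h1 : a 0 + m * a 1 = ∑ i : Fin (m+1), a i := by
      rw [Fin.sum_univ_succ]
      congr 1
      rw [Finset.sum_congr rfl (g := fun _ => a 1)]
      · simp
      · intro i _; exact hconst _ (by simp) (by simp)
    rw [h1, ← Finset.sum_add_distrib, Finset.sum_congr rfl (fun (i : Fin (m+1)) _ => hdimQ (i : ℕ))]
    simp
  have hle := LinearMap.finrank_le_finrank_of_injective hinj
  have hab : a 0 + m * a 1 ≤ m * d := by
    have : (m+1) * d = m * d + d := by ring
    omega
  have hpow : (q ^ ((m+1) * m)) ^ d = q ^ ((m+1) * (m * d)) := by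
    rw [← pow_mul]; congr 1; ring
  constructor
  · rw [← pow_le_pow_iff_left₀ (abs_nonneg _) (by positivity) hd.ne', hmu, hpow]
    exact pow_le_pow_right₀ hq.le (Nat.mul_le_mul_left _ hab)
  · intro he
    rw [he, hpow] at hmu
    have h2 := pow_right_injective₀ hq0 hq.ne' hmu
    have h3 : m * d = a 0 + m * a 1 := Nat.eq_of_mul_eq_mul_left (by omega) h2
    have h4 : finrank ℝ E = finrank ℝ (Π i : Fin (m+1), E ⧸ Uq q s i) := by
      have : (m+1) * d = m * d + d := by ring
      omega
    have hsurj : Function.Surjective φ := (LinearMap.injective_iff_surjective_of_finrank_eq_finrank h4).1 hinj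
    intro x
    choose w hw using fun i : Fin (m+1) => hsurj (Pi.single i ((Uq q s i).mkQ x))
    refine ⟨fun i => if h : i < m+1 then w ⟨i, h⟩ else 0, ?_, ?_⟩
    · rw [Finset.sum_range]
      apply hinj
      rw [map_sum]
      have : ∀ i : Fin (m+1), φ (if h : (i:ℕ) < m+1 then w ⟨i, h⟩ else 0) =
          Pi.single i ((Uq q s i).mkQ x) := fun i => by
        rw [dif_pos i.2]; exact hw i
      rw [Finset.sum_congr rfl (fun i _ => this i)]
      have := Finset.univ_sum_single (φ x)
      rw [← this]
      rfl
    · intro i hi j hj hij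
      simp only [hi, dif_pos]
      apply (hφ0 _ ⟨j, hj⟩).1
      rw [hw]
      exact Pi.single_eq_of_ne (by simpa [Fin.ext_iff] using hij) _

end DetArg


section HeckeArg
set_option linter.unusedSectionVars false
variable {X : Type} [Fintype X]

/-- Abstract Hecke algebra data on a finite set of chambers. -/
structure Hecke (s : ℕ → Matrix X X ℝ) (n : ℕ) (q : ℝ) : Prop where
  hq : 2 ≤ q
  hn : 2 ≤ n
  braid : BraidB s n
  symm : ∀ i < n, (s i).transpose = s i
  quad : ∀ i < n, s i * s i = (q - 1) • s i + q • (1 : Matrix X X ℝ)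
  row : ∀ i < n, (s i).mulVec 1 = q • (1 : X → ℝ)
  conn : ∀ x : X → ℝ, (∀ i < n, (s i).mulVec x = q • x) → ∃ c : ℝ, x = c • (1 : X → ℝ)

namespace Hecke
variable {s : ℕ → Matrix X X ℝ} {n : ℕ} {q : ℝ} (H : Hecke s n q)
include H

lemma Kd_row : ∀ m, m < n → (Kd s m).mulVec 1 = q ^ (2*m+1) • (1 : X → ℝ) := by
  intro m
  induction m with
  | zero => intro h; simpa [Kd] using H.row 0 h
  | succ m ih =>
    intro h
    simp only [Kd, ← Matrix.mulVec_mulVec, H.row _ h, Matrix.mulVec_smul, ih (by omega), smul_smul]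
    congr 1; ring

lemma Ad_row : ∀ m, m < n → (Ad s m).mulVec 1 = q ^ ((m+1)^2) • (1 : X → ℝ) := by
  intro m
  induction m with
  | zero => intro h; simpa [Ad] using H.Kd_row 0 h
  | succ m ih =>
    intro h
    simp only [Ad, ← Matrix.mulVec_mulVec, Matrix.mulVec_smul, ih (by omega), smul_smul,
      H.Kd_row _ h]
    congr 1; ring

lemma A_row : (Ad s (n-1)).mulVec 1 = q ^ (n^2) • (1 : X → ℝ) := by
  have := H.hn
  have := H.Ad_row (n-1) (by omega)
  rwa [show n - 1 + 1 = n by omega] at this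

lemma Kd_symm : ∀ m, m < n → (Kd s m).transpose = Kd s m := by
  intro m
  induction m with
  | zero => intro h; exact H.symm 0 h
  | succ m ih =>
    intro h
    simp only [Kd, Matrix.transpose_mul, H.symm _ h, ih (by omega), mul_assoc]

lemma Ad_symm : ∀ m, m < n → (Ad s m).transpose = Ad s m := by
  intro m
  induction m with
  | zero => intro h; exact H.Kd_symm 0 h
  | succ m ih =>
    intro h
    have : Commute (Ad s m) (Kd s (m+1)) :=
      (comm_Ad_of _ m fun k hk => Kd_comm_lt H.braid (m+1) k (by omega) h).symm
    simp only [Ad, Matrix.transpose_mul, H.Kd_symm _ h, ih (by omega)]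
    exact this

lemma A_symm : (Ad s (n-1)).transpose = Ad s (n-1) := H.Ad_symm _ (by have := H.hn; omega)

lemma A_comm (i : ℕ) (hi : i < n) : Ad s (n-1) * s i = s i * Ad s (n-1) :=
  Ad_comm H.braid (n-1) i (by omega) (by omega)

lemma eig_aux (μ : ℝ) (h1 : μ ≠ q ^ (n^2)) (x : X → ℝ) (hx0 : x ≠ 0)
    (hx : (Ad s (n-1)).mulVec x = μ • x) :
    |μ| ≤ q ^ (n * (n - 1)) ∧ (|μ| = q ^ (n * (n - 1)) →
      ∃ w : ℕ → X → ℝ, x = ∑ i ∈ Finset.range n, w i ∧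
        (∀ i < n, (Ad s (n-1)).mulVec (w i) = μ • w i) ∧
        ∀ i < n, ∀ j < n, j ≠ i → (s j).mulVec (w i) = q • w i) := by
  let E : Submodule ℝ (X → ℝ) := LinearMap.ker ((Ad s (n-1)).mulVecLin - μ • 1)
  have hE : ∀ y, y ∈ E ↔ (Ad s (n-1)).mulVec y = μ • y := by
    intro y; simp [E, sub_eq_zero]
  have hinv : ∀ i, i < n → ∀ y ∈ E, (s i).mulVecLin y ∈ E := by
    intro i hi y hy
    rw [hE] at *
    simp only [Matrix.mulVecLin_apply]
    rw [Matrix.mulVec_mulVec, H.A_comm i hi, ← Matrix.mulVec_mulVec, hy, Matrix.mulVec_smul]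
  let s' : ℕ → End ℝ E := fun i => if h : i < n then (s i).mulVecLin.restrict (hinv i h) else 0
  have hs' : ∀ i < n, ∀ y : E, ((s' i y : E) : X → ℝ) = (s i).mulVec y := by
    intro i hi y; simp only [s', hi, dif_pos]; rfl
  have hn := H.hn
  have hB : BraidB s' n := by
    constructor
    · intro i j hij hj
      ext1 y; apply Subtype.ext
      simp only [Module.End.mul_apply, hs' i (by omega), hs' j hj, Matrix.mulVec_mulVec,
        H.braid.far i j hij hj]
    · intro i hi hj
      ext1 y; apply Subtype.ext
      simp only [Module.End.mul_apply, hs' i (by omega), hs' (i+1) hj, Matrix.mulVec_mulVec]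
      rw [← mul_assoc, H.braid.a2 i hi hj, mul_assoc]
    · intro h
      ext1 y; apply Subtype.ext
      simp only [Module.End.mul_apply, hs' 0 (by omega), hs' 1 h, Matrix.mulVec_mulVec]
      have := H.braid.b2 h
      simp only [mul_assoc] at this ⊢
      rw [this]
  have hK : ∀ m < n, ∀ y : E, ((Kd s' m y : E) : X → ℝ) = (Kd s m).mulVec y := by
    intro m
    induction m with
    | zero => intro h y; exact hs' 0 h y
    | succ m ih =>
      intro h y
      simp only [Kd, Module.End.mul_apply, hs' _ h, ih (by omega), Matrix.mulVec_mulVec, mul_assoc]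
  have hA : ∀ m < n, ∀ y : E, ((Ad s' m y : E) : X → ℝ) = (Ad s m).mulVec y := by
    intro m
    induction m with
    | zero => intro h y; exact hs' 0 h y
    | succ m ih =>
      intro h y
      simp only [Ad, Module.End.mul_apply, hK _ h, ih (by omega), Matrix.mulVec_mulVec]
  have hq := H.hq
  have main := det_main (q := q) (by linarith) hn s' hB (by
      intro i hi
      ext1 y; apply Subtype.ext
      simp only [Module.End.mul_apply, hs' i hi, Matrix.mulVec_mulVec, H.quad i hi,
        LinearMap.add_apply, LinearMap.smul_apply, Submodule.coe_add, Submodule.coe_smul,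
        Matrix.add_mulVec, Matrix.smul_mulVec, Matrix.one_mulVec, Module.End.one_apply]) (by
      intro y hy
      obtain ⟨c, hc⟩ := H.conn y (fun i hi => by
        rw [← hs' i hi, hy i hi]; rfl)
      by_cases hc0 : c = 0
      · apply Subtype.ext; rw [hc, hc0]; simp
      exfalso
      have h2 := (hE _).1 y.2
      rw [hc, Matrix.mulVec_smul, H.A_row] at h2
      apply h1
      have hXne : Nonempty X := by
        by_contra hX
        rw [not_nonempty_iff] at hX
        exact hx0 (Subsingleton.elim _ _)
      obtain ⟨z⟩ := hXne
      have := congrFun h2 z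
      simp only [Pi.smul_apply, Pi.one_apply, smul_eq_mul, mul_one] at this
      field_simp at this
      exact this.symm) μ (by
      ext1 y; apply Subtype.ext
      rw [hA (n-1) (by omega), (hE _).1 y.2]; rfl) (by
      have : Nontrivial E := ⟨⟨⟨x, (hE x).2 hx⟩, 0, fun h => hx0 (congrArg Subtype.val h)⟩⟩
      exact Module.finrank_pos)
  refine ⟨main.1, fun he => ?_⟩
  obtain ⟨w, hw1, hw2⟩ := main.2 he ⟨x, (hE x).2 hx⟩
  refine ⟨fun i => w i, ?_, fun i _ => (hE _).1 (w i).2, ?_⟩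
  · have := congrArg Subtype.val hw1
    simpa using this
  · intro i hi j hj hij
    rw [← hs' j hj, hw2 i hi j hj hij]; rfl

lemma psd : (Ad s (n-1) + q ^ (n * (n-1)) • (1 : Matrix X X ℝ)).PosSemidef := by
  have hq := H.hq
  have hH : (Ad s (n-1) + q ^ (n * (n-1)) • (1 : Matrix X X ℝ)).IsHermitian := by
    rw [Matrix.IsHermitian, Matrix.conjTranspose_eq_transpose_of_trivial]
    simp [H.A_symm]
  rw [hH.posSemidef_iff_eigenvalues_nonneg]
  intro j
  have h := hH.mulVec_eigenvectorBasis j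
  set v : X → ℝ := (hH.eigenvectorBasis j).ofLp with hv
  have hv0 : v ≠ 0 := by
    intro h0
    have := hH.eigenvectorBasis.orthonormal.ne_zero j
    apply this
    ext x
    exact congrFun h0 x
  set l := hH.eigenvalues j
  have h2 : (Ad s (n-1)).mulVec v = (l - q ^ (n * (n-1))) • v := by
    rw [Matrix.add_mulVec, Matrix.smul_mulVec, Matrix.one_mulVec] at h
    rw [sub_smul, ← h]; simp
  show 0 ≤ l
  by_cases h1 : l - q ^ (n * (n-1)) = q ^ (n^2)
  · have : 0 < q ^ (n^2) := by positivity
    have : 0 < q ^ (n * (n-1)) := by positivity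
    linarith
  · have := (H.eig_aux _ h1 v hv0 h2).1
    have := (abs_le.1 this).1
    linarith

/-- indicator function -/
noncomputable def _root_.ind (S : Finset X) : X → ℝ := fun x => if x ∈ S then 1 else 0

lemma hoffman (S : Finset X) (hS : ∀ x ∈ S, ∀ y ∈ S, Ad s (n-1) x y = 0) :
    (S.card : ℝ) * (q ^ n + 1) ≤ Fintype.card X ∧
    ((S.card : ℝ) * (q ^ n + 1) = Fintype.card X → S.Nonempty →
      (Ad s (n-1)).mulVec (ind S) = q ^ (n*(n-1)) • (1 - ind S) ∧ 
      ∃ w : ℕ → X → ℝ, ind S - (1 / (q ^ n + 1)) • (1 : X → ℝ) = ∑ i ∈ Finset.range n, w i ∧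
        (∀ i < n, (Ad s (n-1)).mulVec (w i) = -q ^ (n*(n-1)) • w i) ∧
        ∀ i < n, ∀ j < n, j ≠ i → (s j).mulVec (w i) = q • w i) := by
  have hq := H.hq
  have hn := H.hn
  set A := Ad s (n-1) with hA
  set m := q ^ (n*(n-1)) with hm
  have hk : q ^ (n^2) = m * q ^ n := by
    rw [hm, ← pow_add]; congr 1
    obtain ⟨k, rfl⟩ : ∃ k, n = k + 1 := ⟨n-1, by omega⟩
    simp; ring
  have hm0 : 0 < m := by positivity
  have hqn : 0 < q ^ n := by positivity
  rcases S.eq_empty_or_nonempty with rfl | hne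
  · simp
  have hN : 0 < (Fintype.card X : ℝ) := by
    exact_mod_cast Fintype.card_pos_iff.2 ⟨hne.choose⟩
  set N := (Fintype.card X : ℝ) with hNdef
  set f := (S.card : ℝ) with hf
  have hf0 : 0 < f := by rw [hf]; exact_mod_cast hne.card_pos
  set c := f / N with hc
  have hcN : c * N = f := by rw [hc]; field_simp
  let y : X → ℝ := ind S - c • (1 : X → ℝ)
  have i1 : ind S ⬝ᵥ (1 : X → ℝ) = f := by simp [dotProduct, ind, hf]
  have i2 : ind S ⬝ᵥ ind S = f := by simp [dotProduct, ind, hf]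
  have i3 : ind S ⬝ᵥ A.mulVec (ind S) = 0 := by
    simp only [dotProduct, ind, Matrix.mulVec]
    apply Finset.sum_eq_zero
    intro x _
    by_cases hx : x ∈ S
    · simp only [hx, if_true, one_mul]
      apply Finset.sum_eq_zero
      intro z _
      by_cases hz : z ∈ S
      · simp [hS x hx z hz]
      · simp [hz]
    · simp [hx]
  have i4 : (1 : X → ℝ) ⬝ᵥ (1 : X → ℝ) = N := by simp [dotProduct, hNdef]
  have i5 : (1 : X → ℝ) ⬝ᵥ A.mulVec (ind S) = m * q ^ n * f := by
    rw [Matrix.dotProduct_mulVec, ← Matrix.mulVec_transpose, H.A_symm, H.A_row, smul_dotProduct,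
      dotProduct_comm, i1, hk]; rfl
  have hAy : A.mulVec y = A.mulVec (ind S) - (c * (m * q^n)) • (1 : X → ℝ) := by
    simp only [y, Matrix.mulVec_sub, Matrix.mulVec_smul]
    rw [H.A_row, smul_smul, hk]
  have quad : y ⬝ᵥ (A + m • (1 : Matrix X X ℝ)).mulVec y = m * f - c * f * (m * q^n + m) := by
    rw [Matrix.add_mulVec, Matrix.smul_mulVec, Matrix.one_mulVec, hAy]
    simp only [y, dotProduct_add, sub_dotProduct, dotProduct_sub, dotProduct_smul, smul_dotProduct,
      i1, i2, i3, i4, i5, smul_eq_mul]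
    rw [dotProduct_comm 1 (ind S), i1]
    linear_combination (c * m * q ^ n + c * m) * hcN
  have hpsd := H.psd
  have h0 : 0 ≤ y ⬝ᵥ (A + m • (1 : Matrix X X ℝ)).mulVec y := by
    simpa using hpsd.dotProduct_mulVec_nonneg y
  rw [quad] at h0
  have hc1 : c * (q^n + 1) ≤ 1 := by
    by_contra hcon
    push Not at hcon
    have : 0 < (m * f) * (c * (q^n+1) - 1) := by
      apply mul_pos (mul_pos hm0 hf0); linarith
    nlinarith
  constructor
  · calc f * (q^n+1) = (c * (q^n+1)) * N := by rw [← hcN]; ring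
      _ ≤ 1 * N := by gcongr
      _ = N := one_mul _
  · intro heq _
    have hceq : c * (q^n+1) = 1 := by
      rw [hc, div_mul_eq_mul_div, heq]; field_simp
    have hcv : c = 1 / (q^n+1) := by field_simp; exact hceq
    have hz : y ⬝ᵥ (A + m • (1 : Matrix X X ℝ)).mulVec y = 0 := by
      rw [quad]; linear_combination (- f * m) * hceq
    have hz2 : (A + m • (1 : Matrix X X ℝ)).mulVec y = 0 := by
      have := (hpsd.dotProduct_mulVec_zero_iff y).1
      simp only [star_trivial] at this
      exact this hz
    rw [Matrix.add_mulVec, Matrix.smul_mulVec, Matrix.one_mulVec] at hz2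
    have hAy2 : A.mulVec y = (-m) • y := by
      rw [neg_smul]; exact eq_neg_of_add_eq_zero_left hz2
    constructor
    · have h3 := hAy
      rw [hAy2] at h3
      have h4 : A.mulVec (ind S) = (-m) • y + (c * (m * q^n)) • (1 : X → ℝ) := by
        rw [h3]; abel
      rw [h4]
      ext x
      simp only [y, Pi.add_apply, Pi.smul_apply, Pi.sub_apply, Pi.one_apply, smul_eq_mul]
      linear_combination m * hceq
    · rw [← hcv]
      by_cases hy0 : y = 0
      · exact ⟨fun _ => 0, by simpa [y] using hy0, by simp, by simp⟩
      · have hmul : -m ≠ q ^ (n^2) := by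
          have : 0 < q ^ (n^2) := by positivity
          linarith
        exact (H.eig_aux (-m) hmul y hy0 hAy2).2 (by rw [abs_neg, abs_of_pos hm0])

end Hecke
end HeckeArg


section Geo
set_option linter.unusedSectionVars false
variable {F V : Type} [Field F] [AddCommGroup V] [Module F V]

/-- The symplectic set-up. -/
structure Symp (B : V →ₗ[F] V →ₗ[F] F) (n : ℕ) : Prop where
  alt : IsAltForm B
  nd : NondegForm B
  fd : FiniteDimensional F V
  dim : finrank F V = 2 * n
  hn : 3 ≤ n

lemma mem_bperp {B : V →ₗ[F] V →ₗ[F] F} {W : Submodule F V} {v : V} :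
    v ∈ bperp B W ↔ ∀ w ∈ W, B w v = 0 := by
  simp [bperp, Submodule.mem_iInf]

lemma bperp_anti {B : V →ₗ[F] V →ₗ[F] F} {W U : Submodule F V} (h : W ≤ U) :
    bperp B U ≤ bperp B W := fun _ hv => mem_bperp.2 fun w hw => mem_bperp.1 hv w (h hw)

/-- opposite: `T` meets `S^⊥` trivially, pointwise -/
lemma spaceOpp_iff {B : V →ₗ[F] V →ₗ[F] F} {S T : Submodule F V} :
    SpaceOpp B S T ↔ ∀ v ∈ T, (∀ w ∈ S, B w v = 0) → v = 0 := by
  rw [SpaceOpp, Submodule.eq_bot_iff]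
  simp only [Submodule.mem_inf, mem_bperp]
  exact ⟨fun h v hv hw => h v ⟨hw, hv⟩, fun h v hv => h v hv.2 hv.1⟩

lemma finrank_sup_span [FiniteDimensional F V] {W : Submodule F V} {v : V} (hv : v ∉ W) :
    finrank F ↥(W ⊔ Submodule.span F {v}) = finrank F W + 1 := by
  have hv0 : v ≠ 0 := fun h => hv (h ▸ W.zero_mem)
  have h := Submodule.finrank_sup_add_finrank_inf_eq W (Submodule.span F {v})
  have h2 : W ⊓ Submodule.span F {v} = ⊥ := by
    rw [Submodule.eq_bot_iff]
    intro x hx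
    obtain ⟨a, rfl⟩ := Submodule.mem_span_singleton.1 hx.2
    by_cases ha : a = 0
    · simp [ha]
    · exact absurd ((Submodule.smul_mem_iff W ha).1 hx.1) hv
  rw [h2, finrank_bot, finrank_span_singleton hv0] at h
  omega

lemma mem_sup_span {W : Submodule F V} {v x : V} :
    x ∈ W ⊔ Submodule.span F {v} ↔ ∃ w ∈ W, ∃ a : F, w + a • v = x := by
  rw [Submodule.mem_sup]
  constructor
  · rintro ⟨w, hw, z, hz, rfl⟩
    obtain ⟨a, rfl⟩ := Submodule.mem_span_singleton.1 hz
    exact ⟨w, hw, a, rfl⟩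
  · rintro ⟨w, hw, a, rfl⟩
    exact ⟨w, hw, a • v, Submodule.smul_mem _ _ (Submodule.mem_span_singleton_self v), rfl⟩

/-- two distinct members of a pencil -/
lemma pencil_inf [FiniteDimensional F V] {A S T : Submodule F V} {k : ℕ} (hA : finrank F A = k)
    (hS : finrank F S = k + 1) (hT : finrank F T = k + 1) (hAS : A ≤ S) (hAT : A ≤ T)
    (hne : S ≠ T) : S ⊓ T = A := by
  symm
  apply Submodule.eq_of_le_of_finrank_le (le_inf hAS hAT)
  by_contra hcon
  push Not at hcon
  have h1 : S ⊓ T = S := Submodule.eq_of_le_of_finrank_le inf_le_left (by omega)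
  have h2 : S ⊓ T = T := Submodule.eq_of_le_of_finrank_le inf_le_right (by omega)
  exact hne (h1.symm.trans h2)

lemma pencil_sup [FiniteDimensional F V] {A S T : Submodule F V} {k : ℕ} (hA : finrank F A = k)
    (hS : finrank F S = k + 1) (hT : finrank F T = k + 1) (hAS : A ≤ S) (hAT : A ≤ T)
    (hne : S ≠ T) : finrank F ↥(S ⊔ T) = k + 2 := by
  have := Submodule.finrank_sup_add_finrank_inf_eq S T
  rw [pencil_inf hA hS hT hAS hAT hne] at this
  omega

lemma copencil_inf [FiniteDimensional F V] {U S T : Submodule F V} {k : ℕ}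
    (hU : finrank F U = k + 2)
    (hS : finrank F S = k + 1) (hT : finrank F T = k + 1) (hSU : S ≤ U) (hTU : T ≤ U)
    (hne : S ≠ T) : finrank F ↥(S ⊓ T) = k ∧ S ⊔ T = U := by
  have h := Submodule.finrank_sup_add_finrank_inf_eq S T
  have h1 : finrank F ↥(S ⊔ T) ≤ k + 2 := hU ▸ Submodule.finrank_mono (sup_le hSU hTU)
  have h2 : ¬ finrank F ↥(S ⊓ T) ≥ k + 1 := by
    intro hge
    have h1 : S ⊓ T = S := Submodule.eq_of_le_of_finrank_le inf_le_left (by omega)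
    have h2 : S ⊓ T = T := Submodule.eq_of_le_of_finrank_le inf_le_right (by omega)
    exact hne (h1.symm.trans h2)
  exact ⟨by omega, Submodule.eq_of_le_of_finrank_le (sup_le hSU hTU) (by omega)⟩

namespace Symp
variable {B : V →ₗ[F] V →ₗ[F] F} {n : ℕ} (hS : Symp B n)
include hS

lemma skew (u v : V) : B u v = - B v u := by
  have h := hS.alt (u + v)
  simp only [map_add, LinearMap.add_apply, hS.alt u, hS.alt v] at h
  linear_combination h

lemma sym0 {u v : V} (h : B u v = 0) : B v u = 0 := by
  rw [hS.skew, h, neg_zero]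

lemma finrank_bperp (W : Submodule F V) : finrank F (bperp B W) + finrank F W = 2 * n := by
  have := hS.fd
  let B' : LinearMap.BilinForm F V := B
  have hnd : B'.Nondegenerate := by
    constructor
    · intro v hv; exact hS.nd v hv
    · intro v hv; exact hS.nd v (fun w => hS.sym0 (hv w))
  have hr : B'.IsRefl := fun u v h => hS.sym0 h
  have h := LinearMap.BilinForm.finrank_orthogonal hnd W
  have h2 : B'.orthogonal W = bperp B W := by
    ext v
    rw [mem_bperp, LinearMap.BilinForm.mem_orthogonal_iff]
  rw [h2, hS.dim] at h
  have : finrank F W ≤ 2 * n := hS.dim ▸ Submodule.finrank_le W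
  omega

lemma bperp_bperp (W : Submodule F V) : bperp B (bperp B W) = W := by
  have := hS.fd
  symm
  apply Submodule.eq_of_le_of_finrank_eq
  · intro v hv
    rw [mem_bperp]
    intro w hw
    exact hS.sym0 (mem_bperp.1 hw v hv)
  · have := hS.finrank_bperp W
    have := hS.finrank_bperp (bperp B W)
    omega

lemma le_bperp_comm {W U : Submodule F V} (h : W ≤ bperp B U) : U ≤ bperp B W := by
  rw [← hS.bperp_bperp U]; exact bperp_anti h

omit hS in
lemma _root_.totIso_iff {W : Submodule F V} : IsTotIso B W ↔ W ≤ bperp B W :=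
  ⟨fun h v hv => mem_bperp.2 fun w hw => h w hw v hv, fun h u hu _ hw => mem_bperp.1 (h hw) u hu⟩

lemma opp_symm {S T : Submodule F V} (hd : finrank F S = finrank F T) (h : SpaceOpp B S T) :
    SpaceOpp B T S := by
  have := hS.fd
  have h1 := Submodule.finrank_sup_add_finrank_inf_eq (bperp B S) T
  have hz : finrank F ↥(bperp B S ⊓ T) = 0 := by
    rw [show bperp B S ⊓ T = ⊥ from h]; exact finrank_bot F V
  have h2 := hS.finrank_bperp S
  have h3 := hS.finrank_bperp T
  have htop : bperp B S ⊔ T = ⊤ := Submodule.eq_top_of_finrank_eq (by rw [hS.dim]; omega)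
  rw [spaceOpp_iff]
  intro v hv hw
  apply hS.nd
  intro x
  have hx : x ∈ bperp B S ⊔ T := htop ▸ Submodule.mem_top
  obtain ⟨a, ha, b, hb, rfl⟩ := Submodule.mem_sup.1 hx
  rw [map_add, mem_bperp.1 ha v hv, hS.sym0 (hw b hb), add_zero]

/-- `S + v` isotropic when `v ⊥ S`. -/
lemma iso_sup_span {S : Submodule F V} (h : IsTotIso B S) {v : V} (hv : v ∈ bperp B S) :
    IsTotIso B (S ⊔ Submodule.span F {v}) := by
  intro x hx y hy
  obtain ⟨a, ha, l, rfl⟩ := mem_sup_span.1 hx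
  obtain ⟨b, hb, m, rfl⟩ := mem_sup_span.1 hy
  have h1 := mem_bperp.1 hv a ha
  have h2 := hS.sym0 (mem_bperp.1 hv b hb)
  simp [h a ha b hb, h1, h2, hS.alt v]

lemma iso_le {S T : Submodule F V} (h : IsTotIso B T) (hST : S ≤ T) : IsTotIso B S :=
  fun u hu w hw => h u (hST hu) w (hST hw)

/-- maximal t.i. -/
lemma bperp_max {S : Submodule F V} (h : IsTotIso B S) (hd : finrank F S = n) : bperp B S = S := by
  have := hS.fd
  symm
  apply Submodule.eq_of_le_of_finrank_eq (totIso_iff.1 h)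
  have := hS.finrank_bperp S
  omega

end Symp

/-- chambers -/
abbrev Ch (B : V →ₗ[F] V →ₗ[F] F) (n : ℕ) := SFlag B (Finset.Icc 1 n)

lemma SFlag.ext' {B : V →ₗ[F] V →ₗ[F] F} {J : Finset ℕ} {C D : SFlag B J}
    (h : ∀ i, C.space i = D.space i) : C = D := by
  cases C; cases D
  congr
  exact funext h

instance finFlag {B : V →ₗ[F] V →ₗ[F] F} [Finite V] {J : Finset ℕ} : Finite (SFlag B J) := by
  have : Finite (Submodule F V) := Finite.of_injective (fun W : Submodule F V => (W : Set V))
    SetLike.coe_injective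
  apply Finite.of_injective (fun (C : SFlag B J) (j : J) => C.space j)
  intro C D h
  apply SFlag.ext'
  intro i
  by_cases hi : i ∈ J
  · exact congrFun h ⟨i, hi⟩
  · rw [C.eq_bot i hi, D.eq_bot i hi]

namespace SFlag
variable {B : V →ₗ[F] V →ₗ[F] F} {n : ℕ}

lemma zero (C : Ch B n) : C.space 0 = ⊥ := C.eq_bot 0 (by simp)

lemma big (C : Ch B n) {i : ℕ} (h : n < i) : C.space i = ⊥ := C.eq_bot i (by simp; omega)

lemma fr (C : Ch B n) {i : ℕ} (h : i ≤ n) : finrank F (C.space i) = i := by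
  rcases Nat.eq_zero_or_pos i with rfl | hi
  · rw [C.zero]; exact finrank_bot F V
  · exact C.finrank_eq i (by simp; omega)

lemma iso (C : Ch B n) (i : ℕ) : IsTotIso B (C.space i) := by
  by_cases hi : i ∈ Finset.Icc 1 n
  · exact C.isotropic i hi
  · rw [C.eq_bot i hi]; intro u hu w _; rw [(Submodule.mem_bot F).1 hu]; simp

lemma le (C : Ch B n) {i j : ℕ} (h : i ≤ j) (hj : j ≤ n) : C.space i ≤ C.space j := by
  rcases Nat.eq_zero_or_pos i with rfl | hi
  · rw [C.zero]; exact bot_le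
  · exact C.mono i (by simp; omega) j (by simp; omega) h

lemma exists_ch (f : ℕ → Submodule F V) (hf : ∀ i ≤ n, finrank F (f i) = i)
    (hiso : IsTotIso B (f n)) (hm : ∀ i < n, f i ≤ f (i+1)) :
    ∃ C : Ch B n, ∀ i, 1 ≤ i → i ≤ n → C.space i = f i := by
  have hle : ∀ j, j ≤ n → ∀ i, i ≤ j → f i ≤ f j := by
    intro j
    induction j with
    | zero => intro _ i hi; rw [Nat.le_zero.1 hi]
    | succ j ih =>
      intro hj i hi
      rcases Nat.lt_or_ge i (j+1) with h | h
      · exact (ih (by omega) i (by omega)).trans (hm j (by omega))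
      · rw [show i = j+1 by omega]
  refine ⟨⟨fun i => if i ∈ Finset.Icc 1 n then f i else ⊥, ?_, ?_, ?_, ?_⟩, ?_⟩
  · intro i hi
    have hi' := Finset.mem_Icc.1 hi
    simp only [hi, if_true]
    exact fun u hu w hw => hiso u (hle n le_rfl i hi'.2 hu) w (hle n le_rfl i hi'.2 hw)
  · intro i hi
    have hi' := Finset.mem_Icc.1 hi
    have h2 : (if i ∈ Finset.Icc 1 n then f i else ⊥) = f i := if_pos hi
    show finrank F ↥(if i ∈ Finset.Icc 1 n then f i else ⊥) = i
    rw [h2]; exact hf i hi'.2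
  · intro i hi j hj hij
    simp only [hi, hj, if_true]
    exact hle j (Finset.mem_Icc.1 hj).2 i hij
  · intro i hi; exact if_neg hi
  · intro i h1 h2
    have : i ∈ Finset.Icc 1 n := Finset.mem_Icc.2 ⟨h1, h2⟩
    simp only [this, if_true]

/-- builder for chambers -/
lemma build (P : ℕ → Submodule F V → Prop) (h0 : P 0 ⊥)
    (hs : ∀ i < n, ∀ M, P i M → IsTotIso B M → finrank F M = i →
      ∃ M', M ≤ M' ∧ IsTotIso B M' ∧ finrank F M' = i + 1 ∧ P (i+1) M') :
    ∃ D : Ch B n, ∀ i ≤ n, P i (D.space i) := by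
  let Q : ℕ → Submodule F V → Prop := fun i M => P i M ∧ IsTotIso B M ∧ finrank F M = i
  have hQ : ∀ i M, ∃ M', i < n → Q i M → M ≤ M' ∧ Q (i+1) M' := by
    intro i M
    by_cases h : i < n ∧ Q i M
    · obtain ⟨M', a, b, c, d⟩ := hs i h.1 M h.2.1 h.2.2.1 h.2.2.2
      exact ⟨M', fun _ _ => ⟨a, d, b, c⟩⟩
    · exact ⟨⊥, fun h1 h2 => absurd ⟨h1, h2⟩ h⟩
  choose nx hnx using hQ
  let f : ℕ → Submodule F V := fun i => Nat.rec ⊥ (fun i M => nx i M) i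
  have hf : ∀ i ≤ n, Q i (f i) := by
    intro i
    induction i with
    | zero => 
      intro _
      refine ⟨h0, ?_, finrank_bot F V⟩
      intro u hu w _; rw [(Submodule.mem_bot F).1 hu]; simp
    | succ i ih => intro hi; exact (hnx i (f i) (by omega) (ih (by omega))).2
  obtain ⟨D, hD⟩ := exists_ch (B := B) (n := n) f (fun i hi => (hf i hi).2.2) (hf n le_rfl).2.1
    (fun i hi => (hnx i (f i) hi (hf i hi.le)).1)
  refine ⟨D, fun i hi => ?_⟩
  rcases Nat.eq_zero_or_pos i with rfl | h
  · rw [D.zero]; exact h0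
  · rw [hD i h hi]; exact (hf i hi).1

end SFlag
end Geo


section Panels
set_option linter.unusedSectionVars false
variable {F V : Type} [Field F] [AddCommGroup V] [Module F V]

lemma card_interval [Fintype F] [FiniteDimensional F V] {A T : Submodule F V} (hAT : A ≤ T)
    (hd : finrank F T = finrank F A + 2) :
    Nat.card {S : Submodule F V // A ≤ S ∧ S ≤ T ∧ finrank F S = finrank F A + 1} =
      Fintype.card F + 1 := by
  obtain ⟨Ac, hAc⟩ := exists_isCompl A
  let W := Ac ⊓ T
  have hAW : A ⊓ W = ⊥ := by
    rw [eq_bot_iff, ← hAc.inf_eq_bot]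
    exact inf_le_inf_left _ inf_le_left
  have hS : ∀ S, A ≤ S → S ≤ T → A ⊔ (S ⊓ W) = S := by
    intro S h1 h2
    have : S ⊓ W = Ac ⊓ S := by
      show S ⊓ (Ac ⊓ T) = Ac ⊓ S
      rw [inf_comm, inf_assoc, inf_eq_right.2 h2]
    rw [this, ← sup_inf_assoc_of_le _ h1, hAc.sup_eq_top, top_inf_eq]
  have hfr : ∀ S, A ≤ S → S ≤ T → finrank F ↥(S ⊓ W) + finrank F A = finrank F S := by
    intro S h1 h2
    have h := Submodule.finrank_sup_add_finrank_inf_eq A (S ⊓ W)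
    have h3 : A ⊓ (S ⊓ W) = ⊥ := by
      rw [eq_bot_iff, ← hAW]; exact inf_le_inf_left _ inf_le_right
    rw [hS S h1 h2, h3, finrank_bot] at h
    omega
  have hW2 : finrank F W = 2 := by
    have := hfr T hAT le_rfl
    rw [show T ⊓ W = W from inf_eq_right.2 inf_le_right] at this
    omega
  have h1 := Projectivization.card_of_finrank_two F W hW2
  rw [Nat.card_congr (Projectivization.equivSubmodule F W), Nat.card_eq_fintype_card (α := F)] at h1
  rw [← h1]
  symm
  have hH : ∀ H : Submodule F W, (A ⊔ H.map W.subtype) ⊓ W = H.map W.subtype := by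
    intro H
    have : H.map W.subtype ≤ W := Submodule.map_subtype_le W H
    rw [sup_comm, sup_inf_assoc_of_le _ this, hAW, sup_bot_eq]
  have hHT : ∀ H : Submodule F W, A ⊔ H.map W.subtype ≤ T := fun H =>
    sup_le hAT ((Submodule.map_subtype_le W H).trans inf_le_right)
  let f : {H : Submodule F W // finrank F H = 1} →
      {S : Submodule F V // A ≤ S ∧ S ≤ T ∧ finrank F S = finrank F A + 1} := fun H =>
    ⟨A ⊔ H.1.map W.subtype, le_sup_left, hHT H.1, by
      have h := hfr _ (le_sup_left : A ≤ A ⊔ H.1.map W.subtype) (hHT H.1)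
      rw [hH] at h
      rw [← h, Submodule.finrank_map_subtype_eq, H.2]; ring⟩
  apply Nat.card_eq_of_bijective f
  constructor
  · intro H H' h
    have h2 := congrArg (fun S => S.1 ⊓ W) h
    simp only [f, hH] at h2
    exact Subtype.ext (Submodule.map_injective_of_injective W.injective_subtype h2)
  · rintro ⟨S, a, b, c⟩
    have hm : ((S ⊓ W).comap W.subtype).map W.subtype = S ⊓ W := by
      rw [Submodule.map_comap_subtype, inf_eq_right.2 inf_le_right]
    refine ⟨⟨(S ⊓ W).comap W.subtype, ?_⟩, ?_⟩
    · rw [← Submodule.finrank_map_subtype_eq, hm]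
      have := hfr S a b
      omega
    · apply Subtype.ext
      show A ⊔ _ = S
      rw [hm, hS S a b]

variable {B : V →ₗ[F] V →ₗ[F] F} {n : ℕ}

/-- `i`-adjacency (or equality) -/
def Adj (i : ℕ) (C D : Ch B n) : Prop := ∀ j, j ≠ i → C.space j = D.space j

lemma Adj.refl (i : ℕ) (C : Ch B n) : Adj i C C := fun _ _ => rfl
lemma Adj.symm {i : ℕ} {C D : Ch B n} (h : Adj i C D) : Adj i D C := fun j hj => (h j hj).symm
lemma Adj.trans {i : ℕ} {C D E : Ch B n} (h : Adj i C D) (h' : Adj i D E) : Adj i C E :=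
  fun j hj => (h j hj).trans (h' j hj)
lemma Adj.eq {i : ℕ} {C D : Ch B n} (h : Adj i C D) (h' : C.space i = D.space i) : C = D :=
  SFlag.ext' fun j => if hj : j = i then hj ▸ h' else h j hj

/-- top of the panel -/
def topC (C : Ch B n) (i : ℕ) : Submodule F V :=
  if i < n then C.space (i+1) else bperp B (C.space (n-1))

lemma Adj.top {i : ℕ} {C D : Ch B n} (h : Adj i C D) (hi : 1 ≤ i) (hin : i ≤ n) :
    topC C i = topC D i := by
  unfold topC
  split_ifs
  · exact h _ (by omega)
  · rw [h _ (by omega)]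

namespace Symp
variable (hS : Symp B n)
include hS

lemma finrank_top (C : Ch B n) {i : ℕ} (hin : i ≤ n) : finrank F (topC C i) = i + 1 := by
  have := hS.hn
  by_cases h : i < n
  · rw [topC, if_pos h]; exact C.fr (by omega)
  · rw [topC, if_neg h]
    have h1 := hS.finrank_bperp (C.space (n-1))
    rw [C.fr (by omega)] at h1
    omega

lemma le_top (C : Ch B n) {i : ℕ} (hin : i ≤ n) : C.space i ≤ topC C i := by
  unfold topC
  split_ifs with h
  · exact C.le (by omega) (by omega)
  · have : i = n := by omega
    subst this
    exact (totIso_iff.1 (C.iso i)).trans (bperp_anti (C.le (by omega) le_rfl))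

lemma exists_upd (C : Ch B n) {i : ℕ} (hi : 1 ≤ i) (hin : i ≤ n) {S : Submodule F V}
    (h1 : C.space (i-1) ≤ S) (h2 : S ≤ topC C i) (h3 : finrank F S = i) :
    ∃ D : Ch B n, Adj i C D ∧ D.space i = S := by
  have := hS.fd
  have hiso : IsTotIso B S := by
    unfold topC at h2
    split_ifs at h2 with h
    · exact hS.iso_le (C.iso _) h2
    · have : i = n := by omega
      subst this
      have hfr := C.fr (i := i-1) (by omega)
      obtain ⟨v, hv, hv'⟩ := SetLike.exists_of_lt (lt_of_le_of_ne h1 (fun h => by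
        rw [h, h3] at hfr; omega))
      have : C.space (i-1) ⊔ Submodule.span F {v} = S := by
        apply Submodule.eq_of_le_of_finrank_eq
        · exact sup_le h1 (by simpa using hv)
        · rw [finrank_sup_span hv', hfr, h3]; omega
      rw [← this]
      exact hS.iso_sup_span (C.iso _) (h2 hv)
  obtain ⟨D, hD⟩ := SFlag.exists_ch (B := B) (n := n) (Function.update C.space i S) (by
      intro j hj
      by_cases h : j = i
      · subst h; rw [Function.update_self]; exact h3
      · rw [Function.update_of_ne h]; exact C.fr hj) (by
      by_cases h : n = i
      · subst h; simpa using hiso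
      · rw [Function.update_of_ne h]; exact C.iso n) (by
      intro j hj
      by_cases h : j = i
      · subst h
        rw [Function.update_self, Function.update_of_ne (by omega)]
        simpa [topC, hj] using h2
      · rw [Function.update_of_ne h]
        by_cases h' : j + 1 = i
        · subst h'
          rw [Function.update_self]; exact h1
        · rw [Function.update_of_ne h']; exact C.le (by omega) (by omega))
  refine ⟨D, ?_, by rw [hD i hi hin]; simp⟩
  intro j hj
  by_cases hj1 : 1 ≤ j ∧ j ≤ n
  · rw [hD j hj1.1 hj1.2, Function.update_of_ne hj]
  · rw [C.eq_bot j (by simpa using hj1), D.eq_bot j (by simpa using hj1)]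

lemma card_panel [Fintype F] (C : Ch B n) {i : ℕ} (hi : 1 ≤ i) (hin : i ≤ n) :
    Nat.card {D : Ch B n // Adj i C D} = Fintype.card F + 1 := by
  have := hS.fd
  have hfr := C.fr (i := i-1) (by omega)
  rw [← card_interval (F := F) (A := C.space (i-1)) (T := topC C i)
    ((C.le (by omega) hin).trans (hS.le_top C hin))
    (by rw [hS.finrank_top C hin, hfr]; omega)]
  let f : {D : Ch B n // Adj i C D} → {S : Submodule F V // C.space (i-1) ≤ S ∧ S ≤ topC C i ∧
      finrank F S = finrank F (C.space (i-1)) + 1} := fun D =>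
    ⟨D.1.space i, by
      rw [D.2 _ (by omega)]; exact D.1.le (by omega) hin, by
      rw [D.2.top hi hin]; exact hS.le_top _ hin, by
      rw [D.1.fr hin, hfr]; omega⟩
  apply Nat.card_eq_of_bijective f
  constructor
  · intro D D' h
    have h2 := congrArg Subtype.val h
    exact Subtype.ext ((D.2.symm.trans D'.2).eq h2)
  · rintro ⟨S, a, b, c⟩
    obtain ⟨D, h1, h2⟩ := hS.exists_upd C hi hin a b (by rw [c, hfr]; omega)
    exact ⟨⟨D, h1⟩, Subtype.ext h2⟩

end Symp

/-- strict adjacency -/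
def Ad1 (i : ℕ) (C D : Ch B n) : Prop := C ≠ D ∧ Adj i C D

lemma Ad1.symm {i : ℕ} {C D : Ch B n} (h : Ad1 i C D) : Ad1 i D C := ⟨h.1.symm, h.2.symm⟩
lemma Ad1.ne {i : ℕ} {C D : Ch B n} (h : Ad1 i C D) : C.space i ≠ D.space i :=
  fun h' => h.1 (h.2.eq h')
lemma Ad1.mk' {i : ℕ} {C D : Ch B n} (h : Adj i C D) (h' : C.space i ≠ D.space i) : Ad1 i C D :=
  ⟨fun he => h' (he ▸ rfl), h⟩

/-- 0/1 matrix of a relation -/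
noncomputable def relM {X : Type} (R : X → X → Prop) : Matrix X X ℝ :=
  Matrix.of fun x y => if R x y then 1 else 0

lemma relM_apply {X : Type} (R : X → X → Prop) (x y : X) : relM R x y = if R x y then 1 else 0 := rfl

lemma relM_mul {X : Type} [Fintype X] (P Q : X → X → Prop)
    (hu : ∀ x y z z', P x z → Q z y → P x z' → Q z' y → z = z') :
    relM P * relM Q = relM (Relation.Comp P Q) := by
  ext x y
  rw [Matrix.mul_apply]
  simp only [relM_apply]
  by_cases h : Relation.Comp P Q x y
  · obtain ⟨z, h1, h2⟩ := h
    rw [if_pos ⟨z, h1, h2⟩, Finset.sum_eq_single z]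
    · simp [h1, h2]
    · intro z' _ hz'
      by_cases h3 : P x z'
      · by_cases h4 : Q z' y
        · exact absurd (hu x y z' z h3 h4 h1 h2) hz'
        · simp [h4]
      · simp [h3]
    · simp
  · rw [if_neg h]
    apply Finset.sum_eq_zero
    intro z _
    by_cases h3 : P x z
    · by_cases h4 : Q z y
      · exact absurd ⟨z, h3, h4⟩ h
      · simp [h4]
    · simp [h3]

lemma relM_mulVec {X : Type} [Fintype X] (P : X → X → Prop) (f : X → ℝ) (x : X) :
    (relM P).mulVec f x = ∑ y with P x y, f y := by
  simp [Matrix.mulVec, dotProduct, relM_apply, Finset.sum_filter]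

lemma e_eq {i : ℕ} : (relM (Adj (B := B) (n := n) i)) = relM (Ad1 i) + 1 := by
  ext C D
  rw [Matrix.add_apply, relM_apply, relM_apply, Matrix.one_apply]
  by_cases h : C = D
  · subst h; simp [Ad1, Adj.refl]
  · simp [Ad1, h]

variable [Fintype (Ch B n)]

namespace Symp
variable (hS : Symp B n)
include hS

lemma card_panel' [Fintype F] (C : Ch B n) {i : ℕ} (hi : 1 ≤ i) (hin : i ≤ n) :
    (Finset.univ.filter fun D => Adj i C D).card = Fintype.card F + 1 := by
  rw [← hS.card_panel C hi hin, Nat.card_eq_fintype_card, Fintype.card_subtype]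

lemma e_sq [Fintype F] {i : ℕ} (hi : 1 ≤ i) (hin : i ≤ n) :
    (relM (Adj (B := B) (n := n) i)) * relM (Adj i) =
      ((Fintype.card F : ℝ) + 1) • relM (Adj i) := by
  ext C D
  rw [Matrix.mul_apply, Matrix.smul_apply]
  simp only [relM_apply]
  by_cases h : Adj i C D
  · have : ∀ X : Ch B n, ((if Adj i C X then (1:ℝ) else 0) * if Adj i X D then 1 else 0) =
        if Adj i C X then 1 else 0 := by
      intro X
      by_cases hX : Adj i C X
      · simp [hX, hX.symm.trans h]
      · simp [hX]
    simp only [this, h, if_true]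
    rw [← Finset.sum_filter, Finset.sum_const, hS.card_panel' C hi hin]; simp
  · rw [if_neg h]
    simp only [smul_zero]
    apply Finset.sum_eq_zero
    intro X _
    by_cases hX : Adj i C X
    · have : ¬ Adj i X D := fun h' => h (hX.trans h')
      simp [this]
    · simp [hX]

lemma t_quad [Fintype F] {i : ℕ} (hi : 1 ≤ i) (hin : i ≤ n) :
    (relM (Ad1 (B := B) (n := n) i)) * relM (Ad1 i) =
      ((Fintype.card F : ℝ) - 1) • relM (Ad1 i) + (Fintype.card F : ℝ) • 1 := by
  have h := hS.e_sq hi hin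
  rw [e_eq] at h
  have h2 : relM (Ad1 (B := B) (n := n) i) * relM (Ad1 i) =
    (relM (Ad1 (B := B) (n := n) i) + 1) * (relM (Ad1 i) + 1) - (2 : ℝ) • relM (Ad1 i) - 1 := by
    rw [add_mul, mul_add]; simp only [mul_one, one_mul]; module
  rw [h2, h]
  module

lemma e_row [Fintype F] {i : ℕ} (hi : 1 ≤ i) (hin : i ≤ n) :
    (relM (Adj (B := B) (n := n) i)).mulVec 1 = ((Fintype.card F : ℝ) + 1) • 1 := by
  ext C
  rw [relM_mulVec]
  simp only [Pi.one_apply, Finset.sum_const, hS.card_panel' C hi hin]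
  simp

lemma t_row [Fintype F] {i : ℕ} (hi : 1 ≤ i) (hin : i ≤ n) :
    (relM (Ad1 (B := B) (n := n) i)).mulVec 1 = (Fintype.card F : ℝ) • 1 := by
  have h := hS.e_row hi hin
  rw [e_eq, Matrix.add_mulVec, Matrix.one_mulVec, add_smul, one_smul] at h
  exact add_right_cancel h

/-- being in the `q`-eigenspace means constant on panels -/
lemma t_eig [Fintype F] {i : ℕ} (hi : 1 ≤ i) (hin : i ≤ n) (f : Ch B n → ℝ) :
    (relM (Ad1 i)).mulVec f = (Fintype.card F : ℝ) • f ↔ ∀ C D, Adj i C D → f C = f D := by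
  have h0 : (relM (Ad1 i)).mulVec f = (Fintype.card F : ℝ) • f ↔
      (relM (Adj i)).mulVec f = ((Fintype.card F : ℝ) + 1) • f := by
    rw [e_eq, Matrix.add_mulVec, Matrix.one_mulVec, add_smul, one_smul, add_left_inj]
  rw [h0]
  have hq : (Fintype.card F : ℝ) + 1 ≠ 0 := by positivity
  constructor
  · intro h C D hCD
    have h1 := congrFun h C
    have h2 := congrFun h D
    rw [relM_mulVec] at h1 h2
    have : (Finset.univ.filter fun X => Adj i C X) = Finset.univ.filter fun X => Adj i D X := by
      ext X; simp only [Finset.mem_filter, Finset.mem_univ, true_and]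
      exact ⟨fun h => hCD.symm.trans h, fun h => hCD.trans h⟩
    rw [this, h2] at h1
    simp only [Pi.smul_apply, smul_eq_mul] at h1
    exact (mul_left_cancel₀ hq h1).symm
  · intro h
    ext C
    rw [relM_mulVec, Finset.sum_congr rfl (g := fun _ => f C), Finset.sum_const,
      hS.card_panel' C hi hin]
    · simp
    · intro X hX; exact (h C X (by simpa using hX)).symm

end Symp

lemma t_symm {i : ℕ} : (relM (Ad1 (B := B) (n := n) i)).transpose = relM (Ad1 i) := by
  ext C D
  rw [Matrix.transpose_apply, relM_apply, relM_apply]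
  simp only [show Ad1 i D C ↔ Ad1 i C D from ⟨Ad1.symm, Ad1.symm⟩]

end Panels


section Braid
set_option linter.unusedSectionVars false
variable {F V : Type} [Field F] [AddCommGroup V] [Module F V]
variable {B : V →ₗ[F] V →ₗ[F] F} {n : ℕ}

lemma comp2_uniq {i j : ℕ} (hij : i ≠ j) (C D X X' : Ch B n) (h1 : Ad1 i C X) (h2 : Ad1 j X D)
    (h3 : Ad1 i C X') (h4 : Ad1 j X' D) : X = X' := by
  apply SFlag.ext'
  intro k
  by_cases hk : k = j
  · subst hk; rw [← h1.2 k hij.symm, h3.2 k hij.symm]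
  · rw [h2.2 k hk, h4.2 k hk]

namespace Symp
variable (hS : Symp B n)
include hS

lemma far_comp {i j : ℕ} (hj : 1 ≤ j) (hjn : j ≤ n)
    (hij : i + 2 ≤ j ∨ j + 2 ≤ i) (C D : Ch B n) (h : Relation.Comp (Ad1 i) (Ad1 j) C D) :
    Relation.Comp (Ad1 j) (Ad1 i) C D := by
  obtain ⟨X, h1, h2⟩ := h
  have htop : topC C j = topC D j := by
    rw [← h2.2.top hj hjn]
    unfold topC
    split_ifs
    · exact h1.2 _ (by omega)
    · rw [h1.2 _ (by omega)]
  obtain ⟨Y, hY, hYj⟩ := hS.exists_upd C hj hjn (S := D.space j)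
    (by rw [h1.2 _ (by omega), h2.2 _ (by omega)]; exact D.le (by omega) hjn)
    (by rw [htop]; exact hS.le_top D hjn) (D.fr hjn)
  refine ⟨Y, Ad1.mk' hY ?_, Ad1.mk' ?_ ?_⟩
  · rw [hYj, h1.2 _ (by omega)]; exact h2.ne
  · intro k hk
    by_cases hkj : k = j
    · rw [hkj, hYj]
    · rw [← hY k hkj, h1.2 k hk, h2.2 k hkj]
  · rw [← hY i (by omega), ← h2.2 i (by omega)]; exact h1.ne

/-- intermediate of word `i,i+1,i` -/
lemma w1_space {i : ℕ} (hin : i + 1 ≤ n) {C Y X : Ch B n} (h1 : Ad1 i C Y) (h2 : Ad1 (i+1) Y X)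
    {D : Ch B n} (h3 : Ad1 i X D) : X.space i = C.space (i+1) ⊓ D.space (i+1) ∧
      C.space (i+1) ≠ D.space (i+1) := by
  have := hS.fd
  have hne : C.space (i+1) ≠ D.space (i+1) := by
    rw [h1.2 _ (by omega), ← h3.2 _ (by omega)]; exact h2.ne
  refine ⟨?_, hne⟩
  symm
  apply pencil_inf (X.fr (by omega)) (C.fr hin) (D.fr hin) _ _ hne
  · rw [← h2.2 _ (by omega), h1.2 _ (by omega)]; exact Y.le (by omega) hin
  · rw [← h3.2 _ (by omega)]; exact X.le (by omega) hin

/-- intermediate of word `i+1,i,i+1` -/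
lemma w2_space {i : ℕ} (hi : 1 ≤ i) (hin : i + 1 ≤ n) {C Y X : Ch B n} (h1 : Ad1 (i+1) C Y)
    (h2 : Ad1 i Y X) {D : Ch B n} (h3 : Ad1 (i+1) X D) :
    X.space (i+1) = C.space i ⊔ D.space i ∧ C.space i ≠ D.space i := by
  have := hS.fd
  have hne : C.space i ≠ D.space i := by
    rw [h1.2 _ (by omega), ← h3.2 _ (by omega)]; exact h2.ne
  refine ⟨?_, hne⟩
  symm
  have hX : finrank F (X.space (i+1)) = (i - 1) + 2 := by rw [X.fr hin]; omega
  refine (copencil_inf hX (by rw [C.fr (by omega)]; omega) (by rw [D.fr (by omega)]; omega)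
    ?_ ?_ hne).2
  · rw [← h2.2 _ (by omega), h1.2 _ (by omega)]; exact Y.le (by omega) hin
  · rw [← h3.2 _ (by omega)]; exact X.le (by omega) hin

lemma w1_uniq {i : ℕ} (hin : i + 1 ≤ n) (C D X X' : Ch B n)
    (h1 : Relation.Comp (Ad1 i) (Ad1 (i+1)) C X) (h2 : Ad1 i X D)
    (h3 : Relation.Comp (Ad1 i) (Ad1 (i+1)) C X') (h4 : Ad1 i X' D) : X = X' := by
  obtain ⟨Y, a, b⟩ := h1
  obtain ⟨Y', a', b'⟩ := h3
  apply (h2.2.trans h4.2.symm).eq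
  rw [(hS.w1_space hin a b h2).1, (hS.w1_space hin a' b' h4).1]

lemma w2_uniq {i : ℕ} (hi : 1 ≤ i) (hin : i + 1 ≤ n) (C D X X' : Ch B n)
    (h1 : Relation.Comp (Ad1 (i+1)) (Ad1 i) C X) (h2 : Ad1 (i+1) X D)
    (h3 : Relation.Comp (Ad1 (i+1)) (Ad1 i) C X') (h4 : Ad1 (i+1) X' D) : X = X' := by
  obtain ⟨Y, a, b⟩ := h1
  obtain ⟨Y', a', b'⟩ := h3
  apply (h2.2.trans h4.2.symm).eq
  rw [(hS.w2_space hi hin a b h2).1, (hS.w2_space hi hin a' b' h4).1]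

lemma a2_comp1 {i : ℕ} (hi : 1 ≤ i) (hin : i + 1 < n) (C D : Ch B n)
    (h : Relation.Comp (Relation.Comp (Ad1 i) (Ad1 (i+1))) (Ad1 i) C D) :
    Relation.Comp (Relation.Comp (Ad1 (i+1)) (Ad1 i)) (Ad1 (i+1)) C D := by
  have := hS.fd
  obtain ⟨X, ⟨Y, h1, h2⟩, h3⟩ := h
  obtain ⟨hL, hne⟩ := hS.w1_space (by omega) h1 h2 h3
  have hoff : ∀ k, k ≠ i → k ≠ i + 1 → C.space k = D.space k := fun k a b => by
    rw [h1.2 k a, h2.2 k b, h3.2 k a]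
  have hYX : Y.space i = X.space i := h2.2 i (by omega)
  have hCL : C.space i ≠ X.space i := by rw [← hYX]; exact h1.ne
  have hDL : D.space i ≠ X.space i := h3.ne.symm
  have hCD : ¬ C.space i ≤ D.space (i+1) := by
    intro h
    apply hCL
    apply Submodule.eq_of_le_of_finrank_eq
    · rw [hL]; exact le_inf (C.le (by omega) (by omega)) h
    · rw [C.fr (by omega), X.fr (by omega)]
  have hDC : ¬ D.space i ≤ C.space (i+1) := by
    intro h
    apply hDL
    apply Submodule.eq_of_le_of_finrank_eq
    · rw [hL]; exact le_inf h (D.le (by omega) (by omega))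
    · rw [D.fr (by omega), X.fr (by omega)]
  have hne' : C.space i ≠ D.space i := fun h => hCD (h ▸ D.le (by omega) (by omega))
  have hlow := hoff (i-1) (by omega) (by omega)
  have hU : finrank F ↥(C.space i ⊔ D.space i) = i + 1 := by
    have := pencil_sup (k := i-1) (C.fr (by omega)) (by rw [C.fr (by omega)]; omega)
      (by rw [D.fr (by omega)]; omega) (C.le (by omega) (by omega))
      (by rw [hlow]; exact D.le (by omega) (by omega)) hne'
    rw [this]; omega
  have hUC : C.space i ⊔ D.space i ≤ topC C (i+1) := by
    rw [topC, if_pos (by omega)]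
    refine sup_le (C.le (by omega) (by omega)) ?_
    rw [hoff (i+1+1) (by omega) (by omega)]; exact D.le (by omega) (by omega)
  have hUD : C.space i ⊔ D.space i ≤ topC D (i+1) := by
    rw [topC, if_pos (by omega), ← hoff (i+1+1) (by omega) (by omega)]
    rwa [topC, if_pos (by omega)] at hUC
  obtain ⟨Y', hY', hY'1⟩ := hS.exists_upd C (i := i+1) (by omega) (by omega)
    (S := C.space i ⊔ D.space i) le_sup_left hUC hU
  obtain ⟨X', hX', hX'1⟩ := hS.exists_upd D (i := i+1) (by omega) (by omega)
    (S := C.space i ⊔ D.space i) le_sup_right hUD hU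
  refine ⟨X', ⟨Y', Ad1.mk' hY' ?_, Ad1.mk' ?_ ?_⟩, Ad1.mk' hX'.symm ?_⟩
  · rw [hY'1]; intro h; exact hDC (h ▸ le_sup_right)
  · intro k hk
    by_cases hk1 : k = i + 1
    · rw [hk1, hY'1, hX'1]
    · rw [← hY' k hk1, ← hX' k hk1, hoff k hk hk1]
  · rw [← hY' i (by omega), ← hX' i (by omega)]; exact hne'
  · rw [hX'1]; intro h; exact hCD (h ▸ le_sup_left)

lemma a2_comp2 {i : ℕ} (hi : 1 ≤ i) (hin : i + 1 < n) (C D : Ch B n)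
    (h : Relation.Comp (Relation.Comp (Ad1 (i+1)) (Ad1 i)) (Ad1 (i+1)) C D) :
    Relation.Comp (Relation.Comp (Ad1 i) (Ad1 (i+1))) (Ad1 i) C D := by
  have := hS.fd
  obtain ⟨X, ⟨Y, h1, h2⟩, h3⟩ := h
  obtain ⟨hL, hne⟩ := hS.w2_space hi (by omega) h1 h2 h3
  have hoff : ∀ k, k ≠ i → k ≠ i + 1 → C.space k = D.space k := fun k a b => by
    rw [h1.2 k b, h2.2 k a, h3.2 k b]
  have hYX : Y.space (i+1) = X.space (i+1) := h2.2 _ (by omega)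
  have hCD : ¬ C.space i ≤ D.space (i+1) := by
    intro h
    apply h3.ne
    apply Submodule.eq_of_le_of_finrank_eq
    · rw [hL]; exact sup_le h (D.le (by omega) (by omega))
    · rw [X.fr (by omega), D.fr (by omega)]
  have hDC : ¬ D.space i ≤ C.space (i+1) := by
    intro h
    apply h1.ne.symm
    rw [hYX]
    apply Submodule.eq_of_le_of_finrank_eq
    · rw [hL]; exact sup_le (C.le (by omega) (by omega)) h
    · rw [X.fr (by omega), C.fr (by omega)]
  have hne' : C.space (i+1) ≠ D.space (i+1) := fun h => hCD (h ▸ C.le (by omega) (by omega))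
  have hhi := hoff (i+2) (by omega) (by omega)
  have hU : finrank F ↥(C.space (i+1) ⊓ D.space (i+1)) = i := 
    (copencil_inf (U := C.space (i+2)) (C.fr (by omega)) (C.fr (by omega))
      (D.fr (by omega)) (C.le (by omega) (by omega))
      (by rw [hhi]; exact D.le (by omega) (by omega)) hne').1
  have hlow := hoff (i-1) (by omega) (by omega)
  have hl : C.space (i-1) ≤ C.space (i+1) ⊓ D.space (i+1) := by
    refine le_inf (C.le (by omega) (by omega)) ?_
    rw [hlow]; exact D.le (by omega) (by omega)
  obtain ⟨Y', hY', hY'1⟩ := hS.exists_upd C (i := i) (by omega) (by omega)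
    (S := C.space (i+1) ⊓ D.space (i+1)) hl
    (by rw [topC, if_pos (by omega)]; exact inf_le_left) hU
  obtain ⟨X', hX', hX'1⟩ := hS.exists_upd D (i := i) (by omega) (by omega)
    (S := C.space (i+1) ⊓ D.space (i+1)) (by rw [← hlow]; exact hl)
    (by rw [topC, if_pos (by omega)]; exact inf_le_right) hU
  refine ⟨X', ⟨Y', Ad1.mk' hY' ?_, Ad1.mk' ?_ ?_⟩, Ad1.mk' hX'.symm ?_⟩
  · rw [hY'1]; intro h; exact hCD (h ▸ inf_le_right)
  · intro k hk
    by_cases hk1 : k = i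
    · rw [hk1, hY'1, hX'1]
    · rw [← hY' k hk1, ← hX' k hk1, hoff k hk1 hk]
  · rw [← hY' _ (by omega), ← hX' _ (by omega)]; exact hne'
  · rw [hX'1]; intro h; exact hDC (h ▸ inf_le_left)

/-- data of word `n-1,n,n-1,n` (with `n = i+1`) -/
lemma w4_space {i : ℕ} (hin : i + 1 = n) {C Y Z X D : Ch B n} (h1 : Ad1 i C Y)
    (h2 : Ad1 (i+1) Y Z) (h3 : Ad1 i Z X) (h4 : Ad1 (i+1) X D) :
    Z.space i = C.space (i+1) ⊓ bperp B (D.space i) ∧ X.space (i+1) = Z.space i ⊔ D.space i := by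
  have := hS.fd
  have hn := hS.hn
  have e1 : Y.space (i+1) = C.space (i+1) := (h1.2 _ (by omega)).symm
  have e2 : Y.space i = Z.space i := h2.2 _ (by omega)
  have e3 : Z.space (i+1) = X.space (i+1) := h3.2 _ (by omega)
  have e4 : X.space i = D.space i := h4.2 _ (by omega)
  have n2 : Z.space i ≠ D.space i := by rw [← e4]; exact h3.ne
  have hX : X.space (i+1) = Z.space i ⊔ D.space i := by
    symm
    refine (copencil_inf (k := i-1) (by rw [X.fr (by omega)]; omega) (by rw [Z.fr (by omega)]; omega)
      (by rw [D.fr (by omega)]; omega) ?_ ?_ n2).2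
    · rw [← e3]; exact Z.le (by omega) (by omega)
    · rw [← e4]; exact X.le (by omega) (by omega)
  refine ⟨?_, hX⟩
  apply Submodule.eq_of_le_of_finrank_le
  · apply le_inf
    · rw [← e2, ← e1]; exact Y.le (by omega) (by omega)
    · apply le_trans _ (bperp_anti (show D.space i ≤ X.space (i+1) by
        rw [← e4]; exact X.le (by omega) (by omega)))
      refine le_trans ?_ (totIso_iff.1 (X.iso _))
      rw [← e3]; exact Z.le (by omega) (by omega)
  · by_contra hcon
    push Not at hcon
    rw [Z.fr (by omega)] at hcon
    have h5 : C.space (i+1) ⊓ bperp B (D.space i) = C.space (i+1) :=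
      Submodule.eq_of_le_of_finrank_le inf_le_left (by rw [C.fr (by omega)]; omega)
    have h6 : C.space (i+1) ≤ bperp B (D.space i) := inf_eq_left.1 h5
    have h7 : D.space i ≤ C.space (i+1) := by
      have := hS.le_bperp_comm h6
      rwa [hS.bperp_max (C.iso _) (by rw [C.fr (by omega)]; exact hin)] at this
    apply h2.ne
    symm
    apply Submodule.eq_of_le_of_finrank_eq
    · rw [e3, hX, e1]
      refine sup_le ?_ h7
      rw [← e2, ← e1]; exact Y.le (by omega) (by omega)
    · rw [Y.fr (by omega), Z.fr (by omega)]

lemma w4_uniq {i : ℕ} (hin : i + 1 = n) (C D X X' : Ch B n)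
    (h1 : Relation.Comp (Relation.Comp (Ad1 i) (Ad1 (i+1))) (Ad1 i) C X) (h2 : Ad1 (i+1) X D)
    (h3 : Relation.Comp (Relation.Comp (Ad1 i) (Ad1 (i+1))) (Ad1 i) C X') (h4 : Ad1 (i+1) X' D) :
    X = X' := by
  obtain ⟨Z, ⟨Y, a, b⟩, c⟩ := h1
  obtain ⟨Z', ⟨Y', a', b'⟩, c'⟩ := h3
  obtain ⟨p1, p2⟩ := hS.w4_space hin a b c h2
  obtain ⟨p3, p4⟩ := hS.w4_space hin a' b' c' h4
  apply (h2.2.trans h4.2.symm).eq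
  rw [p2, p4, p1, p3]

lemma b2_comp {i : ℕ} (hin : i + 1 = n) (C D : Ch B n)
    (h : Relation.Comp (Relation.Comp (Relation.Comp (Ad1 i) (Ad1 (i+1))) (Ad1 i)) (Ad1 (i+1)) C D) :
    Relation.Comp (Relation.Comp (Relation.Comp (Ad1 i) (Ad1 (i+1))) (Ad1 i)) (Ad1 (i+1)) D C := by
  have := hS.fd
  have hn := hS.hn
  obtain ⟨X, ⟨Z, ⟨Y, h1, h2⟩, h3⟩, h4⟩ := h
  obtain ⟨hL, hX⟩ := hS.w4_space hin h1 h2 h3 h4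
  have hoff : ∀ k, k ≠ i → k ≠ i + 1 → C.space k = D.space k := fun k a b => by
    rw [h1.2 k a, h2.2 k b, h3.2 k a, h4.2 k b]
  have e2 : Y.space i = Z.space i := h2.2 _ (by omega)
  have hlow := hoff (i-1) (by omega) (by omega)
  have hDC : ¬ D.space i ≤ bperp B (C.space i) := by
    intro h
    apply h1.ne
    rw [e2]
    apply Submodule.eq_of_le_of_finrank_eq
    · rw [hL]; exact le_inf (C.le (by omega) (by omega)) (hS.le_bperp_comm h)
    · rw [C.fr (by omega), Z.fr (by omega)]
  have hnC : ¬ C.space i ≤ D.space (i+1) := by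
    intro h
    apply hDC
    have h5 : D.space i ≤ D.space (i+1) := D.le (by omega) (by omega)
    exact h5.trans ((totIso_iff.1 (D.iso _)).trans (bperp_anti h))
  set L := D.space (i+1) ⊓ bperp B (C.space i) with hLdef
  have hLfr : finrank F L = i := by
    apply le_antisymm
    · by_contra hcon
      push Not at hcon
      have h5 : L = D.space (i+1) :=
        Submodule.eq_of_le_of_finrank_le inf_le_left (by rw [D.fr (by omega)]; omega)
      have h6 : D.space (i+1) ≤ bperp B (C.space i) := inf_eq_left.1 h5
      exact hDC ((D.le (by omega) (by omega)).trans h6)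
    · have h5 := Submodule.finrank_sup_add_finrank_inf_eq (D.space (i+1)) (bperp B (C.space i))
      have h6 : D.space (i+1) ⊔ bperp B (C.space i) ≤ bperp B (C.space (i-1)) := by
        apply sup_le
        · rw [hlow]
          exact (totIso_iff.1 (D.iso _)).trans (bperp_anti (D.le (by omega) (by omega)))
        · exact bperp_anti (C.le (by omega) (by omega))
      have h7 := Submodule.finrank_mono h6
      have h8 := hS.finrank_bperp (C.space (i-1))
      have h9 := hS.finrank_bperp (C.space i)
      rw [C.fr (by omega)] at h8 h9
      rw [D.fr (by omega), ← hLdef] at h5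
      omega
  have hlL : C.space (i-1) ≤ L := by
    apply le_inf
    · rw [hlow]; exact D.le (by omega) (by omega)
    · exact (C.le (by omega) (by omega)).trans (totIso_iff.1 (C.iso i))
  have hLC : C.space i ≠ L := fun h => hnC (h ▸ inf_le_left)
  have hU : finrank F ↥(C.space i ⊔ L) = i + 1 := by
    have := pencil_sup (k := i-1) (C.fr (by omega)) (by rw [C.fr (by omega)]; omega)
      (by rw [hLfr]; omega) (C.le (by omega) (by omega)) hlL hLC
    rw [this]; omega
  -- `Y'`: D with i replaced by L
  obtain ⟨Y', hY', hY'1⟩ := hS.exists_upd D (i := i) (by omega) (by omega)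
    (S := L) (by rw [← hlow]; exact hlL)
    (by rw [topC, if_pos (by omega)]; exact inf_le_left) hLfr
  -- `X'` : C with i+1 replaced by U
  obtain ⟨X', hX', hX'1⟩ := hS.exists_upd C (i := i+1) (by omega) (by omega)
    (S := C.space i ⊔ L) le_sup_left (by
      rw [topC, if_neg (by omega), show n - 1 = i by omega]
      exact sup_le (totIso_iff.1 (C.iso _)) inf_le_right) hU
  -- `Z'`: X' with i replaced by L
  obtain ⟨Z', hZ', hZ'1⟩ := hS.exists_upd X' (i := i) (by omega) (by omega)
    (S := L) (by rw [← hX' _ (by omega)]; exact hlL)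
    (by rw [topC, if_pos (by omega), hX'1]; exact le_sup_right) hLfr
  refine ⟨X', ⟨Z', ⟨Y', Ad1.mk' hY' ?_, Ad1.mk' ?_ ?_⟩, Ad1.mk' hZ'.symm ?_⟩, Ad1.mk' hX'.symm ?_⟩
  · rw [hY'1]; intro h; exact hDC (h ▸ inf_le_right)
  · intro k hk
    by_cases hk1 : k = i
    · rw [hk1, hY'1, hZ'1]
    · rw [← hY' k hk1, ← hZ' k hk1, ← hX' k hk, hoff k hk1 hk]
  · rw [← hY' _ (by omega), ← hZ' _ (by omega), hX'1]
    intro h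
    exact hnC (h ▸ le_sup_left)
  · rw [hZ'1, ← hX' _ (by omega)]; exact hLC.symm
  · rw [hX'1]
    intro h
    have hLC1 : L ≤ C.space (i+1) := h ▸ le_sup_right
    have hLZ : L = Z.space i := by
      apply Submodule.eq_of_le_of_finrank_eq
      · rw [hL]
        refine le_inf hLC1 ?_
        refine inf_le_left.trans ?_
        exact (totIso_iff.1 (D.iso _)).trans (bperp_anti (D.le (by omega) (by omega)))
      · rw [hLfr, Z.fr (by omega)]
    apply h4.ne
    rw [hX, ← hLZ]
    apply Submodule.eq_of_le_of_finrank_eq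
    · exact sup_le inf_le_left (D.le (by omega) (by omega))
    · rw [hLZ, ← hX, X.fr (by omega), D.fr (by omega)]

variable [Fintype (Ch B n)]

/-- generators indexed from the short end -/
noncomputable def _root_.sgen (B : V →ₗ[F] V →ₗ[F] F) (n : ℕ) (m : ℕ) : Matrix (Ch B n) (Ch B n) ℝ :=
  relM (Ad1 (n - m))

lemma braid : BraidB (sgen B n) n := by
  have hn := hS.hn
  constructor
  · intro i j hij hj
    unfold sgen
    rw [relM_mul _ _ (comp2_uniq (by omega)), relM_mul _ _ (comp2_uniq (by omega))]
    congr 1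
    funext C D
    exact propext ⟨hS.far_comp (by omega) (by omega) (by omega) C D,
      hS.far_comp (by omega) (by omega) (by omega) C D⟩
  · intro i hi hj
    unfold sgen
    obtain ⟨k, hk⟩ : ∃ k, n - (i+1) = k := ⟨_, rfl⟩
    rw [hk, show n - i = k + 1 by omega]
    rw [relM_mul _ _ (comp2_uniq (by omega)), relM_mul _ _ (comp2_uniq (by omega)),
      relM_mul _ _ (hS.w1_uniq (by omega)), relM_mul _ _ (hS.w2_uniq (by omega) (by omega))]
    congr 1
    funext C D
    exact propext ⟨hS.a2_comp2 (by omega) (by omega) C D, hS.a2_comp1 (by omega) (by omega) C D⟩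
  · intro _
    unfold sgen
    obtain ⟨k, hk⟩ : ∃ k, n - 1 = k := ⟨_, rfl⟩
    rw [hk, show n - 0 = k + 1 by omega]
    have key : (relM (Ad1 (B := B) (n := n) k)) * relM (Ad1 (k+1)) * relM (Ad1 k) * relM (Ad1 (k+1))
        = relM (Relation.Comp (Relation.Comp (Relation.Comp (Ad1 k) (Ad1 (k+1))) (Ad1 k)) (Ad1 (k+1))) := by
      rw [relM_mul _ _ (comp2_uniq (by omega)), relM_mul _ _ (hS.w1_uniq (by omega)),
        relM_mul _ _ (hS.w4_uniq (by omega))]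
    have h2 : (relM (Ad1 (B := B) (n := n) k) * relM (Ad1 (k+1)) * relM (Ad1 k) * relM (Ad1 (k+1))).transpose
        = relM (Ad1 (k+1)) * (relM (Ad1 k) * relM (Ad1 (k+1)) * relM (Ad1 k)) := by
      simp only [Matrix.transpose_mul, t_symm, mul_assoc]
    rw [← h2, key]
    ext C D
    rw [Matrix.transpose_apply, relM_apply, relM_apply]
    congr 1
    exact propext ⟨hS.b2_comp (by omega) C D, hS.b2_comp (by omega) D C⟩

end Symp
end Braid


section Supp
set_option linter.unusedSectionVars false
variable {F V : Type} [Field F] [AddCommGroup V] [Module F V]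
variable {B : V →ₗ[F] V →ₗ[F] F} {n : ℕ} [Fintype (Ch B n)]

lemma mul_ne {X : Type} [Fintype X] {M N : Matrix X X ℝ} {x y : X} (h : (M * N) x y ≠ 0) :
    ∃ z, M x z ≠ 0 ∧ N z y ≠ 0 := by
  rw [Matrix.mul_apply] at h
  obtain ⟨z, _, hz⟩ := Finset.exists_ne_zero_of_sum_ne_zero h
  exact ⟨z, left_ne_zero_of_mul hz, right_ne_zero_of_mul hz⟩

lemma sgen_ne {m : ℕ} {C D : Ch B n} (h : sgen B n m C D ≠ 0) : Ad1 (n - m) C D := by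
  unfold sgen at h
  rw [relM_apply] at h
  by_contra hc
  rw [if_neg hc] at h
  exact h rfl

namespace Symp
variable (hS : Symp B n)
include hS

lemma Ad1_inf {i : ℕ} (hi : 1 ≤ i) (hin : i ≤ n) {C D : Ch B n} (h : Ad1 i C D) :
    C.space i ⊓ D.space i = C.space (i-1) := by
  have := hS.fd
  have hlow := h.2 (i-1) (by omega)
  apply pencil_inf (k := i-1) (C.fr (by omega)) (by rw [C.fr hin]; omega) (by rw [D.fr hin]; omega)
    (C.le (by omega) hin) (by rw [hlow]; exact D.le (by omega) hin) h.ne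

lemma Ad1_sup {i : ℕ} (hi : 1 ≤ i) (hin : i < n) {C D : Ch B n} (h : Ad1 i C D) :
    C.space i ⊔ D.space i = C.space (i+1) := by
  have := hS.fd
  exact (copencil_inf (k := i-1) (by rw [C.fr (by omega)]; omega) (by rw [C.fr (by omega)]; omega)
    (by rw [D.fr (by omega)]; omega)
    (C.le (by omega) hin) (by rw [h.2 _ (by omega)]; exact D.le (by omega) hin) h.ne).2

lemma K_supp : ∀ m < n, ∀ C C' : Ch B n, Kd (sgen B n) m C C' ≠ 0 →
    (∀ k < n - m, C.space k = C'.space k) ∧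
    (∀ i, n - m ≤ i → i ≤ n → C.space i ⊓ bperp B (C'.space (n-m)) ≤ C'.space i) ∧
    (C.space n ⊓ C'.space (n-m) ≤ C.space (n-m-1)) := by
  have hn := hS.hn
  intro m
  induction m with
  | zero =>
    intro _ C C' h
    have h1 := sgen_ne h
    simp only [Nat.sub_zero] at h1 ⊢
    refine ⟨fun k hk => h1.2 k (by omega), ?_, (hS.Ad1_inf (by omega) le_rfl h1).le⟩
    intro i hi hin
    obtain rfl : i = n := by omega
    rw [hS.bperp_max (C'.iso _) (C'.fr le_rfl)]
    exact inf_le_right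
  | succ m ih =>
    intro hm C C' h
    obtain ⟨Y, h1, h3⟩ := mul_ne h
    obtain ⟨X, h1, h2⟩ := mul_ne h1
    replace h1 := sgen_ne h1
    replace h3 := sgen_ne h3
    obtain ⟨j, hj⟩ : ∃ j, n - (m+1) = j := ⟨_, rfl⟩
    have hj1 : n - m = j + 1 := by omega
    rw [hj] at h1 h3 ⊢
    obtain ⟨a, b, c⟩ := ih (by omega) X Y h2
    rw [hj1] at a b c
    simp only [Nat.add_sub_cancel] at c
    have eX : ∀ k, k ≠ j → X.space k = C.space k := fun k hk => (h1.2 k hk).symm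
    have eY : ∀ k, k ≠ j → Y.space k = C'.space k := fun k hk => h3.2 k hk
    have eL : X.space j = Y.space j := a j (by omega)
    rw [eX n (by omega), eY (j+1) (by omega)] at c
    have inf1 := hS.Ad1_inf (by omega) (by omega) h1
    have inf2 := hS.Ad1_inf (by omega) (by omega) h3
    have sup2 := hS.Ad1_sup (by omega) (by omega) h3
    have low : C.space (j-1) = C'.space (j-1) := by
      rw [← eX _ (by omega), ← eY _ (by omega), a _ (by omega)]
    have b' : ∀ i, j + 1 ≤ i → i ≤ n → C.space i ⊓ bperp B (C'.space j) ≤ C'.space i := by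
      intro i hi hin v hv
      rw [← eY i (by omega)]
      apply b i hi hin
      refine ⟨by rw [eX i (by omega)]; exact hv.1, ?_⟩
      rw [← sup2]
      refine mem_bperp.2 ?_
      intro w hw
      obtain ⟨w1, hw1, w2, hw2, rfl⟩ := Submodule.mem_sup.1 hw
      rw [map_add, LinearMap.add_apply, mem_bperp.1 hv.2 w2 hw2, add_zero]
      apply C.iso i w1 _ v hv.1
      rw [← eX i (by omega)]
      exact X.le (by omega) hin (eL ▸ hw1)
    refine ⟨?_, ?_, ?_⟩
    · intro k hk
      rw [← eX k (by omega), ← eY k (by omega), a k (by omega)]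
    · intro i hi hin
      rcases Nat.eq_or_lt_of_le hi with rfl | hi
      · intro v hv
        have h5 : v ∈ C'.space (j+1) := b' (j+1) le_rfl (by omega)
          ⟨C.le (by omega) (by omega) hv.1, hv.2⟩
        have h6 : v ∈ X.space j := c ⟨C.le (by omega) le_rfl hv.1, h5⟩
        have h7 : v ∈ C.space (j-1) := inf1 ▸ (⟨hv.1, h6⟩ : v ∈ C.space j ⊓ X.space j)
        rw [low] at h7
        exact C'.le (by omega) hin h7
      · exact b' i (by omega) hin
    · intro v hv
      have h6 : v ∈ X.space j := c ⟨hv.1, C'.le (by omega) (by omega) hv.2⟩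
      rw [eL] at h6
      have h7 : v ∈ Y.space (j-1) := inf2 ▸ (⟨h6, hv.2⟩ : v ∈ Y.space j ⊓ C'.space j)
      rw [eY _ (by omega), ← low] at h7
      exact h7

lemma A_supp_aux : ∀ m < n, ∀ C D : Ch B n, Ad (sgen B n) m C D ≠ 0 →
    (∀ k < n - m, C.space k = D.space k) ∧
    (∀ i ≤ n, C.space i ⊓ bperp B (D.space i) ≤ D.space (n-m-1)) := by
  have hn := hS.hn
  intro m
  induction m with
  | zero =>
    intro _ C D h
    have h1 := sgen_ne h
    simp only [Nat.sub_zero] at h1 ⊢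
    refine ⟨fun k hk => h1.2 k (by omega), ?_⟩
    intro i hi
    rcases Nat.eq_or_lt_of_le hi with rfl | hi
    · rw [hS.bperp_max (D.iso _) (D.fr le_rfl), hS.Ad1_inf (by omega) le_rfl h1, h1.2 _ (by omega)]
    · refine inf_le_left.trans ?_
      rw [h1.2 _ (by omega)]
      exact D.le (by omega) (by omega)
  | succ m ih =>
    intro hm C D h
    obtain ⟨C', h1, h2⟩ := mul_ne h
    obtain ⟨a, b, c⟩ := hS.K_supp _ hm _ _ h1
    obtain ⟨d, e⟩ := ih (by omega) _ _ h2
    obtain ⟨j, hj⟩ : ∃ j, n - (m+1) = j := ⟨_, rfl⟩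
    have hj1 : n - m = j + 1 := by omega
    rw [hj] at a b c ⊢
    rw [hj1] at d e
    simp only [Nat.add_sub_cancel] at e
    have low : ∀ k < j, C.space k = D.space k := fun k hk => by rw [a k hk, d k (by omega)]
    refine ⟨low, ?_⟩
    intro i hi
    rcases Nat.lt_or_ge i j with hij | hij
    · refine inf_le_left.trans ?_
      rw [low i hij]; exact D.le (by omega) (by omega)
    · intro v hv
      have h5 : v ∈ C'.space i := by
        apply b i hij hi
        refine ⟨hv.1, ?_⟩
        rw [d j (by omega)]
        exact bperp_anti (D.le hij hi) hv.2
      have h6 : v ∈ D.space j := e i hi ⟨h5, hv.2⟩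
      rw [← d j (by omega)] at h6
      rw [← low (j-1) (by omega)]
      exact c ⟨C.le hi le_rfl hv.1, h6⟩

omit [Fintype (Ch B n)] in
lemma opp_iff {C D : Ch B n} : FlagOpp C D ↔ ∀ i ≤ n, SpaceOpp B (C.space i) (D.space i) := by
  constructor
  · intro h i hi
    rcases Nat.eq_zero_or_pos i with rfl | h0
    · rw [SpaceOpp, D.zero, inf_bot_eq]
    · exact h i (by simp; omega)
  · intro h i hi
    exact h i (Finset.mem_Icc.1 hi).2

omit [Fintype (Ch B n)] in
lemma flagOpp_symm {C D : Ch B n} (h : FlagOpp C D) : FlagOpp D C := by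
  rw [hS.opp_iff] at *
  intro i hi
  exact hS.opp_symm (by rw [C.fr hi, D.fr hi]) (h i hi)

lemma A_supp (C D : Ch B n) (h : Ad (sgen B n) (n-1) C D ≠ 0) : FlagOpp C D := by
  have hn := hS.hn
  apply hS.flagOpp_symm
  obtain ⟨-, h⟩ := hS.A_supp_aux (n-1) (by omega) C D h
  rw [hS.opp_iff]
  intro i hi
  rw [SpaceOpp, eq_bot_iff, inf_comm]
  refine (h i hi).trans ?_
  rw [show n - (n-1) - 1 = 0 by omega, D.zero]

end Symp
end Supp


section Ext
set_option linter.unusedSectionVars false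
variable {F V : Type} [Field F] [AddCommGroup V] [Module F V]

/-- avoid three subspaces -/
lemma avoid3 [Fintype F] (hq : 4 ≤ Fintype.card F) (W A1 A2 A3 : Submodule F V)
    (h1 : ¬ W ≤ A1) (h2 : ¬ W ≤ A2) (h3 : ¬ W ≤ A3) :
    ∃ v ∈ W, v ∉ A1 ∧ v ∉ A2 ∧ v ∉ A3 := by
  let p : Fin 3 → Submodule F W := ![A1.comap W.subtype, A2.comap W.subtype, A3.comap W.subtype]
  have hp : ∀ A : Submodule F V, ¬ W ≤ A → A.comap W.subtype ≠ ⊤ := by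
    intro A hA h
    apply hA
    intro v hv
    have : (⟨v, hv⟩ : W) ∈ A.comap W.subtype := h ▸ Submodule.mem_top
    exact this
  have h := Submodule.iUnion_ssubset_of_forall_ne_top_of_card_lt (Finset.univ : Finset (Fin 3)) p
    (by
      intro i
      fin_cases i
      · exact hp _ h1
      · exact hp _ h2
      · exact hp _ h3)
    (by
      rw [ENat.card_eq_coe_fintype_card]
      simp only [Finset.card_univ, Fintype.card_fin]
      exact_mod_cast (by omega : 3 < Fintype.card F))
  obtain ⟨v, -, hv⟩ := Set.exists_of_ssubset h
  simp only [Finset.mem_univ, Set.iUnion_true, Set.mem_iUnion, not_exists] at hv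
  exact ⟨v.1, v.2, hv 0, hv 1, hv 2⟩

namespace Symp
variable {B : V →ₗ[F] V →ₗ[F] F} {n : ℕ} (hS : Symp B n)
include hS

lemma xvec (E : Ch B n) {M : Submodule F V} {j : ℕ} (hj : j < n) (hM : finrank F M = j)
    (h : SpaceOpp B M (E.space j)) :
    ∃ c ∈ E.space (j+1), c ≠ 0 ∧ c ∈ bperp B M ∧
      ∀ p, SpaceOpp B (M ⊔ Submodule.span F {p}) (E.space (j+1)) ↔ B c p ≠ 0 := by
  have := hS.fd
  have h1 := Submodule.finrank_sup_add_finrank_inf_eq (bperp B M) (E.space (j+1))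
  have h2 := hS.finrank_bperp M
  have h3 : finrank F ↥(bperp B M ⊔ E.space (j+1)) ≤ 2 * n := hS.dim ▸ Submodule.finrank_le _
  rw [E.fr (by omega)] at h1
  have h4 : bperp B M ⊓ E.space (j+1) ≠ ⊥ := by
    intro h
    rw [h, finrank_bot] at h1
    omega
  obtain ⟨c, hc, hc0⟩ := Submodule.exists_mem_ne_zero_of_ne_bot h4
  rw [spaceOpp_iff] at h
  have hcn : c ∉ E.space j := fun hh => hc0 (h c hh (mem_bperp.1 hc.1))
  have hE : E.space j ⊔ Submodule.span F {c} = E.space (j+1) := by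
    apply Submodule.eq_of_le_of_finrank_eq
    · apply sup_le (E.le (by omega) (by omega))
      rw [Submodule.span_singleton_le_iff_mem]; exact hc.2
    · rw [finrank_sup_span hcn, E.fr (by omega), E.fr (by omega)]
  refine ⟨c, hc.2, hc0, hc.1, fun p => ⟨?_, ?_⟩⟩
  · intro ho hb
    rw [spaceOpp_iff] at ho
    apply hc0
    apply ho c hc.2
    intro w hw
    obtain ⟨m, hm, a, rfl⟩ := mem_sup_span.1 hw
    simp [mem_bperp.1 hc.1 m hm, hS.sym0 hb]
  · intro hb
    rw [spaceOpp_iff]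
    intro v hv hw
    rw [← hE] at hv
    obtain ⟨e, he, a, rfl⟩ := mem_sup_span.1 hv
    have he0 : e = 0 := by
      apply h e he
      intro w hw'
      have := hw w (le_sup_left (α := Submodule F V) hw')
      simpa [mem_bperp.1 hc.1 w hw'] using this
    have hp := hw p (le_sup_right (α := Submodule F V) (Submodule.mem_span_singleton_self p))
    rw [he0, zero_add, map_smul, smul_eq_mul] at hp
    rcases mul_eq_zero.1 hp with ha | hb'
    · simp [ha, he0]
    · exact absurd (hS.sym0 hb') hb

lemma nle_perp (E : Ch B n) {M : Submodule F V} {j : ℕ} (hj : j < n) (hM : finrank F M = j)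
    (h : SpaceOpp B M (E.space j)) {c : V} (hc : c ∈ E.space (j+1)) (hc0 : c ≠ 0) :
    ¬ bperp B M ≤ LinearMap.ker (B c) := by
  intro hle
  have hcM : c ∈ M := by
    rw [← hS.bperp_bperp M, mem_bperp]
    intro w hw
    exact hS.sym0 (hle hw)
  have h' := spaceOpp_iff.1 (hS.opp_symm (by rw [hM, E.fr (by omega)]) h)
  apply hc0
  apply h' c hcM
  intro w hw
  exact E.iso (j+1) w (E.le (by omega) (by omega) hw) c hc

lemma nle_T (E : Ch B n) {T : Submodule F V} {i j : ℕ} (hji : j < i) (hi : i ≤ n)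
    (h : SpaceOpp B T (E.space i)) {c : V} (hc : c ∈ E.space (j+1)) (hc0 : c ≠ 0) :
    ¬ T ≤ LinearMap.ker (B c) := by
  intro hle
  apply hc0
  apply spaceOpp_iff.1 h c (E.le (by omega) hi hc)
  intro w hw
  exact hS.sym0 (hle hw)

lemma step [Fintype F] (hq : 4 ≤ Fintype.card F) (E1 E2 : Ch B n) {M T : Submodule F V} {j : ℕ}
    (hj : j < n) (hM : finrank F M = j) (hMi : IsTotIso B M)
    (h1 : SpaceOpp B M (E1.space j)) (h2 : SpaceOpp B M (E2.space j))
    (hT : T ≤ bperp B M)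
    (hT1 : ∀ c ∈ E1.space (j+1), c ≠ 0 → ¬ T ≤ LinearMap.ker (B c))
    (hT2 : ∀ c ∈ E2.space (j+1), c ≠ 0 → ¬ T ≤ LinearMap.ker (B c)) :
    ∃ p ∈ T, finrank F ↥(M ⊔ Submodule.span F {p}) = j + 1 ∧
      IsTotIso B (M ⊔ Submodule.span F {p}) ∧
      SpaceOpp B (M ⊔ Submodule.span F {p}) (E1.space (j+1)) ∧
      SpaceOpp B (M ⊔ Submodule.span F {p}) (E2.space (j+1)) := by
  have := hS.fd
  obtain ⟨c1, a1, b1, d1, e1⟩ := hS.xvec E1 hj hM h1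
  obtain ⟨c2, a2, b2, d2, e2⟩ := hS.xvec E2 hj hM h2
  obtain ⟨p, hp, hp1, hp2, -⟩ := avoid3 hq T _ _ _ (hT1 c1 a1 b1) (hT2 c2 a2 b2) (hT2 c2 a2 b2)
  have hpM : p ∉ M := fun h => hp1 (hS.sym0 (mem_bperp.1 d1 p h))
  refine ⟨p, hp, by rw [finrank_sup_span hpM, hM], hS.iso_sup_span hMi (hT hp), (e1 p).2 hp1, (e2 p).2 hp2⟩

/-- extend a lower flag -/
lemma extend [Fintype F] (hq : 4 ≤ Fintype.card F) (E1 E2 : Ch B n) (f : ℕ → Submodule F V) {j : ℕ}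
    (h0 : f 0 = ⊥)
    (hf : ∀ k < j, f k ≤ f (k+1) ∧ IsTotIso B (f (k+1)) ∧ finrank F (f (k+1)) = k+1 ∧
      SpaceOpp B (f (k+1)) (E1.space (k+1)) ∧ SpaceOpp B (f (k+1)) (E2.space (k+1))) :
    ∃ D : Ch B n, (∀ k ≤ n, SpaceOpp B (D.space k) (E1.space k) ∧ SpaceOpp B (D.space k) (E2.space k))
      ∧ ∀ k ≤ j, k ≤ n → D.space k = f k := by
  obtain ⟨D, hD⟩ := SFlag.build (B := B) (n := n) (fun k M => SpaceOpp B M (E1.space k) ∧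
    SpaceOpp B M (E2.space k) ∧ (k ≤ j → M = f k))
    (by
      refine ⟨?_, ?_, fun _ => h0.symm⟩
      · rw [SpaceOpp, E1.zero, inf_bot_eq]
      · rw [SpaceOpp, E2.zero, inf_bot_eq])
    (by
      rintro k hk M ⟨o1, o2, he⟩ hMi hM
      rcases Nat.lt_or_ge k j with hkj | hkj
      · obtain ⟨a, b, c, d, e⟩ := hf k hkj
        exact ⟨f (k+1), (he hkj.le) ▸ a, b, c, d, e, fun _ => rfl⟩
      · obtain ⟨p, -, a, b, c, d⟩ := hS.step hq E1 E2 hk hM hMi o1 o2 le_rfl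
          (fun c => hS.nle_perp E1 hk hM o1) (fun c => hS.nle_perp E2 hk hM o2)
        exact ⟨_, le_sup_left, b, a, c, d, fun h => by omega⟩)
  exact ⟨D, fun k hk => ⟨(hD k hk).1, (hD k hk).2.1⟩, fun k hk hn => (hD k hn).2.2 hk⟩

/-- a chamber through `T` opposite to two given ones -/
lemma opp_through [Fintype F] (hq : 4 ≤ Fintype.card F) (E1 E2 : Ch B n) {T : Submodule F V} {i : ℕ}
    (hi : i ≤ n) (hT : finrank F T = i) (hTi : IsTotIso B T)
    (h1 : SpaceOpp B T (E1.space i)) (h2 : SpaceOpp B T (E2.space i)) :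
    ∃ D : Ch B n, D.space i = T ∧ FlagOpp D E1 ∧ FlagOpp D E2 := by
  have := hS.fd
  obtain ⟨D, hD⟩ := SFlag.build (B := B) (n := n) (fun k M => SpaceOpp B M (E1.space k) ∧
    SpaceOpp B M (E2.space k) ∧ (k ≤ i → M ≤ T) ∧ (i ≤ k → T ≤ M))
    (by
      refine ⟨?_, ?_, fun _ => bot_le, fun h => ?_⟩
      · rw [SpaceOpp, E1.zero, inf_bot_eq]
      · rw [SpaceOpp, E2.zero, inf_bot_eq]
      · have : i = 0 := by omega
        rw [this] at hT
        rw [Submodule.finrank_eq_zero.1 hT])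
    (by
      rintro k hk M ⟨o1, o2, l1, l2⟩ hMi hM
      rcases Nat.lt_or_ge k i with hki | hki
      · obtain ⟨p, hp, a, b, c, d⟩ := hS.step hq E1 E2 (T := T) hk hM hMi o1 o2
          (fun v hv => mem_bperp.2 fun w hw => hTi w (l1 hki.le hw) v hv)
          (fun c => hS.nle_T E1 hki hi h1) (fun c => hS.nle_T E2 hki hi h2)
        have hle : M ⊔ Submodule.span F {p} ≤ T :=
          sup_le (l1 hki.le) ((Submodule.span_singleton_le_iff_mem _ _).2 hp)
        refine ⟨_, le_sup_left, b, a, c, d, fun _ => hle, fun h => ?_⟩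
        rw [Submodule.eq_of_le_of_finrank_le hle (by omega)]
      · obtain ⟨p, -, a, b, c, d⟩ := hS.step hq E1 E2 hk hM hMi o1 o2 le_rfl
          (fun c => hS.nle_perp E1 hk hM o1) (fun c => hS.nle_perp E2 hk hM o2)
        refine ⟨_, le_sup_left, b, a, c, d, fun h => by omega, fun _ => (l2 hki).trans le_sup_left⟩)
  refine ⟨D, le_antisymm ((hD i hi).2.2.1 le_rfl) ((hD i hi).2.2.2 le_rfl), ?_, ?_⟩
  · exact hS.opp_iff.2 fun k hk => (hD k hk).1
  · exact hS.opp_iff.2 fun k hk => (hD k hk).2.1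

lemma common_opp [Fintype F] (hq : 4 ≤ Fintype.card F) (E1 E2 : Ch B n) :
    ∃ D : Ch B n, FlagOpp D E1 ∧ FlagOpp D E2 := by
  obtain ⟨D, -, h⟩ := hS.opp_through hq E1 E2 (T := ⊥) (Nat.zero_le n) (finrank_bot F V)
    (fun u hu w _ => by rw [(Submodule.mem_bot F).1 hu]; simp)
    (by rw [SpaceOpp, E1.zero, inf_bot_eq]) (by rw [SpaceOpp, E2.zero, inf_bot_eq])
  exact ⟨D, h⟩

end Symp
end Ext


section Conn
set_option linter.unusedSectionVars false
variable {F V : Type} [Field F] [AddCommGroup V] [Module F V]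
variable {B : V →ₗ[F] V →ₗ[F] F} {n : ℕ}

/-- all positions opposite to `E` -/
def OppC (E D : Ch B n) : Prop := ∀ k ≤ n, SpaceOpp B (D.space k) (E.space k)

/-- connectivity of `Opp(E)` above level `i` -/
def SConn (f : Ch B n → ℝ) (E : Ch B n) (i : ℕ) : Prop := ∀ D D' : Ch B n, OppC E D → OppC E D' →
  (∀ k ≤ i, D.space k = D'.space k) → f D = f D'

namespace Symp
variable (hS : Symp B n) [Fintype F] (hq : 4 ≤ Fintype.card F)
include hS hq

lemma extend1 {E D : Ch B n} (hD : OppC E D) {i : ℕ} (hi : i < n) {U : Submodule F V}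
    (h1 : D.space i ≤ U) (h2 : IsTotIso B U) (h3 : finrank F U = i + 1)
    (h4 : SpaceOpp B U (E.space (i+1))) :
    ∃ X : Ch B n, OppC E X ∧ (∀ k ≤ i, X.space k = D.space k) ∧ X.space (i+1) = U := by
  obtain ⟨X, a, b⟩ := hS.extend hq E E (fun k => if k ≤ i then D.space k else U) (j := i+1)
    (by simp [D.zero])
    (by
      intro k hk
      rcases Nat.lt_or_ge k i with h | h
      · have e1 : (if k ≤ i then D.space k else U) = D.space k := if_pos (by omega)
        have e2 : (if k + 1 ≤ i then D.space (k+1) else U) = D.space (k+1) := if_pos (by omega)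
        beta_reduce
        rw [e1, e2]
        exact ⟨D.le (by omega) (by omega), D.iso _, D.fr (by omega), hD _ (by omega), hD _ (by omega)⟩
      · have : k = i := by omega
        subst this
        have e1 : (if k ≤ k then D.space k else U) = D.space k := if_pos (by omega)
        have e2 : (if k + 1 ≤ k then D.space (k+1) else U) = U := if_neg (by omega)
        beta_reduce
        rw [e1, e2]
        exact ⟨h1, h2, h3, h4, h4⟩)
  refine ⟨X, fun k hk => (a k hk).1, fun k hk => ?_, ?_⟩
  · rw [b k (by omega) (by omega)]; simp [hk]
  · rw [b _ le_rfl (by omega)]; simp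

variable {f : Ch B n → ℝ} {E : Ch B n} {i : ℕ} (hi : i + 1 < n) (hC : SConn f E (i+1))
  (hf : ∀ X Y : Ch B n, OppC E X → OppC E Y → Adj (i+1) X Y → f X = f Y)
include hi hC hf

lemma via_U {D D' : Ch B n} (hD : OppC E D) (hD' : OppC E D')
    (ha : ∀ k ≤ i, D.space k = D'.space k) {U : Submodule F V}
    (h1 : D.space (i+1) ≤ U) (h1' : D'.space (i+1) ≤ U) (h2 : IsTotIso B U)
    (h3 : finrank F U = i + 2) (h4 : SpaceOpp B U (E.space (i+2))) : f D = f D' := by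
  obtain ⟨X, a, b, c⟩ := hS.extend1 hq hD hi h1 h2 h3 h4
  obtain ⟨Y, d, e⟩ := hS.exists_upd X (i := i+1) (by omega) (by omega) (S := D'.space (i+1))
    (by
      rw [Nat.add_sub_cancel, b i (by omega), ha i le_rfl]
      exact D'.le (by omega) (by omega))
    (by rw [topC, if_pos hi, c]; exact h1') (D'.fr (by omega))
  have hY : OppC E Y := by
    intro k hk
    by_cases h : k = i + 1
    · rw [h, e]; exact hD' _ (by omega)
    · rw [← d k h]; exact a k hk
  calc f D = f X := (hC X D a hD b).symm
    _ = f Y := hf X Y a hY d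
    _ = f D' := by
      apply hC Y D' hY hD'
      intro k hk
      by_cases h : k = i + 1
      · rw [h, e]
      · rw [← d k h, b k hk, ha k (by omega)]

lemma good_pair {D D' : Ch B n} (hD : OppC E D) (hD' : OppC E D')
    (ha : ∀ k ≤ i, D.space k = D'.space k)
    (hg : ∀ v ∈ E.space (i+2), v ∈ bperp B (D.space i) →
      v ∈ D.space (i+1) ⊔ D'.space (i+1) → v = 0) : f D = f D' := by
  have := hS.fd
  obtain ⟨c, a1, a2, a3, a4⟩ := hS.xvec E (by omega : i < n) (D.fr (by omega)) (hD i (by omega))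
  obtain ⟨x, b1, b2, b3, b4⟩ := hS.xvec E hi (D.fr (by omega)) (hD (i+1) (by omega))
  obtain ⟨y, c1, c2, c3, c4⟩ := hS.xvec E hi (D'.fr (by omega)) (hD' (i+1) (by omega))
  have hDD : D.space i ≤ D.space (i+1) := D.le (by omega) (by omega)
  have hDD' : D.space i ≤ D'.space (i+1) := by
    rw [ha i le_rfl]; exact D'.le (by omega) (by omega)
  set W := D.space (i+1) ⊔ D'.space (i+1) with hW
  have key : ∀ v ∈ E.space (i+2), v ∈ bperp B (D.space i) → v ≠ 0 →
      ¬ bperp B W ≤ LinearMap.ker (B v) := by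
    intro v hv hv2 hv0 hle
    apply hv0
    apply hg v hv hv2
    rw [← hS.bperp_bperp W, mem_bperp]
    intro w hw
    exact hS.sym0 (hle hw)
  obtain ⟨r, hr, r1, r2, r3⟩ := avoid3 hq (bperp B W) _ _ _
    (key c (E.le (by omega) (by omega) a1) a3 a2) (key x b1 (bperp_anti hDD b3) b2)
    (key y c1 (bperp_anti hDD' c3) c2)
  have hr1 : r ∈ bperp B (D.space (i+1)) := bperp_anti le_sup_left hr
  have hr2 : r ∈ bperp B (D'.space (i+1)) := bperp_anti le_sup_right hr
  have hr0 : r ∈ bperp B (D.space i) := bperp_anti hDD hr1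
  have n1 : r ∉ D.space (i+1) := fun h => r2 (hS.sym0 (mem_bperp.1 b3 r h))
  have n2 : r ∉ D'.space (i+1) := fun h => r3 (hS.sym0 (mem_bperp.1 c3 r h))
  have n0 : r ∉ D.space i := fun h => n1 (hDD h)
  obtain ⟨R, d1, d2, d3⟩ := hS.extend1 hq hD (by omega : i < n)
    (U := D.space i ⊔ Submodule.span F {r}) le_sup_left (hS.iso_sup_span (D.iso _) hr0)
    (by rw [finrank_sup_span n0, D.fr (by omega)]) ((a4 r).2 r1)
  calc f D = f R := by
        apply hS.via_U hq hi hC hf hD d1 (fun k hk => (d2 k hk).symm)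
          (U := D.space (i+1) ⊔ Submodule.span F {r}) le_sup_left
          (by rw [d3]; exact sup_le_sup_right hDD _) (hS.iso_sup_span (D.iso _) hr1)
          (by rw [finrank_sup_span n1, D.fr (by omega)]) ((b4 r).2 r2)
    _ = f D' := by
        symm
        apply hS.via_U hq hi hC hf hD' d1 (fun k hk => by rw [d2 k hk, ha k hk])
          (U := D'.space (i+1) ⊔ Submodule.span F {r}) le_sup_left
          (by rw [d3]; exact sup_le_sup_right hDD' _) (hS.iso_sup_span (D'.iso _) hr2)
          (by rw [finrank_sup_span n2, D'.fr (by omega)]) ((c4 r).2 r3)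

lemma sconn_step : SConn f E i := by
  have := hS.fd
  intro D D' hD hD' ha
  obtain ⟨c, a1, a2, a3, a4⟩ := hS.xvec E (by omega : i < n) (D.fr (by omega)) (hD i (by omega))
  set Q := bperp B (D.space i) ⊓ E.space (i+2) with hQ
  have hQd : finrank F Q ≤ 2 := by
    have h1 := Submodule.finrank_sup_add_finrank_inf_eq Q (E.space i)
    have h2 : Q ⊓ E.space i = ⊥ := by
      rw [eq_bot_iff]
      intro v hv
      exact (Submodule.mem_bot F).2 (spaceOpp_iff.1 (hD i (by omega)) v hv.2 (mem_bperp.1 hv.1.1))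
    have h3 : finrank F ↥(Q ⊔ E.space i) ≤ i + 2 := by
      rw [← E.fr (i := i+2) (by omega)]
      exact Submodule.finrank_mono (sup_le inf_le_right (E.le (by omega) (by omega)))
    rw [h2, finrank_bot, E.fr (by omega)] at h1
    omega
  have hbp := hS.finrank_bperp (D.space i)
  rw [D.fr (by omega)] at hbp
  have hne : ∀ X : Ch B n, ¬ bperp B (D.space i) ≤ X.space (i+1) ⊔ Q := by
    intro X hle
    have h1 := Submodule.finrank_mono hle
    have h2 := Submodule.finrank_add_le_finrank_add_finrank (X.space (i+1)) Q
    rw [X.fr (by omega)] at h2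
    omega
  obtain ⟨p, hp, p1, p2, p3⟩ := avoid3 hq (bperp B (D.space i)) _ _ _
    (hS.nle_perp E (by omega : i < n) (D.fr (by omega)) (hD i (by omega)) a1 a2) (hne D) (hne D')
  have n0 : p ∉ D.space i := fun h => p2 (le_sup_left (α := Submodule F V)
    (D.le (by omega) (by omega) h))
  obtain ⟨R, d1, d2, d3⟩ := hS.extend1 hq hD (by omega : i < n)
    (U := D.space i ⊔ Submodule.span F {p}) le_sup_left (hS.iso_sup_span (D.iso _) hp)
    (by rw [finrank_sup_span n0, D.fr (by omega)]) ((a4 p).2 p1)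
  have key : ∀ X : Ch B n, OppC E X → D.space i ≤ X.space (i+1) → p ∉ X.space (i+1) ⊔ Q →
      ∀ v ∈ E.space (i+2), v ∈ bperp B (D.space i) → v ∈ X.space (i+1) ⊔ R.space (i+1) → v = 0 := by
    intro X hX hDX hpX v hv hv2 hv3
    have hv4 : v ∈ X.space (i+1) ⊔ Submodule.span F {p} := by
      refine (sup_le le_sup_left ?_ : X.space (i+1) ⊔ R.space (i+1) ≤ _) hv3
      rw [d3]; exact sup_le_sup_right hDX _
    obtain ⟨w, hw, a, rfl⟩ := mem_sup_span.1 hv4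
    by_cases h0 : a = 0
    · subst h0
      simp only [zero_smul, add_zero] at *
      apply spaceOpp_iff.1 (hS.opp_symm (by rw [X.fr (by omega), E.fr (by omega)]) (hX (i+1) (by omega))) w hw
      intro u hu
      exact E.iso (i+2) u (E.le (by omega) (by omega) hu) w hv
    · exfalso
      apply hpX
      have : p = a⁻¹ • (-w) + a⁻¹ • (w + a • p) := by
        rw [← smul_add, neg_add_cancel_left, smul_smul, inv_mul_cancel₀ h0, one_smul]
      rw [this]
      exact Submodule.add_mem_sup (Submodule.smul_mem _ _ (Submodule.neg_mem _ hw))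
        (Submodule.smul_mem _ _ ⟨hv2, hv⟩)
  have hD1 : D.space i ≤ D.space (i+1) := D.le (by omega) (by omega)
  have hD1' : D.space i ≤ D'.space (i+1) := by
    rw [ha i le_rfl]; exact D'.le (by omega) (by omega)
  calc f D = f R := hS.good_pair hq hi hC hf hD d1 (fun k hk => (d2 k hk).symm) (key D hD hD1 p2)
    _ = f D' := by
      symm
      apply hS.good_pair hq hi hC hf hD' d1 (fun k hk => by rw [d2 k hk, ha k hk])
      rw [← ha i le_rfl]
      exact key D' hD' hD1' p3

omit hi hC hf in
lemma sconn (f : Ch B n → ℝ) (E : Ch B n) (i : ℕ) (hi : i < n)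
    (hf : ∀ k, i < k → k ≤ n → ∀ X Y : Ch B n, OppC E X → OppC E Y → Adj k X Y → f X = f Y) :
    SConn f E i := by
  obtain ⟨m, hm⟩ : ∃ m, n = i + 1 + m := ⟨n - i - 1, by omega⟩
  induction m generalizing i with
  | zero =>
    intro D D' hD hD' ha
    apply hf (i+1) (by omega) (by omega) D D' hD hD'
    intro k hk
    rcases Nat.lt_or_ge i k with h | h
    · rw [D.big (by omega), D'.big (by omega)]
    · exact ha k h
  | succ m ih =>
    apply hS.sconn_step hq (by omega) (ih (i+1) (by omega) (fun k hk => hf k (by omega)) (by omega))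
    exact hf (i+1) (by omega) (by omega)

omit hi hC hf in
/-- chamber graph residue connectivity, upper part -/
lemma conn_up (f : Ch B n → ℝ) (i : ℕ) (hi : i < n)
    (hf : ∀ k, i < k → k ≤ n → ∀ X Y : Ch B n, Adj k X Y → f X = f Y) (D D' : Ch B n)
    (h : ∀ k ≤ i, D.space k = D'.space k) : f D = f D' := by
  obtain ⟨E, h1, h2⟩ := hS.common_opp hq D D'
  have h1' := hS.opp_iff.1 (hS.flagOpp_symm h1)
  have h2' := hS.opp_iff.1 (hS.flagOpp_symm h2)
  exact hS.sconn hq f E i hi (fun k a b X Y _ _ => hf k a b X Y) D D' h1' h2' h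

omit hi hC hf in
/-- G2 -/
lemma conn_all (f : Ch B n → ℝ)
    (hf : ∀ k, 1 ≤ k → k ≤ n → ∀ X Y : Ch B n, Adj k X Y → f X = f Y) (D D' : Ch B n) : f D = f D' := by
  have hn := hS.hn
  apply hS.conn_up hq f 0 (by omega) (fun k hk => hf k hk)
  intro k hk
  rw [Nat.le_zero.1 hk, D.zero, D'.zero]

omit hq hi hC hf in
/-- reach lemma -/
lemma reach (f : Ch B n → ℝ) (m : ℕ) (hm : m < n)
    (hf : ∀ k, 1 ≤ k → k ≤ m → ∀ X Y : Ch B n, Adj k X Y → f X = f Y) (C : Ch B n)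
    (T : Submodule F V) (hT : T ≤ C.space (m+1)) (hd : finrank F T = m) :
    ∃ Y : Ch B n, Y.space m = T ∧ (∀ j, m < j → Y.space j = C.space j) ∧ f Y = f C := by
  have := hS.fd
  induction m generalizing C T with
  | zero =>
    refine ⟨C, ?_, fun _ _ => rfl, rfl⟩
    rw [C.zero, Submodule.finrank_eq_zero.1 hd]
  | succ m ih =>
    have hf' : ∀ k, 1 ≤ k → k ≤ m → ∀ X Y : Ch B n, Adj k X Y → f X = f Y :=
      fun k a b => hf k a (by omega)
    obtain ⟨L, hL1, hL2, hLd⟩ : ∃ L, L ≤ C.space (m+1) ∧ L ≤ T ∧ finrank F L = m := by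
      by_cases h : T = C.space (m+1)
      · exact ⟨C.space m, C.le (by omega) (by omega), h ▸ C.le (by omega) (by omega), C.fr (by omega)⟩
      · refine ⟨T ⊓ C.space (m+1), inf_le_right, inf_le_left, ?_⟩
        exact (copencil_inf (C.fr (i := m+2) (by omega)) hd (C.fr (by omega)) hT
          (C.le (by omega) (by omega)) h).1
    obtain ⟨Y, y1, y2, y3⟩ := ih (by omega) hf' C L hL1 hLd
    obtain ⟨Z, z1, z2⟩ := hS.exists_upd Y (i := m+1) (by omega) (by omega) (S := T)
      (by rw [Nat.add_sub_cancel, y1]; exact hL2)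
      (by rw [topC, if_pos hm, y2 _ (by omega)]; exact hT) hd
    refine ⟨Z, z2, fun j hj => ?_, ?_⟩
    · rw [← z1 j (by omega), y2 j (by omega)]
    · rw [← y3]; exact (hf (m+1) (by omega) le_rfl Y Z z1).symm

omit hq hi hC hf in
/-- residue connectivity, lower part -/
lemma conn_down (f : Ch B n → ℝ) (m : ℕ) (hm : m < n)
    (hf : ∀ k, 1 ≤ k → k ≤ m → ∀ X Y : Ch B n, Adj k X Y → f X = f Y) (C D : Ch B n)
    (h : ∀ k, m < k → C.space k = D.space k) : f C = f D := by
  induction m generalizing C with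
  | zero =>
    congr 1
    apply SFlag.ext'
    intro k
    rcases Nat.eq_zero_or_pos k with rfl | hk
    · rw [C.zero, D.zero]
    · exact h k hk
  | succ m ih =>
    obtain ⟨Y, y1, y2, y3⟩ := hS.reach f (m+1) hm hf C (D.space (m+1))
      (by rw [h (m+2) (by omega)]; exact D.le (by omega) (by omega)) (D.fr (by omega))
    rw [← y3]
    apply ih (by omega) (fun k a b => hf k a (by omega)) Y
    intro k hk
    by_cases hk' : k = m + 1
    · rw [hk', y1]
    · rw [y2 k (by omega), h k (by omega)]

omit hi hC hf in
/-- residue connectivity -/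
lemma conn_res (f : Ch B n → ℝ) (i : ℕ) (h1 : 1 ≤ i) (hin : i ≤ n)
    (hf : ∀ k, 1 ≤ k → k ≤ n → k ≠ i → ∀ X Y : Ch B n, Adj k X Y → f X = f Y) (C D : Ch B n)
    (h : C.space i = D.space i) : f C = f D := by
  have := hS.fd
  -- X with lower part of `D` and upper part of `C`
  obtain ⟨X, hX⟩ := SFlag.exists_ch (B := B) (n := n)
    (fun k => if k ≤ i then D.space k else C.space k)
    (by
      intro k hk
      by_cases h : k ≤ i
      · beta_reduce; rw [if_pos h]; exact D.fr hk
      · beta_reduce; rw [if_neg h]; exact C.fr hk)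
    (by
      by_cases h : n ≤ i
      · simp only [if_pos h]; exact D.iso n
      · simp only [if_neg h]; exact C.iso n)
    (by
      intro k hk
      rcases Nat.lt_trichotomy k i with h' | h' | h'
      · simp only [if_pos h'.le, if_pos (Nat.succ_le_of_lt h')]; exact D.le (by omega) (by omega)
      · subst h'
        simp only [if_pos le_rfl, if_neg (Nat.not_succ_le_self k)]
        rw [← h]; exact C.le (by omega) (by omega)
      · simp only [if_neg (not_le.2 h'), if_neg (not_le.2 (h'.trans (Nat.lt_succ_self k)))]
        exact C.le (by omega) (by omega))
  have e1 : ∀ k ≤ i, X.space k = D.space k := by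
    intro k hk
    rcases Nat.eq_zero_or_pos k with rfl | h0
    · rw [X.zero, D.zero]
    · rw [hX k h0 (by omega), if_pos hk]
  have e2 : ∀ k, i ≤ k → X.space k = C.space k := by
    intro k hk
    by_cases hkn : k ≤ n
    · rw [hX k (by omega) hkn]
      split_ifs with hh
      · rw [show k = i by omega, h]
      · rfl
    · rw [X.big (by omega), C.big (by omega)]
  have s1 : f C = f X := by
    apply hS.conn_down f (i-1) (by omega) (fun k a b => hf k a (by omega) (by omega))
    intro k hk
    exact (e2 k (by omega)).symm
  have s2 : f X = f D := by
    by_cases hn : i < n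
    · exact hS.conn_up hq f i hn (fun k a b => hf k (by omega) b (by omega)) X D e1
    · congr 1
      apply SFlag.ext'
      intro k
      by_cases hk : k ≤ i
      · exact e1 k hk
      · rw [X.big (by omega), D.big (by omega)]
  rw [s1, s2]

omit hi hC hf in
lemma hecke [Fintype (Ch B n)] : Hecke (sgen B n) n (Fintype.card F : ℝ) where
  hq := by
    have : 2 ≤ Fintype.card F := by omega
    exact_mod_cast this
  hn := by have := hS.hn; omega
  braid := hS.braid
  symm := fun i hi => t_symm
  quad := fun i hi => hS.t_quad (by omega) (by omega)
  row := fun i hi => hS.t_row (by omega) (by omega)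
  conn := by
    intro x hx
    have hc : ∀ C D, x C = x D := by
      apply hS.conn_all hq
      intro k h1 h2
      rw [← hS.t_eig h1 h2]
      have := hx (n-k) (by omega)
      rwa [sgen, show n - (n - k) = k by omega] at this
    by_cases hne : Nonempty (Ch B n)
    · obtain ⟨C⟩ := hne
      refine ⟨x C, ?_⟩
      ext D
      simp [hc D C]
    · refine ⟨0, ?_⟩
      ext D
      exact absurd ⟨D⟩ hne

end Symp
end Conn


section Struct
set_option linter.unusedSectionVars false
variable {F V : Type} [Field F] [AddCommGroup V] [Module F V]
variable {B : V →ₗ[F] V →ₗ[F] F} {n : ℕ} [Fintype (Ch B n)]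

namespace Symp
variable (hS : Symp B n) [Fintype F] (hq : 4 ≤ Fintype.card F)
include hS hq

lemma A_at (C : Ch B n) (w : Ch B n → ℝ) (v : ℝ) (h : ∀ D, FlagOpp C D → w D = v) :
    (Ad (sgen B n) (n-1)).mulVec w C = (Fintype.card F : ℝ)^(n^2) * v := by
  have h1 := congrFun (hS.hecke hq).A_row C
  simp only [Matrix.mulVec, dotProduct, Pi.one_apply, mul_one, Pi.smul_apply, smul_eq_mul] at h1 ⊢
  rw [← h1, Finset.sum_mul]
  apply Finset.sum_congr rfl
  intro D _
  by_cases h0 : Ad (sgen B n) (n-1) C D = 0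
  · simp [h0]
  · rw [h D (hS.A_supp C D h0)]

lemma A_ekr {S : Finset (Ch B n)} (hE : ∀ C ∈ S, ∀ D ∈ S, ¬ FlagOpp C D) :
    ∀ C ∈ S, ∀ D ∈ S, Ad (sgen B n) (n-1) C D = 0 := by
  intro C hC D hD
  by_contra h
  exact hE C hC D hD (hS.A_supp C D h)

lemma bound {S : Finset (Ch B n)} (hE : ∀ C ∈ S, ∀ D ∈ S, ¬ FlagOpp C D) :
    (S.card : ℝ) * ((Fintype.card F : ℝ)^n + 1) ≤ Fintype.card (Ch B n) :=
  ((hS.hecke hq).hoffman S (hS.A_ekr hq hE)).1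

lemma eigW_const {a : ℕ} (ha : a < n) {w : Ch B n → ℝ}
    (hw : ∀ j < n, j ≠ a → (sgen B n j).mulVec w = (Fintype.card F : ℝ) • w) :
    ∀ k, 1 ≤ k → k ≤ n → k ≠ n - a → ∀ X Y : Ch B n, Adj k X Y → w X = w Y := by
  intro k h1 h2 h3
  rw [← hS.t_eig h1 h2]
  have := hw (n-k) (by omega) (by omega)
  rwa [sgen, show n - (n - k) = k by omega] at this

lemma struct {S : Finset (Ch B n)} (hE : ∀ C ∈ S, ∀ D ∈ S, ¬ FlagOpp C D)
    (hc : (S.card : ℝ) * ((Fintype.card F : ℝ)^n + 1) = Fintype.card (Ch B n))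
    (hne : S.Nonempty) :
    ∃ i, 1 ≤ i ∧ i ≤ n ∧ ∀ C ∈ S, ∀ C' ∈ S, ¬ SpaceOpp B (C.space i) (C'.space i) := by
  obtain ⟨-, w, hw, hA, hs⟩ := ((hS.hecke hq).hoffman S (hS.A_ekr hq hE)).2 hc hne
  have hn := hS.hn
  set q : ℝ := (Fintype.card F : ℝ) with hqdef
  have hqp : 0 < q := by
    have : 0 < Fintype.card F := by omega
    rw [hqdef]
    exact_mod_cast this
  have cst := fun a (ha : a < n) => hS.eigW_const hq ha (hs a ha)
  have sum0 : ∀ C ∈ S, ∀ D, FlagOpp C D → ∑ a ∈ Finset.range n, w a D = -(1/(q^n+1)) := by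
    intro C hC D hD
    have h1 := congrFun hw D
    have hDS : D ∉ S := fun h => hE C hC D h hD
    simp only [Pi.sub_apply, Pi.smul_apply, Pi.one_apply, smul_eq_mul, mul_one, Finset.sum_apply,
      ind, hDS, if_false] at h1
    simp only [← h1]
    ring
  have opp_const : ∀ C ∈ S, ∀ a < n, ∀ D D', FlagOpp C D → FlagOpp C D' → w a D = w a D' := by
    intro C hC a ha D D' hD hD'
    apply hS.sconn hq (w a) C 0 (by omega) _ D D' (hS.opp_iff.1 (hS.flagOpp_symm hD))
      (hS.opp_iff.1 (hS.flagOpp_symm hD')) (fun k hk => by rw [Nat.le_zero.1 hk, D.zero, D'.zero])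
    intro k h1 h2 X Y hX hY hXY
    by_cases hk : k = n - a
    · have sX := sum0 C hC X (hS.flagOpp_symm (hS.opp_iff.2 hX))
      have sY := sum0 C hC Y (hS.flagOpp_symm (hS.opp_iff.2 hY))
      rw [← Finset.add_sum_erase _ _ (Finset.mem_range.2 ha)] at sX sY
      have : ∑ l ∈ (Finset.range n).erase a, w l X = ∑ l ∈ (Finset.range n).erase a, w l Y := by
        apply Finset.sum_congr rfl
        intro l hl
        have hl' := Finset.mem_erase.1 hl
        have hl2 := Finset.mem_range.1 hl'.2
        exact cst l hl2 k h1 h2 (by omega) X Y hXY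
      linarith
    · exact cst a ha k h1 h2 hk X Y hXY
  obtain ⟨C0, hC0⟩ := hne
  obtain ⟨D0, hD0, -⟩ := hS.common_opp hq C0 C0
  replace hD0 := hS.flagOpp_symm hD0
  have val : ∀ C ∈ S, ∀ a < n, ∀ D, FlagOpp C D → w a D = w a D0 := by
    intro C hC a ha D hD
    obtain ⟨E, e1, e2⟩ := hS.common_opp hq C C0
    rw [opp_const C hC a ha D E hD (hS.flagOpp_symm e1),
      opp_const C0 hC0 a ha E D0 (hS.flagOpp_symm e2) hD0]
  obtain ⟨a, ha, hv⟩ : ∃ a < n, w a D0 ≠ 0 := by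
    by_contra hcon
    push Not at hcon
    have := sum0 C0 hC0 D0 hD0
    rw [Finset.sum_eq_zero (fun a ha => hcon a (Finset.mem_range.1 ha))] at this
    have h2 : 0 < 1/(q^n+1) := by positivity
    linarith
  have wC : ∀ C ∈ S, w a C = - (q^n * w a D0) := by
    intro C hC
    have h1 := hS.A_at hq C (w a) (w a D0) (val C hC a ha)
    rw [hA a ha, Pi.smul_apply, smul_eq_mul, ← hqdef,
      show n^2 = n*(n-1) + n by obtain ⟨m, rfl⟩ : ∃ m, n = m + 1 := ⟨n-1, by omega⟩
                                simp; ring, pow_add] at h1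
    have h2 : (0:ℝ) < q^(n*(n-1)) := by positivity
    apply mul_left_cancel₀ h2.ne'
    linear_combination -h1
  refine ⟨n - a, by omega, by omega, ?_⟩
  intro C hC C' hC' ho
  obtain ⟨D, d1, d2, -⟩ := hS.opp_through hq C C (T := C'.space (n-a)) (by omega) (C'.fr (by omega))
    (C'.iso _) (hS.opp_symm (by rw [C.fr (by omega), C'.fr (by omega)]) ho)
    (hS.opp_symm (by rw [C.fr (by omega), C'.fr (by omega)]) ho)
  have h1 := val C hC a ha D (hS.flagOpp_symm d2)
  have h2 := hS.conn_res hq (w a) (n-a) (by omega) (by omega) (cst a ha) D C' d1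
  rw [h1, wC C' hC'] at h2
  apply hv
  have h3 : (q^n + 1) * w a D0 = 0 := by linear_combination h2
  have h4 : (q^n + 1) ≠ 0 := by positivity
  exact (mul_eq_zero.1 h3).resolve_left h4

lemma struct' {S : Finset (Ch B n)}
    (hc : (S.card : ℝ) * ((Fintype.card F : ℝ)^n + 1) = Fintype.card (Ch B n))
    {i : ℕ} (hin : i ≤ n) (h : ∀ C ∈ S, ∀ C' ∈ S, ¬ SpaceOpp B (C.space i) (C'.space i)) :
    ∀ C ∈ S, ∀ D : Ch B n, D.space i = C.space i → D ∈ S := by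
  let S' : Finset (Ch B n) := Finset.univ.filter fun D => ∃ C ∈ S, D.space i = C.space i
  have hS' : ∀ C ∈ S', ∀ D ∈ S', ¬ FlagOpp C D := by
    intro C hC D hD ho
    obtain ⟨-, C', c1, c2⟩ := Finset.mem_filter.1 hC
    obtain ⟨-, D', d1, d2⟩ := Finset.mem_filter.1 hD
    apply h C' c1 D' d1
    rw [← c2, ← d2]
    exact hS.opp_iff.1 ho i hin
  have hb := hS.bound hq hS'
  have hsub : S ⊆ S' := fun C hC => Finset.mem_filter.2 ⟨Finset.mem_univ _, C, hC, rfl⟩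
  have hle : S'.card ≤ S.card := by
    rw [← hc] at hb
    have h2 : (0:ℝ) < (Fintype.card F : ℝ)^n + 1 := by positivity
    exact_mod_cast le_of_mul_le_mul_right hb h2
  have heq := Finset.eq_of_subset_of_card_le hsub hle
  intro C hC D hD
  rw [heq]
  exact Finset.mem_filter.2 ⟨Finset.mem_univ _, C, hC, hD⟩

end Symp
end Struct


section Excl
set_option linter.unusedSectionVars false
variable {F V : Type} [Field F] [AddCommGroup V] [Module F V]

lemma exists_mem_not [FiniteDimensional F V] {W U : Submodule F V}
    (h : finrank F W < finrank F U) : ∃ v ∈ U, v ∉ W := by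
  apply SetLike.not_le_iff_exists.1
  intro hle
  have := Submodule.finrank_mono hle
  omega

lemma exists_sub [FiniteDimensional F V] (W : Submodule F V) (m : ℕ) (h : m ≤ finrank F W) :
    ∃ E ≤ W, finrank F E = m := by
  induction m with
  | zero => exact ⟨⊥, bot_le, finrank_bot F V⟩
  | succ m ih =>
    obtain ⟨E, h1, h2⟩ := ih (by omega)
    obtain ⟨v, v1, v2⟩ := exists_mem_not (W := E) (U := W) (by omega)
    exact ⟨E ⊔ Submodule.span F {v}, sup_le h1 ((Submodule.span_singleton_le_iff_mem _ _).2 v1),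
      by rw [finrank_sup_span v2, h2]⟩

/-- abstract properties of the family of middle-dimensional spaces -/
structure KK (B : V →ₗ[F] V →ₗ[F] F) (e : ℕ) (P : Submodule F V → Prop)
    (k : Submodule F V → Submodule F V → ℝ) (q : ℝ) : Prop where
  hq : 1 < q
  dim : ∀ T, P T → finrank F T = e + 2
  full : ∀ A U, A ≤ U → IsTotIso B U → finrank F A = e + 1 → finrank F U = e + 3 →
    ∀ T1 T2, A ≤ T1 → T1 ≤ U → A ≤ T2 → T2 ≤ U → P T1 → P T2 → T1 ≠ T2 →
    ∀ T, A ≤ T → T ≤ U → finrank F T = e + 2 → P T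
  k0 : ∀ A U, A ≤ U → IsTotIso B U → finrank F A = e + 1 → finrank F U = e + 3 →
    (∀ T, A ≤ T → T ≤ U → ¬ P T) → k A U = 0
  k1 : ∀ A U, A ≤ U → IsTotIso B U → finrank F A = e + 1 → finrank F U = e + 3 →
    ∀ T1 T2, A ≤ T1 → T1 ≤ U → A ≤ T2 → T2 ≤ U → P T1 → finrank F T2 = e + 2 → ¬ P T2 → k A U = 1
  kf : ∀ A U, A ≤ U → IsTotIso B U → finrank F A = e + 1 → finrank F U = e + 3 →
    (∀ T, A ≤ T → T ≤ U → finrank F T = e + 2 → P T) → k A U = q + 1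
  add : ∀ A1 A2 U U', A1 ≤ U → A2 ≤ U → A1 ≤ U' → A2 ≤ U' → IsTotIso B U → IsTotIso B U' →
    finrank F A1 = e + 1 → finrank F A2 = e + 1 → finrank F U = e + 3 → finrank F U' = e + 3 →
    k A1 U + k A2 U' = k A2 U + k A1 U'

def EmptyU (P : Submodule F V → Prop) (U : Submodule F V) : Prop := ∀ T, T ≤ U → ¬ P T
def MixU (e : ℕ) (P : Submodule F V → Prop) (U : Submodule F V) : Prop :=
  (∀ A, A ≤ U → finrank F A = e + 1 → ∃ T, P T ∧ A ≤ T ∧ T ≤ U) ∧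
  ∃ S, S ≤ U ∧ finrank F S = e + 2 ∧ ¬ P S

namespace KK
variable {B : V →ₗ[F] V →ₗ[F] F} {e : ℕ} {P : Submodule F V → Prop}
    {k : Submodule F V → Submodule F V → ℝ} {q : ℝ} (H : KK B e P k q)
include H

lemma tri {A U : Submodule F V} (h : A ≤ U) (hU : IsTotIso B U) (hA : finrank F A = e + 1)
    (hd : finrank F U = e + 3) :
    ((∀ T, A ≤ T → T ≤ U → ¬ P T) ∧ k A U = 0) ∨
    ((∃ T, A ≤ T ∧ T ≤ U ∧ P T) ∧ (∃ T, A ≤ T ∧ T ≤ U ∧ finrank F T = e + 2 ∧ ¬ P T) ∧ k A U = 1) ∨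
    ((∀ T, A ≤ T → T ≤ U → finrank F T = e + 2 → P T) ∧ k A U = q + 1) := by
  by_cases h1 : ∀ T, A ≤ T → T ≤ U → ¬ P T
  · exact Or.inl ⟨h1, H.k0 A U h hU hA hd h1⟩
  by_cases h2 : ∀ T, A ≤ T → T ≤ U → finrank F T = e + 2 → P T
  · exact Or.inr (Or.inr ⟨h2, H.kf A U h hU hA hd h2⟩)
  right; left
  push Not at h1 h2
  obtain ⟨T1, a1, a2, a3⟩ := h1
  obtain ⟨T2, b1, b2, b3, b4⟩ := h2
  exact ⟨⟨T1, a1, a2, a3⟩, ⟨T2, b1, b2, b3, b4⟩, H.k1 A U h hU hA hd T1 T2 a1 a2 b1 b2 a3 b3 b4⟩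

variable [FiniteDimensional F V]

/-- through `A' ⊄ S` using a full `A ⊇ A' ∩ S` -/
lemma thru {A A' U E : Submodule F V} (hA : finrank F A = e+1) (hA' : finrank F A' = e+1)
    (hE : finrank F E = e) (h1 : E ≤ A) (h2 : E ≤ A') (hne : A ≠ A') (hAU : A ≤ U) (hAU' : A' ≤ U)
    (hf : ∀ T, A ≤ T → T ≤ U → finrank F T = e + 2 → P T) : ∃ T, P T ∧ A' ≤ T ∧ T ≤ U :=
  ⟨A ⊔ A', hf _ le_sup_left (sup_le hAU hAU') (pencil_sup hE hA hA' h1 h2 hne), le_sup_right,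
    sup_le hAU hAU'⟩

omit H in
lemma cut {A' S U : Submodule F V} (hA' : finrank F A' = e+1) (hS : finrank F S = e+2)
    (hU : finrank F U = e+3) (h1 : A' ≤ U) (h2 : S ≤ U) (hn : ¬ A' ≤ S) :
    finrank F ↥(A' ⊓ S) = e := by
  have h3 := Submodule.finrank_sup_add_finrank_inf_eq A' S
  have h4 : finrank F ↥(A' ⊔ S) ≤ e + 3 := hU ▸ Submodule.finrank_mono (sup_le h1 h2)
  have h5 : finrank F ↥(A' ⊓ S) < finrank F A' := by
    by_contra hc
    push Not at hc
    exact hn (inf_eq_left.1 (Submodule.eq_of_le_of_finrank_le inf_le_left hc))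
  omega

lemma clos {S U U' : Submodule F V} (hU : IsTotIso B U) (hU' : IsTotIso B U')
    (dS : finrank F S = e + 2) (dU : finrank F U = e + 3) (dU' : finrank F U' = e + 3)
    (hSU : S ≤ U) (hSU' : S ≤ U') (h : EmptyU P U ∨ MixU e P U) : EmptyU P U' ∨ MixU e P U' := by
  have hq := H.hq
  by_cases hPS : P S
  · -- case S ∈ P
    have hM : MixU e P U := h.resolve_left (fun h => h S hSU hPS)
    obtain ⟨m1, S0, s1, s2, s3⟩ := hM
    have hne0 : S ≠ S0 := fun h => s3 (h ▸ hPS)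
    -- a space of dimension e+1 in U not in S
    have other : ∀ E ≤ S, finrank F E = e → ∃ A, E ≤ A ∧ A ≤ S ∧ finrank F A = e + 1 ∧
        ∀ T, A ≤ T → T ≤ U → finrank F T = e + 2 → P T := by
      intro E hE dE
      obtain ⟨v, v1, v2⟩ := exists_mem_not (W := S) (U := U) (by omega)
      obtain ⟨T, t1, t2, t3⟩ := m1 (E ⊔ Submodule.span F {v})
        (sup_le (hE.trans hSU) ((Submodule.span_singleton_le_iff_mem _ _).2 v1))
        (by rw [finrank_sup_span (fun h => v2 (hE h)), dE])
      have hvT : v ∈ T := t2 (le_sup_right (α := Submodule F V) (Submodule.mem_span_singleton_self v))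
      have hne : S ≠ T := fun h => v2 (h ▸ hvT)
      have dA := (copencil_inf dU dS (H.dim T t1) hSU t3 hne).1
      refine ⟨S ⊓ T, le_inf hE (le_sup_left.trans t2), inf_le_left, dA, ?_⟩
      exact H.full _ U (inf_le_left.trans hSU) hU dA dU S T inf_le_left hSU inf_le_right t3 hPS t1 hne
    have dA0 := (copencil_inf dU dS s2 hSU s1 hne0).1
    set A0 := S ⊓ S0 with hA0
    have hA0S : A0 ≤ S := inf_le_left
    have k0U : k A0 U = 1 :=
      H.k1 A0 U (hA0S.trans hSU) hU dA0 dU S S0 hA0S hSU inf_le_right s1 hPS s2 s3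
    obtain ⟨E0, e1, e2⟩ := exists_sub S e (by omega)
    obtain ⟨A1, a1, a2, a3, a4⟩ := other E0 e1 e2
    have kA1 := H.kf A1 U (a2.trans hSU) hU a3 dU a4
    have hadd := fun A (hA : A ≤ S) dA => H.add A0 A U U' (hA0S.trans hSU) (hA.trans hSU)
      (hA0S.trans hSU') (hA.trans hSU') hU hU' dA0 dA dU dU'
    have k0U' : k A0 U' = 1 := by
      have := hadd A1 a2 a3
      rw [k0U, kA1] at this
      rcases H.tri (hA0S.trans hSU') hU' dA0 dU' with ⟨c, -⟩ | ⟨-, -, c⟩ | ⟨-, c⟩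
      · exact absurd hPS (c S hA0S hSU')
      · exact c
      · rcases H.tri (a2.trans hSU') hU' a3 dU' with ⟨-, d⟩ | ⟨-, -, d⟩ | ⟨-, d⟩ <;>
        · rw [c, d] at this; linarith
    right
    constructor
    · intro A' hA' dA'
      by_cases hAS : A' ≤ S
      · exact ⟨S, hPS, hAS, hSU'⟩
      have dE := cut dA' dS dU' hA' hSU' hAS
      obtain ⟨A, b1, b2, b3, b4⟩ := other _ inf_le_right dE
      have kA := H.kf A U (b2.trans hSU) hU b3 dU b4
      have := hadd A b2 b3
      rw [k0U, kA, k0U'] at this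
      apply H.thru b3 dA' dE b1 inf_le_left (fun h => hAS (h ▸ b2)) (b2.trans hSU') hA'
      rcases H.tri (b2.trans hSU') hU' b3 dU' with ⟨-, d⟩ | ⟨-, -, d⟩ | ⟨d, -⟩
      · rw [d] at this; linarith
      · rw [d] at this; linarith
      · exact d
    · rcases H.tri (hA0S.trans hSU') hU' dA0 dU' with ⟨-, c⟩ | ⟨-, ⟨T, t1, t2, t3, t4⟩, c⟩ | ⟨-, c⟩
      · rw [k0U'] at c; linarith
      · exact ⟨T, t2, t3, t4⟩
      · rw [k0U'] at c; linarith
  · -- case S ∉ P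
    have hconst : ∃ κ, ∀ A ≤ S, finrank F A = e + 1 → k A U = κ := by
      rcases h with h | h
      · exact ⟨0, fun A hA dA => H.k0 A U (hA.trans hSU) hU dA dU (fun T _ h2 => h T h2)⟩
      · refine ⟨1, fun A hA dA => ?_⟩
        obtain ⟨T, t1, t2, t3⟩ := h.1 A (hA.trans hSU) dA
        exact H.k1 A U (hA.trans hSU) hU dA dU T S t2 t3 hA hSU t1 dS hPS
    obtain ⟨κ, hκ⟩ := hconst
    have heq : ∀ A ≤ S, finrank F A = e + 1 → ∀ A2 ≤ S, finrank F A2 = e + 1 → k A U' = k A2 U' := by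
      intro A hA dA A2 hA2 dA2
      have := H.add A A2 U U' (hA.trans hSU) (hA2.trans hSU) (hA.trans hSU') (hA2.trans hSU')
        hU hU' dA dA2 dU dU'
      rw [hκ A hA dA, hκ A2 hA2 dA2] at this
      linarith
    have htri : ∀ A ≤ S, finrank F A = e + 1 →
        ((∀ T, A ≤ T → T ≤ U' → ¬ P T) ∧ k A U' = 0) ∨
        ((∃ T, A ≤ T ∧ T ≤ U' ∧ P T) ∧ k A U' = 1) := by
      intro A hA dA
      rcases H.tri (hA.trans hSU') hU' dA dU' with c | ⟨a, b, c⟩ | ⟨c, -⟩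
      · exact Or.inl c
      · exact Or.inr ⟨a, c⟩
      · exact absurd (c S hA hSU' dS) hPS
    by_cases hex : ∃ A ≤ S, finrank F A = e + 1 ∧ k A U' = 1
    · right
      refine ⟨?_, S, hSU', dS, hPS⟩
      obtain ⟨A0, z1, z2, z3⟩ := hex
      have hall : ∀ A ≤ S, finrank F A = e + 1 → ∃ T, A ≤ T ∧ T ≤ U' ∧ P T := by
        intro A hA dA
        rcases htri A hA dA with ⟨-, c⟩ | ⟨c, -⟩
        · rw [heq A hA dA A0 z1 z2, z3] at c; norm_num at c
        · exact c
      intro A' hA' dA'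
      by_cases hAS : A' ≤ S
      · obtain ⟨T, t1, t2, t3⟩ := hall A' hAS dA'
        exact ⟨T, t3, t1, t2⟩
      have dE := cut dA' dS dU' hA' hSU' hAS
      set E := A' ⊓ S with hE
      have hES : E ≤ S := inf_le_right
      obtain ⟨v, v1, v2⟩ := exists_mem_not (W := E) (U := S) (by omega)
      have d1 : finrank F ↥(E ⊔ Submodule.span F {v}) = e + 1 := by rw [finrank_sup_span v2, dE]
      have l1 : E ⊔ Submodule.span F {v} ≤ S :=
        sup_le hES ((Submodule.span_singleton_le_iff_mem _ _).2 v1)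
      obtain ⟨w, w1, w2⟩ := exists_mem_not (W := E ⊔ Submodule.span F {v}) (U := S) (by omega)
      have w3 : w ∉ E := fun h => w2 (le_sup_left (α := Submodule F V) h)
      have d2 : finrank F ↥(E ⊔ Submodule.span F {w}) = e + 1 := by rw [finrank_sup_span w3, dE]
      have l2 : E ⊔ Submodule.span F {w} ≤ S :=
        sup_le hES ((Submodule.span_singleton_le_iff_mem _ _).2 w1)
      have hne : E ⊔ Submodule.span F {v} ≠ E ⊔ Submodule.span F {w} := by
        intro h
        apply w2
        rw [h]
        exact le_sup_right (α := Submodule F V) (Submodule.mem_span_singleton_self w)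
      obtain ⟨S1, p1, p2, p3⟩ := hall _ l1 d1
      obtain ⟨S2, r1, r2, r3⟩ := hall _ l2 d2
      have hS12 : S1 ≠ S2 := by
        rintro rfl
        have h1 := pencil_sup dE d1 d2 le_sup_left le_sup_left hne
        have h2 := Submodule.eq_of_le_of_finrank_eq (sup_le l1 l2) (by rw [h1, dS])
        have h3 := Submodule.eq_of_le_of_finrank_eq (sup_le p1 r1) (by rw [h1, H.dim _ p3])
        exact hPS (by rw [← h2, h3]; exact p3)
      have dA3 := (copencil_inf dU' (H.dim _ p3) (H.dim _ r3) p2 r2 hS12).1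
      have full3 := H.full (S1 ⊓ S2) U' (inf_le_left.trans p2) hU' dA3 dU' S1 S2 inf_le_left p2
        inf_le_right r2 p3 r3 hS12
      by_cases hA3 : S1 ⊓ S2 = A'
      · exact ⟨S1, p3, hA3 ▸ inf_le_left, p2⟩
      · exact H.thru dA3 dA' dE (le_inf (le_sup_left.trans p1) (le_sup_left.trans r1)) inf_le_left hA3
          (inf_le_left.trans p2) hA' full3
    · left
      intro T hT hPT
      have hne : T ≠ S := fun h => hPS (h ▸ hPT)
      have dA := (copencil_inf dU' (H.dim T hPT) dS hT hSU' hne).1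
      rcases htri (T ⊓ S) inf_le_right dA with ⟨c, -⟩ | ⟨-, c⟩
      · exact c T inf_le_left hT hPT
      · exact hex ⟨_, inf_le_right, dA, c⟩

/-- two members -/
lemma two {U : Submodule F V} (hM : MixU e P U) (dU : finrank F U = e + 3) :
    ∃ S1 S2, P S1 ∧ P S2 ∧ S1 ≤ U ∧ S2 ≤ U ∧ S1 ≠ S2 := by
  obtain ⟨A, a1, a2⟩ := exists_sub U (e+1) (by omega)
  obtain ⟨T, t1, -, t3⟩ := hM.1 A a1 a2
  have dT := H.dim T t1
  obtain ⟨v, v1, v2⟩ := exists_mem_not (W := T) (U := U) (by omega)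
  obtain ⟨E, e1, e2⟩ := exists_sub T e (by omega)
  obtain ⟨T', s1, s2, s3⟩ := hM.1 (E ⊔ Submodule.span F {v})
    (sup_le (e1.trans t3) ((Submodule.span_singleton_le_iff_mem _ _).2 v1))
    (by rw [finrank_sup_span (fun h => v2 (e1 h)), e2])
  refine ⟨T, T', t1, s1, t3, s3, ?_⟩
  rintro rfl
  exact v2 (s2 (le_sup_right (α := Submodule F V) (Submodule.mem_span_singleton_self v)))

omit H in
/-- the trace of `S'^⊥` on `U` is at most one-dimensional -/
lemma trace1 {n : ℕ} (hS : Symp B n) {U U' S' : Submodule F V} (ho : SpaceOpp B U' U)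
    (hS' : S' ≤ U') {d : ℕ} (h1 : finrank F S' = d) (h2 : finrank F U' = d + 1) {v w : V} (hv : v ∈ U) (hw : w ∈ U)
    (hv' : v ∈ bperp B S') (hw' : w ∈ bperp B S') (hw0 : w ≠ 0) : v ∈ Submodule.span F {w} := by
  obtain ⟨u, u1, u2⟩ := exists_mem_not (W := S') (U := U') (by omega)
  have hU' : S' ⊔ Submodule.span F {u} = U' := by
    apply Submodule.eq_of_le_of_finrank_eq
      (sup_le hS' ((Submodule.span_singleton_le_iff_mem _ _).2 u1))
    rw [finrank_sup_span u2, h1, h2]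
  rw [spaceOpp_iff] at ho
  have key : ∀ x ∈ U, x ∈ bperp B S' → B u x = 0 → x = 0 := by
    intro x hx hx' hb
    apply ho x hx
    intro y hy
    rw [← hU'] at hy
    obtain ⟨s, hs, a, rfl⟩ := mem_sup_span.1 hy
    simp [mem_bperp.1 hx' s hs, hb]
  have hbw : B u w ≠ 0 := fun h => hw0 (key w hw hw' h)
  rw [Submodule.mem_span_singleton]
  refine ⟨B u v / B u w, ?_⟩
  have h3 := key (v - (B u v / B u w) • w) (Submodule.sub_mem _ hv (Submodule.smul_mem _ _ hw))
    (Submodule.sub_mem _ hv' (Submodule.smul_mem _ _ hw')) (by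
      rw [map_sub, map_smul, smul_eq_mul, div_mul_cancel₀ _ hbw, sub_self])
  exact (sub_eq_zero.1 h3).symm

lemma ekr {n : ℕ} (hS : Symp B n) {U U' : Submodule F V}
    (dU : finrank F U = e + 3) (dU' : finrank F U' = e + 3)
    (hP : ∀ T T', P T → P T' → ¬ SpaceOpp B T T') (hM : MixU e P U) (hM' : MixU e P U') :
    ¬ SpaceOpp B U' U := by
  intro ho
  obtain ⟨S1, S2, p1, p2, l1, l2, hne⟩ := H.two hM' dU'
  have pt : ∀ S', P S' → S' ≤ U' → ∃ x ∈ U, x ≠ 0 ∧ x ∈ bperp B S' ∧ ∀ T, P T → T ≤ U → x ∈ T := by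
    intro S' hS' hle
    have ex : ∀ T, P T → ∃ v ∈ T, v ∈ bperp B S' ∧ v ≠ 0 := by
      intro T hT
      have := hP S' T hS' hT
      rw [SpaceOpp] at this
      obtain ⟨v, v1, v2⟩ := Submodule.exists_mem_ne_zero_of_ne_bot this
      exact ⟨v, v1.2, v1.1, v2⟩
    obtain ⟨T0, -, t0, -, t1, -, -⟩ := H.two hM dU
    obtain ⟨x, x1, x2, x3⟩ := ex T0 t0
    refine ⟨x, t1 x1, x3, x2, fun T hT hTU => ?_⟩
    obtain ⟨v, v1, v2, v3⟩ := ex T hT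
    have := trace1 hS ho hle (H.dim S' hS') dU' (t1 x1) (hTU v1) x2 v2 v3
    exact (Submodule.span_singleton_le_iff_mem _ _).2 v1 this
  obtain ⟨x1, a1, a2, a3, a4⟩ := pt S1 p1 l1
  obtain ⟨x2, b1, b2, b3, b4⟩ := pt S2 p2 l2
  have hx : x2 ∉ Submodule.span F {x1} := by
    intro h
    obtain ⟨a, rfl⟩ := Submodule.mem_span_singleton.1 h
    apply b2
    apply spaceOpp_iff.1 ho _ b1
    intro w hw
    have hU' := (copencil_inf dU' (H.dim _ p1) (H.dim _ p2) l1 l2 hne).2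
    rw [← hU'] at hw
    obtain ⟨y, hy, z, hz, rfl⟩ := Submodule.mem_sup.1 hw
    rw [map_add, LinearMap.add_apply, mem_bperp.1 b3 z hz, map_smul, mem_bperp.1 a3 y hy]
    simp
  set X := Submodule.span F {x1} ⊔ Submodule.span F {x2} with hX
  have dX : finrank F X = 2 := by
    rw [hX, finrank_sup_span hx, finrank_span_singleton a2]
  have hXU : X ≤ U := sup_le ((Submodule.span_singleton_le_iff_mem _ _).2 a1)
    ((Submodule.span_singleton_le_iff_mem _ _).2 b1)
  obtain ⟨W, hW⟩ := exists_isCompl X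
  have hsup : X ⊔ W ⊓ U = U := by
    rw [← sup_inf_assoc_of_le W hXU, hW.sup_eq_top, top_inf_eq]
  have hinf : X ⊓ (W ⊓ U) = ⊥ := by
    rw [← inf_assoc, hW.inf_eq_bot, bot_inf_eq]
  have hd := Submodule.finrank_sup_add_finrank_inf_eq X (W ⊓ U)
  rw [hsup, hinf, finrank_bot, dX, dU] at hd
  obtain ⟨T, t1, t2, t3⟩ := hM.1 (W ⊓ U) inf_le_right (by omega)
  have hUT : U ≤ T := by
    rw [← hsup]
    exact sup_le (sup_le ((Submodule.span_singleton_le_iff_mem _ _).2 (a4 T t1 t3))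
      ((Submodule.span_singleton_le_iff_mem _ _).2 (b4 T t1 t3))) t2
  have := Submodule.finrank_mono hUT
  rw [H.dim T t1] at this
  omega

end KK
end Excl


section Excl2
set_option linter.unusedSectionVars false
variable {F V : Type} [Field F] [AddCommGroup V] [Module F V]
variable {B : V →ₗ[F] V →ₗ[F] F} {n : ℕ}

namespace Symp
section A
variable (hS : Symp B n)
include hS

lemma exists_ext {J : Finset ℕ} (hJ : J ⊆ Finset.Icc 1 n) (Fl : SFlag B J) :
    ∃ C : Ch B n, ∀ j ∈ J, C.space j = Fl.space j := by
  have := hS.fd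
  obtain ⟨D, hD⟩ := SFlag.build (B := B) (n := n)
    (fun k M => ∀ j ∈ J, (j ≤ k → Fl.space j ≤ M) ∧ (k ≤ j → M ≤ Fl.space j))
    (by
      intro j hj
      have := (Finset.mem_Icc.1 (hJ hj)).1
      exact ⟨fun h => by omega, fun _ => bot_le⟩)
    (by
      intro k hk M hM hMi hMd
      by_cases hex : ∃ j ∈ J, k < j
      · obtain ⟨j, ⟨hj, hkj⟩, hmin⟩ : ∃ j, (j ∈ J ∧ k < j) ∧ ∀ j' ∈ J, k < j' → j ≤ j' := by
          refine ⟨Nat.find hex, Nat.find_spec hex, fun j' h1 h2 => Nat.find_min' hex ⟨h1, h2⟩⟩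
        have dj := Fl.finrank_eq j hj
        have hle := (hM j hj).2 hkj.le
        obtain ⟨v, v1, v2⟩ := exists_mem_not (W := M) (U := Fl.space j) (by omega)
        have hd : finrank F ↥(M ⊔ Submodule.span F {v}) = k + 1 := by rw [finrank_sup_span v2, hMd]
        have hle' : M ⊔ Submodule.span F {v} ≤ Fl.space j :=
          sup_le hle ((Submodule.span_singleton_le_iff_mem _ _).2 v1)
        refine ⟨M ⊔ Submodule.span F {v}, le_sup_left, hS.iso_le (Fl.isotropic j hj) hle', hd, ?_⟩
        intro j' hj'
        constructor
        · intro h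
          rcases Nat.lt_or_ge k j' with h' | h'
          · have := hmin j' hj' h'
            have e : j' = j := by omega
            subst e
            rw [Submodule.eq_of_le_of_finrank_eq hle' (by omega)]
          · exact ((hM j' hj').1 h').trans le_sup_left
        · intro h
          exact hle'.trans (Fl.mono j hj j' hj' (hmin j' hj' (by omega)))
      · push Not at hex
        have hbp := hS.finrank_bperp M
        obtain ⟨v, v1, v2⟩ := exists_mem_not (W := M) (U := bperp B M) (by omega)
        refine ⟨M ⊔ Submodule.span F {v}, le_sup_left, hS.iso_sup_span hMi v1,
          by rw [finrank_sup_span v2, hMd], ?_⟩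
        intro j hj
        have := hex j hj
        exact ⟨fun _ => ((hM j hj).1 this).trans le_sup_left, fun h => by omega⟩)
  refine ⟨D, fun j hj => ?_⟩
  have hjn := (Finset.mem_Icc.1 (hJ hj)).2
  exact le_antisymm ((hD j hjn j hj).2 le_rfl) ((hD j hjn j hj).1 le_rfl)

lemma ch_through2 {a b : ℕ} (ha : 1 ≤ a) (hab : a < b) (hb : b ≤ n) {A U : Submodule F V}
    (hA : finrank F A = a) (hU : finrank F U = b) (h : A ≤ U) (hi : IsTotIso B U) :
    ∃ C : Ch B n, C.space a = A ∧ C.space b = U := by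
  have e1 : (if a = a then A else if a = b then U else ⊥) = A := if_pos rfl
  have e2 : (if b = a then A else if b = b then U else ⊥) = U := by
    rw [if_neg (by omega), if_pos rfl]
  let Fl : SFlag B ({a, b} : Finset ℕ) :=
    { space := fun k => if k = a then A else if k = b then U else ⊥
      isotropic := by
        intro i hi'
        rcases Finset.mem_insert.1 hi' with rfl | h'
        · rw [e1]; exact hS.iso_le hi h
        · rw [Finset.mem_singleton] at h'; subst h'
          rw [e2]; exact hi
      finrank_eq := by
        intro i hi'
        rcases Finset.mem_insert.1 hi' with rfl | h'
        · rw [e1]; exact hA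
        · rw [Finset.mem_singleton] at h'; subst h'
          rw [e2]; exact hU
      mono := by
        intro i hi j hj hij
        rw [Finset.mem_insert, Finset.mem_singleton] at hi hj
        rcases hi with rfl | rfl <;> rcases hj with rfl | rfl
        · rw [e1]
        · rw [e1, e2]; exact h
        · omega
        · rw [e2]
      eq_bot := by
        intro i hi
        rw [Finset.mem_insert, Finset.mem_singleton, not_or] at hi
        rw [if_neg hi.1, if_neg hi.2] }
  obtain ⟨C, hC⟩ := hS.exists_ext (J := {a, b}) (by
    intro x hx
    rw [Finset.mem_insert, Finset.mem_singleton] at hx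
    rw [Finset.mem_Icc]; omega) Fl
  refine ⟨C, ?_, ?_⟩
  · rw [hC a (by simp)]; exact e1
  · rw [hC b (by simp)]; exact e2
end A

section Bsec
variable (hS : Symp B n) [Fintype (Ch B n)] [Fintype F] (hq : 4 ≤ Fintype.card F)
variable {S : Finset (Ch B n)}

/-- panel counts -/
noncomputable def gg (S : Finset (Ch B n)) (i : ℕ) : Ch B n → ℝ := (relM (Adj i)).mulVec (ind S)

lemma gg_eq (i : ℕ) (C : Ch B n) :
    gg S i C = ((Finset.univ.filter fun D => Adj i C D ∧ D ∈ S).card : ℝ) := by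
  rw [gg, relM_mulVec]
  simp only [ind, Finset.sum_boole, Finset.filter_filter]

include hS hq

lemma gg_A (hA : (Ad (sgen B n) (n-1)).mulVec (ind S) =
      ((Fintype.card F : ℝ))^(n*(n-1)) • (1 - ind S)) {i : ℕ} (h1 : 1 ≤ i) (hin : i ≤ n) :
    (Ad (sgen B n) (n-1)).mulVec (gg S i) =
      ((Fintype.card F : ℝ))^(n*(n-1)) • (((Fintype.card F : ℝ) + 1) • 1 - gg S i) := by
  have hc := (hS.hecke hq).A_comm (n-i) (by omega)
  rw [sgen, show n - (n - i) = i by omega] at hc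
  have hc2 : Ad (sgen B n) (n-1) * relM (Adj i) = relM (Adj i) * Ad (sgen B n) (n-1) := by
    rw [e_eq, mul_add, add_mul, hc, mul_one, one_mul]
  rw [gg, Matrix.mulVec_mulVec, hc2, ← Matrix.mulVec_mulVec, hA, Matrix.mulVec_smul,
    Matrix.mulVec_sub, hS.e_row h1 hin]

lemma panel_full (hA : (Ad (sgen B n) (n-1)).mulVec (ind S) =
      ((Fintype.card F : ℝ))^(n*(n-1)) • (1 - ind S)) {i : ℕ} (h1 : 1 ≤ i) (hin : i < n)
    (hno : ∀ C ∈ S, ∀ C' ∈ S, ¬ SpaceOpp B (C.space i) (C'.space i))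
    {C D : Ch B n} (hC : C ∈ S) (hD : D ∈ S) (hCD : Ad1 i C D) :
    ∀ E, Adj i C E → E ∈ S := by
  have := hS.fd
  have hz : ∀ E, FlagOpp C E → gg S i E = 0 := by
    intro E hE
    rw [gg_eq, Nat.cast_eq_zero, Finset.card_eq_zero, Finset.filter_eq_empty_iff]
    rintro E' - ⟨hEE', hE'⟩
    have hop := hS.opp_iff.1 (hS.flagOpp_symm hE)
    obtain ⟨v, v1, v2⟩ := Submodule.exists_mem_ne_zero_of_ne_bot (hno E' hE' C hC)
    obtain ⟨w, w1, w2⟩ := Submodule.exists_mem_ne_zero_of_ne_bot (hno E' hE' D hD)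
    have hU : D.space (i+1) = C.space (i+1) := (hCD.2 _ (by omega)).symm
    have hvw := KK.trace1 (B := B) (U := C.space (i+1)) (U' := E.space (i+1)) (S' := E'.space i) hS
      (hop (i+1) (by omega)) (by rw [hEE' _ (by omega)]; exact E'.le (by omega) (by omega))
      (E'.fr (by omega)) (E.fr (by omega)) (C.le (by omega) (by omega) v1.2)
      (hU ▸ D.le (by omega) (by omega) w1.2) v1.1 w1.1 w2
    have hv : v ∈ C.space (i-1) := by
      rw [← hS.Ad1_inf h1 hin.le hCD]
      exact ⟨v1.2, (Submodule.span_singleton_le_iff_mem _ _).2 w1.2 hvw⟩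
    apply v2
    apply spaceOpp_iff.1 (hop (i-1) (by omega)) v hv
    apply mem_bperp.1
    rw [hEE' (i-1) (by omega)]
    exact bperp_anti (E'.le (by omega) hin.le) v1.1
  have h2 := hS.A_at hq C (gg S i) 0 hz
  rw [hS.gg_A hq hA h1 hin.le, mul_zero] at h2
  simp only [Pi.smul_apply, Pi.sub_apply, Pi.one_apply, smul_eq_mul, mul_one] at h2
  have hm : ((Fintype.card F : ℝ))^(n*(n-1)) ≠ 0 := by
    have : (Fintype.card F : ℝ) ≠ 0 := by
      have : Fintype.card F ≠ 0 := by omega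
      exact_mod_cast this
    exact pow_ne_zero _ this
  have h3 := (mul_eq_zero.1 h2).resolve_left hm
  rw [gg_eq, sub_eq_zero] at h3
  have h4 : (Finset.univ.filter fun D => Adj i C D).card =
      (Finset.univ.filter fun D => Adj i C D ∧ D ∈ S).card := by
    rw [hS.card_panel' C h1 hin.le]; exact_mod_cast h3
  have h5 := Finset.eq_of_subset_of_card_le
    (s := Finset.univ.filter fun D => Adj i C D ∧ D ∈ S) (t := Finset.univ.filter fun D => Adj i C D)
    (fun D hD => by
      simp only [Finset.mem_filter, Finset.mem_univ, true_and] at hD ⊢; exact hD.1) h4.le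
  intro E hE
  have : E ∈ Finset.univ.filter fun D => Adj i C D := by simpa using hE
  rw [← h5] at this
  simp only [Finset.mem_filter] at this
  exact this.2.2

/-- additivity of panel counts -/
lemma gg_add (hA : (Ad (sgen B n) (n-1)).mulVec (ind S) =
      ((Fintype.card F : ℝ))^(n*(n-1)) • (1 - ind S)) {i : ℕ} (h1 : 1 < i) (hin : i < n)
    (hg : ∀ C D : Ch B n, C.space (i-1) = D.space (i-1) → C.space (i+1) = D.space (i+1) →
      gg S i C = gg S i D)
    {C11 C12 C21 C22 : Ch B n} (a1 : C11.space (i-1) = C12.space (i-1))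
    (a2 : C21.space (i-1) = C22.space (i-1)) (b1 : C11.space (i+1) = C21.space (i+1))
    (b2 : C12.space (i+1) = C22.space (i+1)) :
    gg S i C11 + gg S i C22 = gg S i C21 + gg S i C12 := by
  set q : ℝ := (Fintype.card F : ℝ) with hqd
  have hqp : 0 < q := by
    have : 0 < Fintype.card F := by omega
    rw [hqd]; exact_mod_cast this
  set c : ℝ := (q + 1) * (1/(q^n+1)) with hc
  set y : Ch B n → ℝ := gg S i - c • 1 with hy
  by_cases hy0 : y = 0
  · have : ∀ C, gg S i C = c := by
      intro C
      have := congrFun hy0 C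
      simp only [hy, Pi.sub_apply, Pi.smul_apply, Pi.one_apply, smul_eq_mul, mul_one, Pi.zero_apply] at this
      linarith
    simp only [this]
  have hm : 0 < q^(n*(n-1)) := by positivity
  have hk : q^(n^2) = q^(n*(n-1)) * q^n := by
    rw [← pow_add]
    congr 1
    obtain ⟨m, rfl⟩ : ∃ m, n = m + 1 := ⟨n-1, by omega⟩
    simp; ring
  have hAy : (Ad (sgen B n) (n-1)).mulVec y = (-q^(n*(n-1))) • y := by
    rw [hy, Matrix.mulVec_sub, hS.gg_A hq hA h1.le hin.le, Matrix.mulVec_smul, (hS.hecke hq).A_row,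
      ← hqd, hk]
    ext C
    simp only [Pi.smul_apply, Pi.sub_apply, Pi.one_apply, smul_eq_mul, mul_one, hc]
    have : q^n + 1 ≠ 0 := by positivity
    field_simp
    ring
  obtain ⟨w, w1, w2, w3⟩ := ((hS.hecke hq).eig_aux (-q^(n*(n-1)))
    (by have : 0 < q^(n^2) := by positivity
        intro h; rw [← h] at this; linarith) y hy0 hAy).2 (by rw [abs_neg, abs_of_pos hm])
  have cst := fun a (ha : a < n) => hS.eigW_const hq ha (w3 a ha)
  have hgy : ∀ C, gg S i C = c + ∑ a ∈ Finset.range n, w a C := by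
    intro C
    have := congrFun w1 C
    simp only [hy, Pi.sub_apply, Pi.smul_apply, Pi.one_apply, smul_eq_mul, mul_one,
      Finset.sum_apply] at this
    linarith
  have key : ∀ a ∈ Finset.range n, w a C11 + w a C22 = w a C21 + w a C12 := by
    intro a ha
    have ha := Finset.mem_range.1 ha
    by_cases h2 : n - a = i - 1
    · rw [hS.conn_res hq (w a) (n-a) (by omega) (by omega) (cst a ha) C11 C12 (by rw [h2, a1]),
        hS.conn_res hq (w a) (n-a) (by omega) (by omega) (cst a ha) C21 C22 (by rw [h2, a2])]
      ring
    by_cases h3 : n - a = i + 1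
    · rw [hS.conn_res hq (w a) (n-a) (by omega) (by omega) (cst a ha) C11 C21 (by rw [h3, b1]),
        hS.conn_res hq (w a) (n-a) (by omega) (by omega) (cst a ha) C12 C22 (by rw [h3, b2])]
    have hall : ∀ C D, w a C = w a D := by
      apply hS.conn_all hq
      intro k k1 k2 X Y hXY
      by_cases hka : k = n - a
      · have e : gg S i X = gg S i Y := hg X Y (hXY _ (by omega)) (hXY _ (by omega))
        rw [hgy, hgy, ← Finset.add_sum_erase _ _ (Finset.mem_range.2 ha),
          ← Finset.add_sum_erase _ _ (Finset.mem_range.2 ha)] at e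
        have : ∑ l ∈ (Finset.range n).erase a, w l X = ∑ l ∈ (Finset.range n).erase a, w l Y := by
          apply Finset.sum_congr rfl
          intro l hl
          have hl' := Finset.mem_erase.1 hl
          have hl2 := Finset.mem_range.1 hl'.2
          exact cst l hl2 k k1 k2 (by omega) X Y hXY
        linarith
      · exact cst a ha k k1 k2 hka X Y hXY
    rw [hall C11 C21, hall C22 C12]
  have hsum := Finset.sum_congr rfl key
  rw [Finset.sum_add_distrib, Finset.sum_add_distrib] at hsum
  rw [hgy, hgy, hgy, hgy]
  linarith

end Bsec
end Symp
end Excl2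


section Excl3
set_option linter.unusedSectionVars false
variable {F V : Type} [Field F] [AddCommGroup V] [Module F V]
variable {B : V →ₗ[F] V →ₗ[F] F} {n : ℕ}

namespace Symp

def PS (S : Finset (Ch B n)) (i : ℕ) (T : Submodule F V) : Prop := ∃ C ∈ S, C.space i = T
noncomputable def kS (S : Finset (Ch B n)) (i : ℕ) (A U : Submodule F V) : ℝ :=
  (Set.ncard {T | A ≤ T ∧ T ≤ U ∧ PS S i T} : ℝ)

section Bsec
variable (hS : Symp B n) [Fintype (Ch B n)] [Fintype F]
variable {S : Finset (Ch B n)}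

/-- iterated panel sums -/
noncomputable def eS : ℕ → (Ch B n → ℝ) → Ch B n → ℝ
  | 0, h => h
  | m+1, h => eS m ((relM (Adj (m+1))).mulVec h)

include hS

lemma gg_k {i : ℕ} (h1 : 1 ≤ i) (hin : i < n)
    (hst : ∀ C ∈ S, ∀ D : Ch B n, D.space i = C.space i → D ∈ S) (C : Ch B n) :
    gg S i C = kS S i (C.space (i-1)) (C.space (i+1)) := by
  rw [gg_eq, kS, Nat.cast_inj]
  have : {T | C.space (i-1) ≤ T ∧ T ≤ C.space (i+1) ∧ PS S i T} =
      (fun D : Ch B n => D.space i) '' (↑(Finset.univ.filter fun D => Adj i C D ∧ D ∈ S) : Set (Ch B n)) := by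
    ext T
    simp only [Set.mem_setOf_eq, Finset.coe_filter, Finset.mem_univ, true_and, Set.mem_image]
    constructor
    · rintro ⟨a, b, D, d1, rfl⟩
      obtain ⟨E, e1, e2⟩ := hS.exists_upd C h1 hin.le a (by rw [topC, if_pos hin]; exact b)
        (D.fr hin.le)
      exact ⟨E, ⟨e1, hst D d1 E e2⟩, e2⟩
    · rintro ⟨D, ⟨d1, d2⟩, rfl⟩
      refine ⟨?_, ?_, D, d2, rfl⟩
      · rw [d1 _ (by omega)]; exact D.le (by omega) hin.le
      · rw [d1 _ (by omega)]; exact D.le (by omega) (by omega)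
  rw [this, Set.ncard_image_of_injOn, Set.ncard_coe_finset]
  intro D hD D' hD' h
  simp only [Finset.coe_filter, Finset.mem_univ, true_and, Set.mem_setOf_eq] at hD hD'
  exact (hD.1.symm.trans hD'.1).eq h

omit hS in
lemma e_nonneg {h : Ch B n → ℝ} (h0 : ∀ C, 0 ≤ h C) (i : ℕ) (C : Ch B n) :
    0 ≤ (relM (Adj i)).mulVec h C := by
  rw [relM_mulVec]; exact Finset.sum_nonneg fun _ _ => h0 _

lemma eS_reach : ∀ m < n, ∀ h : Ch B n → ℝ, (∀ C, 0 ≤ h C) → ∀ (C : Ch B n) (T : Submodule F V),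
    T ≤ C.space (m+1) → finrank F T = m →
    (∀ Y : Ch B n, Y.space m = T → (∀ j, m < j → Y.space j = C.space j) → 1 ≤ h Y) →
    1 ≤ eS m h C := by
  have := hS.fd
  intro m
  induction m with
  | zero =>
    intro _ h h0 C T hT hd hY
    exact hY C (by rw [C.zero, Submodule.finrank_eq_zero.1 hd]) (fun _ _ => rfl)
  | succ m ih =>
    intro hm h h0 C T hT hd hY
    obtain ⟨L, hL1, hL2, hLd⟩ : ∃ L, L ≤ C.space (m+1) ∧ L ≤ T ∧ finrank F L = m := by
      by_cases h : T = C.space (m+1)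
      · exact ⟨C.space m, C.le (by omega) (by omega), h ▸ C.le (by omega) (by omega), C.fr (by omega)⟩
      · refine ⟨T ⊓ C.space (m+1), inf_le_right, inf_le_left, ?_⟩
        exact (copencil_inf (C.fr (i := m+2) (by omega)) hd (C.fr (by omega)) hT
          (C.le (by omega) (by omega)) h).1
    apply ih (by omega) _ (e_nonneg h0 (m+1)) C L hL1 hLd
    intro Y y1 y2
    obtain ⟨Z, z1, z2⟩ := hS.exists_upd Y (i := m+1) (by omega) (by omega) (S := T)
      (by rw [Nat.add_sub_cancel, y1]; exact hL2)
      (by rw [topC, if_pos hm, y2 _ (by omega)]; exact hT) hd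
    rw [relM_mulVec]
    refine (hY Z z2 (fun j hj => by rw [← z1 j (by omega), y2 j (by omega)])).trans ?_
    exact Finset.single_le_sum (f := h) (fun _ _ => h0 _) (by simpa using z1)

lemma e_sum {i : ℕ} (h1 : 1 ≤ i) (hin : i ≤ n) (h : Ch B n → ℝ) :
    ∑ C, (relM (Adj i)).mulVec h C = ((Fintype.card F : ℝ) + 1) * ∑ C, h C := by
  simp only [relM_mulVec, Finset.sum_filter]
  rw [Finset.sum_comm, Finset.mul_sum]
  apply Finset.sum_congr rfl
  intro D _
  have hc := hS.card_panel' D h1 hin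
  rw [← Finset.sum_filter, Finset.sum_const]
  have : (Finset.univ.filter fun C => Adj i C D) = Finset.univ.filter fun C => Adj i D C := by
    ext X; simp only [Finset.mem_filter, Finset.mem_univ, true_and]
    exact ⟨Adj.symm, Adj.symm⟩
  rw [this, hc]
  simp

lemma eS_sum : ∀ m ≤ n, ∀ h : Ch B n → ℝ,
    ∑ C, eS m h C = ((Fintype.card F : ℝ) + 1)^m * ∑ C, h C := by
  intro m
  induction m with
  | zero => intro _ h; simp [eS]
  | succ m ih =>
    intro hm h
    rw [eS, ih (by omega), hS.e_sum (by omega) hm]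
    ring

lemma exists_empty (hc : (S.card : ℝ) * ((Fintype.card F : ℝ)^n + 1) = Fintype.card (Ch B n))
    (hne : S.Nonempty) {i : ℕ} (h1 : 1 ≤ i) (hin : i < n)
    (hst : ∀ C ∈ S, ∀ D : Ch B n, D.space i = C.space i → D ∈ S)
    (hpow : ((Fintype.card F : ℝ)+1)^i < (Fintype.card F : ℝ)^n + 1) :
    ∃ C : Ch B n, EmptyU (PS S i) (C.space (i+1)) := by
  by_contra hcon
  have hone : ∀ C : Ch B n, 1 ≤ eS i (ind S) C := by
    intro C
    have : ∃ T, T ≤ C.space (i+1) ∧ PS S i T := by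
      by_contra h; exact hcon ⟨C, fun T hT hP => h ⟨T, hT, hP⟩⟩
    obtain ⟨T, t1, D, d1, rfl⟩ := this
    refine hS.eS_reach i hin (ind S) (fun C => by unfold ind; split_ifs <;> norm_num) C (D.space i) t1
      (D.fr hin.le) ?_
    intro Y y1 _
    rw [ind, if_pos (hst D d1 Y y1)]
  have hs := hS.eS_sum i hin.le (ind S)
  have h2 : (Fintype.card (Ch B n) : ℝ) ≤ ∑ C, eS i (ind S) C := by
    calc (Fintype.card (Ch B n) : ℝ) = ∑ C : Ch B n, (1:ℝ) := by simp
      _ ≤ _ := Finset.sum_le_sum fun C _ => hone C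
  have h3 : ∑ C, ind S C = (S.card : ℝ) := by simp [ind]
  rw [hs, h3, ← hc] at h2
  have : (0:ℝ) < S.card := by exact_mod_cast hne.card_pos
  nlinarith

variable (hq : 4 ≤ Fintype.card F)
include hq

lemma mkKK (hA : (Ad (sgen B n) (n-1)).mulVec (ind S) =
      ((Fintype.card F : ℝ))^(n*(n-1)) • (1 - ind S)) {e : ℕ} (he : e + 2 < n)
    (hno : ∀ C ∈ S, ∀ C' ∈ S, ¬ SpaceOpp B (C.space (e+2)) (C'.space (e+2)))
    (hst : ∀ C ∈ S, ∀ D : Ch B n, D.space (e+2) = C.space (e+2) → D ∈ S) :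
    KK B e (PS S (e+2)) (kS S (e+2)) (Fintype.card F : ℝ) := by
  have := hS.fd
  have full : ∀ A U, A ≤ U → IsTotIso B U → finrank F A = e + 1 → finrank F U = e + 3 →
    ∀ T1 T2, A ≤ T1 → T1 ≤ U → A ≤ T2 → T2 ≤ U → PS S (e+2) T1 → PS S (e+2) T2 → T1 ≠ T2 →
    ∀ T, A ≤ T → T ≤ U → finrank F T = e + 2 → PS S (e+2) T := by
    intro A U hAU hU dA dU T1 T2 a1 b1 a2 b2 p1 p2 hne T a b d
    obtain ⟨C, c1, c2⟩ := hS.ch_through2 (by omega) (by omega) (by omega) dA dU hAU hU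
    have upd : ∀ T, A ≤ T → T ≤ U → finrank F T = e + 2 → ∃ D : Ch B n, Adj (e+2) C D ∧ D.space (e+2) = T := by
      intro T a b d
      exact hS.exists_upd C (by omega) he.le (by rw [show e+2-1 = e+1 by omega, c1]; exact a)
        (by rw [topC, if_pos he, c2]; exact b) d
    obtain ⟨X1, x1, x2⟩ := p1
    obtain ⟨X2, y1, y2⟩ := p2
    obtain ⟨D1, d1, d1'⟩ := upd T1 a1 b1 (x2 ▸ X1.fr he.le)
    obtain ⟨D2, d2, d2'⟩ := upd T2 a2 b2 (y2 ▸ X2.fr he.le)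
    obtain ⟨D, d3, d3'⟩ := upd T a b d
    exact ⟨D, hS.panel_full hq hA (by omega) he hno (hst X1 x1 D1 (by rw [d1', x2]))
      (hst X2 y1 D2 (by rw [d2', y2])) (Ad1.mk' (d1.symm.trans d2) (by rw [d1', d2']; exact hne)) D
      (d1.symm.trans d3), d3'⟩
  have dim : ∀ T, PS S (e+2) T → finrank F T = e + 2 := by
    rintro T ⟨C, -, rfl⟩; exact C.fr he.le
  refine ⟨?_, dim, full, ?_, ?_, ?_, ?_⟩
  · have : 1 < Fintype.card F := by omega
    exact_mod_cast this
  · intro A U _ _ _ _ h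
    rw [kS]
    have : {T | A ≤ T ∧ T ≤ U ∧ PS S (e+2) T} = ∅ := by
      ext T; simp only [Set.mem_setOf_eq, Set.mem_empty_iff_false, iff_false]
      rintro ⟨a, b, c⟩; exact h T a b c
    rw [this]; simp
  · intro A U hAU hU dA dU T1 T2 a1 b1 a2 b2 p1 d2 p2
    rw [kS]
    have : {T | A ≤ T ∧ T ≤ U ∧ PS S (e+2) T} = {T1} := by
      ext T; simp only [Set.mem_setOf_eq, Set.mem_singleton_iff]
      constructor
      · rintro ⟨a, b, c⟩
        by_contra hne
        exact p2 (full A U hAU hU dA dU T T1 a b a1 b1 c p1 hne T2 a2 b2 d2)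
      · rintro rfl; exact ⟨a1, b1, p1⟩
    rw [this]; simp
  · intro A U hAU hU dA dU h
    rw [kS]
    have h2 := card_interval (F := F) hAU (by omega)
    have : {T | A ≤ T ∧ T ≤ U ∧ PS S (e+2) T} = {T | A ≤ T ∧ T ≤ U ∧ finrank F T = finrank F A + 1} := by
      ext T; simp only [Set.mem_setOf_eq]
      constructor
      · rintro ⟨a, b, c⟩; exact ⟨a, b, by rw [dim T c, dA]⟩
      · rintro ⟨a, b, c⟩; exact ⟨a, b, h T a b (by rw [c, dA])⟩
    rw [this, ← Nat.card_coe_set_eq]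
    have h3 : Nat.card ↑{T | A ≤ T ∧ T ≤ U ∧ finrank F T = finrank F A + 1} = Fintype.card F + 1 := h2
    rw [h3]; push_cast; ring
  · intro A1 A2 U U' h1 h2 h3 h4 hU hU' d1 d2 d3 d4
    obtain ⟨C11, c11, c11'⟩ := hS.ch_through2 (by omega) (by omega) (by omega) d1 d3 h1 hU
    obtain ⟨C22, c22, c22'⟩ := hS.ch_through2 (by omega) (by omega) (by omega) d2 d4 h4 hU'
    obtain ⟨C21, c21, c21'⟩ := hS.ch_through2 (by omega) (by omega) (by omega) d2 d3 h2 hU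
    obtain ⟨C12, c12, c12'⟩ := hS.ch_through2 (by omega) (by omega) (by omega) d1 d4 h3 hU'
    have gk := hS.gg_k (i := e+2) (by omega) he hst
    simp only [show e+2-1 = e+1 by omega, show e+2+1 = e+3 by omega] at gk
    have := hS.gg_add hq hA (i := e+2) (by omega) he (C11 := C11) (C12 := C12) (C21 := C21) (C22 := C22)
      (by
        intro C D hC hD
        rw [gk, gk]
        simp only [show e+2-1 = e+1 by omega, show e+2+1 = e+3 by omega] at hC hD
        rw [hC, hD])
      (by rw [show e+2-1 = e+1 by omega, c11, c12]) (by rw [show e+2-1 = e+1 by omega, c21, c22])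
      (by rw [show e+2+1 = e+3 by omega, c11', c21']) (by rw [show e+2+1 = e+3 by omega, c12', c22'])
    rw [gk, gk, gk, gk, c11, c11', c22, c22', c21, c21', c12, c12'] at this
    exact this

lemma excl (hE : ∀ C ∈ S, ∀ D ∈ S, ¬ FlagOpp C D)
    (hc : (S.card : ℝ) * ((Fintype.card F : ℝ)^n + 1) = Fintype.card (Ch B n))
    (hne : S.Nonempty) {e : ℕ} (he : e + 2 < n)
    (hno : ∀ C ∈ S, ∀ C' ∈ S, ¬ SpaceOpp B (C.space (e+2)) (C'.space (e+2)))
    (hpow : ((Fintype.card F : ℝ)+1)^(e+2) < (Fintype.card F : ℝ)^n + 1) : False := by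
  have := hS.fd
  obtain ⟨hA, -⟩ := ((hS.hecke hq).hoffman S (hS.A_ekr hq hE)).2 hc hne
  have hst := hS.struct' hq hc he.le hno
  have H := hS.mkKK hq hA he hno hst
  obtain ⟨C0, hC0⟩ := hS.exists_empty hc hne (by omega) he hst hpow
  set P := PS S (e+2) with hP
  have hall : ∀ C : Ch B n, EmptyU P (C.space (e+3)) ∨ MixU e P (C.space (e+3)) := by
    let f : Ch B n → ℝ := fun C => if EmptyU P (C.space (e+3)) ∨ MixU e P (C.space (e+3)) then 1 else 0
    have hf : ∀ C D, f C = f D := by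
      apply hS.conn_all hq
      intro k k1 k2 X Y hXY
      by_cases hk : k = e + 3
      · subst hk
        have hxy : X.space (e+2) = Y.space (e+2) := hXY _ (by omega)
        have hiff : (EmptyU P (X.space (e+3)) ∨ MixU e P (X.space (e+3))) ↔
            (EmptyU P (Y.space (e+3)) ∨ MixU e P (Y.space (e+3))) := by
          constructor
          · exact H.clos (X.iso _) (Y.iso _) (X.fr he.le) (X.fr (by omega)) (Y.fr (by omega))
              (X.le (by omega) (by omega)) (hxy ▸ Y.le (by omega) (by omega))
          · exact H.clos (Y.iso _) (X.iso _) (Y.fr he.le) (Y.fr (by omega)) (X.fr (by omega))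
              (Y.le (by omega) (by omega)) (hxy ▸ X.le (by omega) (by omega))
        simp only [f, hiff]
      · simp only [f, hXY (e+3) (by omega)]
    intro C
    have h0 : f C0 = 1 := if_pos (Or.inl hC0)
    rw [hf C0 C] at h0
    by_contra hcon
    have : f C = 0 := if_neg hcon
    rw [this] at h0; norm_num at h0
  let S' : Finset (Ch B n) := Finset.univ.filter fun C => ¬ EmptyU P (C.space (e+3))
  have hmem : ∀ C, C ∈ S' ↔ ¬ EmptyU P (C.space (e+3)) := fun C => by simp [S']
  have hE' : ∀ C ∈ S', ∀ D ∈ S', ¬ FlagOpp C D := by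
    intro C hC D hD ho
    have m1 := (hall C).resolve_left ((hmem C).1 hC)
    have m2 := (hall D).resolve_left ((hmem D).1 hD)
    refine H.ekr hS (D.fr (by omega)) (C.fr (by omega)) ?_ m2 m1 (hS.opp_iff.1 ho (e+3) (by omega))
    rintro T T' ⟨X, x1, rfl⟩ ⟨Y, y1, rfl⟩
    exact hno X x1 Y y1
  have hsub : S ⊆ S' := by
    intro C hC
    rw [hmem]
    intro h
    exact h (C.space (e+2)) (C.le (by omega) (by omega)) ⟨C, hC, rfl⟩
  have hb := hS.bound hq hE'
  have hle : S'.card ≤ S.card := by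
    rw [← hc] at hb
    have h2 : (0:ℝ) < (Fintype.card F : ℝ)^n + 1 := by positivity
    exact_mod_cast le_of_mul_le_mul_right hb h2
  have heq := Finset.eq_of_subset_of_card_le hsub hle
  obtain ⟨C, hC⟩ := hne
  have hC' := (hmem C).1 (hsub hC)
  obtain ⟨-, S0, s1, s2, s3⟩ := (hall C).resolve_left hC'
  obtain ⟨Y, y1, y2, -⟩ := hS.reach (fun _ => 0) (e+2) he (fun _ _ _ _ _ _ => rfl) C S0 s1 s2
  apply s3
  refine ⟨Y, ?_, y1⟩
  rw [heq, hmem, y2 (e+3) (by omega)]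
  exact hC'

end Bsec
end Symp
end Excl3


section Transfer
set_option linter.unusedSectionVars false
variable {F V : Type} [Field F] [AddCommGroup V] [Module F V]
variable {B : V →ₗ[F] V →ₗ[F] F} {n : ℕ}

/-- restriction of a chamber to a flag of type `J` -/
noncomputable def resJ {J : Finset ℕ} (hJ : J ⊆ Finset.Icc 1 n) (C : Ch B n) : SFlag B J where
  space := fun j => if j ∈ J then C.space j else ⊥
  isotropic := by intro i hi; simp only [hi, if_true]; exact C.iso i
  finrank_eq := by
    intro i hi
    have h2 : (if i ∈ J then C.space i else ⊥) = C.space i := if_pos hi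
    show finrank F ↥(if i ∈ J then C.space i else ⊥) = i
    rw [h2]; exact C.finrank_eq i (hJ hi)
  mono := by intro i hi j hj hij; simp only [hi, hj, if_true]; exact C.mono i (hJ hi) j (hJ hj) hij
  eq_bot := by intro i hi; exact if_neg hi

lemma resJ_space {J : Finset ℕ} (hJ : J ⊆ Finset.Icc 1 n) (C : Ch B n) {j : ℕ} (hj : j ∈ J) :
    (resJ hJ C).space j = C.space j := if_pos hj

lemma resJ_eq {J : Finset ℕ} (hJ : J ⊆ Finset.Icc 1 n) (C : Ch B n) (Fl : SFlag B J) :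
    resJ hJ C = Fl ↔ ∀ j ∈ J, C.space j = Fl.space j := by
  constructor
  · rintro rfl j hj; exact (resJ_space hJ C hj).symm
  · intro h
    apply SFlag.ext'
    intro j
    by_cases hj : j ∈ J
    · rw [resJ_space hJ C hj, h j hj]
    · rw [(resJ hJ C).eq_bot j hj, Fl.eq_bot j hj]

namespace Symp
variable (hS : Symp B n)
include hS

lemma iso_inj {g : V →ₗ[F] V} (hg : ∀ x y, B (g x) (g y) = B x y) : Function.Injective g := by
  rw [injective_iff_map_eq_zero]
  intro x hx
  apply hS.nd x
  intro y
  rw [← hg, hx]; simp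

lemma exists_map {g : V →ₗ[F] V} (hg : ∀ x y, B (g x) (g y) = B x y) (C : Ch B n) :
    ∃ D : Ch B n, ∀ j, D.space j = (C.space j).map g := by
  have := hS.fd
  refine ⟨⟨fun j => (C.space j).map g, ?_, ?_, ?_, ?_⟩, fun _ => rfl⟩
  · rintro i hi _ ⟨u, hu, rfl⟩ _ ⟨w, hw, rfl⟩
    rw [hg]; exact C.iso i u hu w hw
  · intro i hi
    refine Eq.trans ?_ (C.finrank_eq i hi)
    exact (Submodule.equivMapOfInjective g (hS.iso_inj hg) (C.space i)).finrank_eq.symm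
  · intro i hi j hj hij; exact Submodule.map_mono (C.mono i hi j hj hij)
  · intro i hi
    show (C.space i).map g = ⊥
    rw [C.eq_bot i hi, Submodule.map_bot]

lemma exists_isom {i : ℕ} (h1 : 1 ≤ i) (hin : i ≤ n) {C D : Ch B n} (h : Ad1 i C D) :
    ∃ g : V →ₗ[F] V, (∀ x y, B (g x) (g y) = B x y) ∧ ∀ j ≤ n, (C.space j).map g ≤ D.space j := by
  have := hS.fd
  have hle : ∀ j ≤ n, ∀ j' ≤ j, C.space j' ≤ C.space j := fun j hj j' hj' => C.le hj' hj
  obtain ⟨p, p1, p2⟩ := exists_mem_not (W := C.space (i-1)) (U := C.space i)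
    (by rw [C.fr (by omega), C.fr hin]; omega)
  obtain ⟨p', q1, q2⟩ := exists_mem_not (W := C.space (i-1)) (U := D.space i)
    (by rw [C.fr (by omega), D.fr hin]; omega)
  have eC : C.space (i-1) ⊔ Submodule.span F {p} = C.space i := by
    apply Submodule.eq_of_le_of_finrank_eq
    · exact sup_le (C.le (by omega) hin) ((Submodule.span_singleton_le_iff_mem _ _).2 p1)
    · rw [finrank_sup_span p2, C.fr (by omega), C.fr hin]; omega
  have hCD : C.space (i-1) ≤ D.space i := by rw [h.2 _ (by omega)]; exact D.le (by omega) hin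
  have eD : C.space (i-1) ⊔ Submodule.span F {p'} = D.space i := by
    apply Submodule.eq_of_le_of_finrank_eq
    · exact sup_le hCD ((Submodule.span_singleton_le_iff_mem _ _).2 q1)
    · rw [finrank_sup_span q2, C.fr (by omega), D.fr hin]; omega
  have hp' : p' ∉ C.space i := by
    intro hp
    apply h.ne
    symm
    apply Submodule.eq_of_le_of_finrank_eq
    · rw [← eD]
      exact sup_le (C.le (by omega) hin) ((Submodule.span_singleton_le_iff_mem _ _).2 hp)
    · rw [C.fr hin, D.fr hin]
  -- finishing criterion
  have fin : ∀ g : V →ₗ[F] V, (∀ x ∈ C.space (i-1), g x = x) → g p = p' →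
      (∀ j ≤ n, i < j → ∀ x ∈ C.space j, g x ∈ C.space j) →
      ∀ j ≤ n, (C.space j).map g ≤ D.space j := by
    intro g g1 g2 g3 j hj
    rcases Nat.lt_trichotomy j i with hji | rfl | hji
    · rintro _ ⟨x, hx, rfl⟩
      rw [g1 x (C.le (by omega) (by omega) hx), ← h.2 j (by omega)]; exact hx
    · rw [← eC, Submodule.map_sup]
      apply sup_le
      · rintro _ ⟨x, hx, rfl⟩
        rw [g1 x hx]; exact hCD hx
      · rw [Submodule.map_span, Set.image_singleton, g2]
        exact (Submodule.span_singleton_le_iff_mem _ _).2 q1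
    · rintro _ ⟨x, hx, rfl⟩
      rw [← h.2 j (by omega)]; exact g3 j hj hji x hx
  have op : ∀ x ∈ C.space (i-1), B x p = 0 := fun x hx => C.iso i x (C.le (by omega) hin hx) p p1
  have op' : ∀ x ∈ C.space (i-1), B x p' = 0 := fun x hx => D.iso i x (hCD hx) p' q1
  by_cases hi : i < n
  · have hpU : p ∈ C.space (i+1) := C.le (by omega) (by omega) p1
    have hpU' : p' ∈ C.space (i+1) := by
      rw [h.2 _ (by omega)]; exact D.le (by omega) (by omega) q1
    let u := p' - p
    have hu : u ∈ C.space (i+1) := Submodule.sub_mem _ hpU' hpU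
    have hun : p ∉ C.space (i-1) ⊔ Submodule.span F {u} := by
      intro hp
      obtain ⟨a, ha, c, hc⟩ := mem_sup_span.1 hp
      by_cases c0 : c = 0
      · apply p2; rw [c0, zero_smul, add_zero] at hc; rw [← hc] ; exact ha
      · apply hp'
        have e : p' = c⁻¹ • (p - a) + p := by
          have : c • u = p - a := by rw [← hc]; abel
          rw [← this, smul_smul, inv_mul_cancel₀ c0, one_smul]; simp [u]
        rw [e]
        exact Submodule.add_mem _ (Submodule.smul_mem _ _
          (Submodule.sub_mem _ p1 (C.le (by omega) hin ha))) p1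
    obtain ⟨w0, w1, w2⟩ : ∃ w ∈ bperp B (C.space (i-1) ⊔ Submodule.span F {u}), B p w ≠ 0 := by
      by_contra hcon
      push Not at hcon
      apply hun
      rw [← hS.bperp_bperp (C.space (i-1) ⊔ Submodule.span F {u})]
      rw [mem_bperp]
      intro w hw
      exact hS.sym0 (hcon w hw)
    let w := (B p w0)⁻¹ • w0
    have hw1 : w ∈ bperp B (C.space (i-1) ⊔ Submodule.span F {u}) := Submodule.smul_mem _ _ w1
    have hpw : B p w = 1 := by simp [w, w2]
    rw [mem_bperp] at hw1
    have huw : B u w = 0 := hw1 u (Submodule.mem_sup_right (Submodule.mem_span_singleton_self u))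
    have hwu : B w u = 0 := hS.sym0 huw
    let g : V →ₗ[F] V := LinearMap.id + (B.flip u).smulRight w + (B.flip w).smulRight u
    have hg : ∀ x, g x = x + B x u • w + B x w • u := fun x => by simp [g]
    refine ⟨g, ?_, fin g ?_ ?_ ?_⟩
    · intro x y
      rw [hg, hg]
      simp only [map_add, map_smul, LinearMap.add_apply, LinearMap.smul_apply, smul_eq_mul, huw, hwu,
        hS.alt u, hS.alt w, hS.skew u y, hS.skew w y]
      ring
    · intro x hx
      rw [hg, hw1 x (Submodule.mem_sup_left hx)]
      have : B x u = 0 := by simp only [u, map_sub, op x hx, op' x hx, sub_zero]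
      rw [this]; simp
    · rw [hg, hpw, C.iso (i+1) p hpU u hu]; simp [u]
    · intro j hj hij x hx
      have huj : u ∈ C.space j := C.le (by omega) hj hu
      rw [hg, C.iso j x hx u huj, zero_smul, add_zero]
      exact Submodule.add_mem _ hx (Submodule.smul_mem _ _ huj)
  · have : i = n := by omega
    subst this
    have hb : B p p' ≠ 0 := by
      intro hb
      apply hp'
      rw [← hS.bperp_max (C.iso i) (C.fr le_rfl), ← eC, mem_bperp]
      intro x hx
      obtain ⟨a, ha, c, rfl⟩ := mem_sup_span.1 hx
      simp [op' a ha, hb]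
    let u := p' - p
    let g : V →ₗ[F] V := LinearMap.id + (B p p')⁻¹ • (B.flip u).smulRight u
    have hg : ∀ x, g x = x + (B p p')⁻¹ • B x u • u := fun x => by simp [g]
    refine ⟨g, ?_, fin g ?_ ?_ ?_⟩
    · intro x y
      rw [hg, hg]
      simp only [map_add, map_smul, LinearMap.add_apply, LinearMap.smul_apply, smul_eq_mul,
        hS.alt u, hS.skew u y]
      ring
    · intro x hx
      have : B x u = 0 := by simp only [u, map_sub, op x hx, op' x hx, sub_zero]
      rw [hg, this]; simp
    · have : B p u = B p p' := by simp only [u, map_sub, hS.alt p, sub_zero]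
      rw [hg, this, smul_smul, inv_mul_cancel₀ hb]; simp [u]
    · intro j hj hij; omega

variable [Fintype (Ch B n)] [Fintype F] (hq : 4 ≤ Fintype.card F)

lemma fib_le (J : Finset ℕ) (hJ : J ⊆ Finset.Icc 1 n) {i : ℕ} (h1 : 1 ≤ i) (hin : i ≤ n) {C D : Ch B n}
    (h : Adj i C D) :
    (Finset.univ.filter fun X : Ch B n => ∀ j ∈ J, X.space j = C.space j).card ≤
    (Finset.univ.filter fun X : Ch B n => ∀ j ∈ J, X.space j = D.space j).card := by
  have := hS.fd
  by_cases hne : C = D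
  · rw [hne]
  obtain ⟨g, hg, hg2⟩ := hS.exists_isom h1 hin ⟨hne, h⟩
  choose m hm using fun X => hS.exists_map hg X
  apply Finset.card_le_card_of_injOn m
  · intro X hX
    simp only [Finset.coe_filter, Finset.mem_univ, true_and, Set.mem_setOf_eq] at hX ⊢
    intro j hj
    have hjn := (Finset.mem_Icc.1 (hJ hj)).2
    rw [hm, hX j hj]
    apply Submodule.eq_of_le_of_finrank_eq (hg2 j hjn)
    rw [D.fr hjn, ← (Submodule.equivMapOfInjective g (hS.iso_inj hg) _).finrank_eq, C.fr hjn]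
  · intro X _ Y _ hXY
    apply SFlag.ext'
    intro j
    have : (X.space j).map g = (Y.space j).map g := by rw [← hm, ← hm, hXY]
    exact Submodule.map_injective_of_injective (hS.iso_inj hg) this

lemma exists_chamber : Nonempty (Ch B n) := by
  obtain ⟨C, -⟩ := hS.exists_ext (J := ∅) (by simp)
    ⟨fun _ => ⊥, by simp, by simp, by simp, by simp⟩
  exact ⟨C⟩

include hq

lemma lift_card {J : Finset ℕ} (hJ : J ⊆ Finset.Icc 1 n) [Finite (SFlag B J)] :
    ∃ r : ℕ, 0 < r ∧ ∀ 𝓕 : Set (SFlag B J),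
      (Finset.univ.filter fun C : Ch B n => resJ hJ C ∈ 𝓕).card = 𝓕.ncard * r := by
  obtain ⟨C0⟩ := hS.exists_chamber
  let φ : Ch B n → ℕ := fun C =>
    (Finset.univ.filter fun X : Ch B n => ∀ j ∈ J, X.space j = C.space j).card
  have hφ : ∀ C D, φ C = φ D := by
    intro C D
    have := hS.conn_all hq (fun C => (φ C : ℝ)) (fun k k1 k2 X Y hXY => by
      show (φ X : ℝ) = φ Y
      rw [Nat.cast_inj]
      exact le_antisymm (hS.fib_le J hJ k1 k2 hXY) (hS.fib_le J hJ k1 k2 hXY.symm)) C D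
    exact_mod_cast this
  refine ⟨φ C0, Finset.card_pos.2 ⟨C0, by simp⟩, ?_⟩
  intro 𝓕
  have := Fintype.ofFinite (SFlag B J)
  rw [Finset.card_eq_sum_card_fiberwise (f := resJ hJ) (t := 𝓕.toFinset)
    (by intro C hC; simpa using hC)]
  rw [Finset.sum_const_nat (m := φ C0), Set.ncard_eq_toFinset_card']
  intro Fl hFl
  obtain ⟨C, hC⟩ := hS.exists_ext hJ Fl
  rw [hφ C0 C]
  congr 1
  ext X
  simp only [Finset.mem_filter, Finset.mem_univ, true_and, resJ_eq]
  rw [Set.mem_toFinset] at hFl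
  constructor
  · rintro ⟨-, h⟩ j hj; rw [h j hj, hC j hj]
  · intro h
    have : ∀ j ∈ J, X.space j = Fl.space j := fun j hj => by rw [h j hj, hC j hj]
    exact ⟨by rw [(resJ_eq hJ X Fl).2 this]; exact hFl, this⟩

lemma lift_i {i : ℕ} (h1 : 1 ≤ i) (hin : i ≤ n) [Finite (SFlag B {i})] :
    ∃ r : ℕ, 0 < r ∧ ∀ 𝓖 : Set (Submodule F V), (∀ T ∈ 𝓖, IsTotIso B T ∧ finrank F T = i) →
      (Finset.univ.filter fun C : Ch B n => C.space i ∈ 𝓖).card = 𝓖.ncard * r := by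
  have hJ : ({i} : Finset ℕ) ⊆ Finset.Icc 1 n := by
    intro x hx; rw [Finset.mem_singleton] at hx; rw [Finset.mem_Icc]; omega
  obtain ⟨r, r0, hr⟩ := hS.lift_card hq hJ
  refine ⟨r, r0, ?_⟩
  intro 𝓖 hG
  have h2 := hr {Fl | Fl.space i ∈ 𝓖}
  have e1 : 𝓖 = (fun Fl : SFlag B {i} => Fl.space i) '' {Fl | Fl.space i ∈ 𝓖} := by
    ext T
    constructor
    · intro hT
      obtain ⟨a, b⟩ := hG T hT
      refine ⟨⟨fun j => if j = i then T else ⊥, ?_, ?_, ?_, ?_⟩, ?_, ?_⟩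
      · intro j hj; rw [Finset.mem_singleton] at hj; simp only [hj, if_true]; exact a
      · intro j hj; rw [Finset.mem_singleton] at hj
        have h2 : (if j = i then T else ⊥) = T := if_pos hj
        show finrank F ↥(if j = i then T else ⊥) = j
        rw [h2, b, hj]
      · intro j hj k hk _; rw [Finset.mem_singleton] at hj hk; rw [hj, hk]
      · intro j hj; rw [Finset.mem_singleton] at hj; exact if_neg hj
      · show (if i = i then T else ⊥) ∈ 𝓖
        rw [if_pos rfl]; exact hT
      · exact if_pos rfl
    · rintro ⟨Fl, hFl, rfl⟩; exact hFl
  have e2 : 𝓖.ncard = {Fl : SFlag B {i} | Fl.space i ∈ 𝓖}.ncard := by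
    conv_lhs => rw [e1]
    apply Set.ncard_image_of_injOn
    intro X _ Y _ hXY
    apply SFlag.ext'
    intro j
    by_cases hj : j = i
    · rw [hj]; exact hXY
    · rw [X.eq_bot j (by simpa using hj), Y.eq_bot j (by simpa using hj)]
  rw [e2, ← h2]
  congr 1
  ext X
  simp only [Finset.mem_filter, Finset.mem_univ, true_and, Set.mem_setOf_eq]
  rw [resJ_space hJ X (Finset.mem_singleton_self i)]

end Symp

lemma pow_aux {q n m : ℕ} (hn : 3 ≤ n) (hq : 2^n ≤ q) (hm : m < n) : (q+1)^m < q^n + 1 := by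
  have hq1 : 1 ≤ q := le_trans Nat.one_le_two_pow hq
  obtain ⟨k, rfl⟩ : ∃ k, n = k + 1 := ⟨n-1, by omega⟩
  have h2 : 2^k ≤ q := le_trans (Nat.pow_le_pow_right (by omega) (by omega)) hq
  calc (q+1)^m ≤ (q+1)^k := Nat.pow_le_pow_right (by omega) (by omega)
    _ ≤ (2*q)^k := Nat.pow_le_pow_left (by omega) k
    _ = 2^k * q^k := mul_pow _ _ _
    _ ≤ q * q^k := Nat.mul_le_mul_right _ h2
    _ = q^(k+1) := by ring
    _ < _ := by omega

end Transfer


/-- For large `q`, a ratio-sharp EKR-set of flags of type `J` with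
`1 ∈ J` or `n ∈ J` is the set of all flags of type `J` containing a member of a
maximum EKR-set of `i`-spaces for some `i ∈ {1,n} ∩ J`. -/
theorem stmt_1 (n : ℕ) (hn : 3 ≤ n) :
    ∃ q₀ : ℕ, ∀ (F V : Type) [Field F] [Fintype F] [AddCommGroup V] [Module F V],
      ∀ q : ℕ, Fintype.card F = q → q₀ ≤ q →
      ∀ B : V →ₗ[F] V →ₗ[F] F, IsAltForm B → NondegForm B →
      FiniteDimensional F V → Module.finrank F V = 2 * n →
      ∀ J : Finset ℕ, J ⊆ Finset.Icc 1 n → (1 ∈ J ∨ n ∈ J) →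
      ∀ 𝓕 : Set (SFlag B J),
        IsEKRFlags 𝓕 →
        (𝓕.ncard : ℝ) = (Nat.card (SFlag B J) : ℝ) / ((q : ℝ) ^ n + 1) →
        ∃ i : ℕ, (i = 1 ∨ i = n) ∧ i ∈ J ∧
          ∃ 𝓕i : Set (Submodule F V),
            IsEKRSpaces B i 𝓕i ∧
            (∀ 𝓖 : Set (Submodule F V), IsEKRSpaces B i 𝓖 → 𝓖.ncard ≤ 𝓕i.ncard) ∧
            𝓕 = {Fl : SFlag B J | Fl.space i ∈ 𝓕i} := by
  refine ⟨2^n, ?_⟩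
  intro F V _ _ _ _ q hFq hq0 B hAlt hNd hfd hdim J hJ hJ1 𝓕 hEKR hcard
  have hS : Symp B n := ⟨hAlt, hNd, hfd, hdim, hn⟩
  have hq : 4 ≤ Fintype.card F := by
    rw [hFq]
    exact le_trans (show 4 ≤ 2^n from le_trans (by norm_num) (Nat.pow_le_pow_right (by omega) hn)) hq0
  have hVf : Finite V := Module.finite_of_finite F
  have hFC : Fintype (Ch B n) := Fintype.ofFinite _
  obtain ⟨r, r0, hr⟩ := hS.lift_card hq hJ
  set S : Finset (Ch B n) := Finset.univ.filter fun C : Ch B n => resJ hJ C ∈ 𝓕 with hSdef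
  have hmem : ∀ C, C ∈ S ↔ resJ hJ C ∈ 𝓕 := fun C => by simp [hSdef]
  have hScard : S.card = 𝓕.ncard * r := hr 𝓕
  have hN : Fintype.card (Ch B n) = Nat.card (SFlag B J) * r := by
    have := hr Set.univ
    rw [Set.ncard_univ] at this
    rw [← this]; simp
  have hqpos : (0:ℝ) < (Fintype.card F : ℝ)^n + 1 := by positivity
  have hc : (S.card : ℝ) * ((Fintype.card F : ℝ)^n + 1) = Fintype.card (Ch B n) := by
    rw [hScard, hN]
    push_cast
    rw [hcard, hFq]
    rw [hFq] at hqpos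
    field_simp
  have hE : ∀ C ∈ S, ∀ D ∈ S, ¬ FlagOpp C D := by
    intro C hC D hD ho
    apply hEKR _ ((hmem C).1 hC) _ ((hmem D).1 hD)
    intro j hj
    rw [resJ_space hJ C hj, resJ_space hJ D hj]
    exact ho j (hJ hj)
  have hChne := hS.exists_chamber
  have hChpos : (0:ℝ) < Fintype.card (Ch B n) := by
    exact_mod_cast Fintype.card_pos
  have hne : S.Nonempty := by
    rw [Finset.nonempty_iff_ne_empty]
    intro h
    rw [h] at hc
    simp only [Finset.card_empty, Nat.cast_zero, zero_mul] at hc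
    rw [← hc] at hChpos
    exact lt_irrefl _ hChpos
  obtain ⟨i, i1, hin, hno⟩ := hS.struct hq hE hc hne
  have hst := hS.struct' hq hc hin hno
  have hiJ : i ∈ J := by
    by_contra hiJ
    have hconst : ∀ C D, ind S C = ind S D := by
      apply hS.conn_all hq
      intro k k1 k2 X Y hXY
      have hiff : X ∈ S ↔ Y ∈ S := by
        by_cases hk : k = i
        · subst hk
          rw [hmem, hmem]
          have : resJ hJ X = resJ hJ Y := by
            rw [resJ_eq]
            intro j hj
            rw [resJ_space hJ Y hj]
            exact hXY j (fun h => hiJ (h ▸ hj))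
          rw [this]
        · have hXY' := hXY i (Ne.symm hk)
          exact ⟨fun h => hst X h Y hXY'.symm, fun h => hst Y h X hXY'⟩
      simp only [ind, hiff]
    obtain ⟨C0, hC0⟩ := hne
    have huniv : S = Finset.univ := by
      ext D
      simp only [Finset.mem_univ, iff_true]
      have h := hconst C0 D
      by_contra hD
      rw [ind, ind, if_pos hC0, if_neg hD] at h
      norm_num at h
    rw [huniv, Finset.card_univ] at hc
    have : (0:ℝ) < (Fintype.card F : ℝ)^n := by
      have : (0:ℝ) < (Fintype.card F : ℝ) := by
        have : 0 < Fintype.card F := by omega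
        exact_mod_cast this
      positivity
    nlinarith
  have hi1n : i = 1 ∨ i = n := by
    by_contra hcon
    push Not at hcon
    obtain ⟨e, rfl⟩ : ∃ e, i = e + 2 := ⟨i-2, by omega⟩
    apply hS.excl hq hE hc hne (e := e) (by omega) hno
    have := pow_aux hn hq0 (show e + 2 < n by omega)
    rw [hFq]
    exact_mod_cast this
  have hEi : IsEKRSpaces B i {T | ∃ C ∈ S, C.space i = T} := by
    constructor
    · rintro T ⟨C, -, rfl⟩
      exact ⟨C.iso i, C.fr hin⟩
    · rintro T ⟨C, hC, rfl⟩ T' ⟨C', hC', rfl⟩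
      exact hno C hC C' hC'
  refine ⟨i, hi1n, hiJ, {T | ∃ C ∈ S, C.space i = T}, hEi, ?_, ?_⟩
  · intro 𝓖 hG
    obtain ⟨r', r0', hr'⟩ := hS.lift_i hq i1 hin
    have c1 := hr' 𝓖 hG.1
    have c2 := hr' _ hEi.1
    have c2' : S.card = {T | ∃ C ∈ S, C.space i = T}.ncard * r' := by
      rw [← c2]
      congr 1
      ext D
      simp only [Finset.mem_filter, Finset.mem_univ, true_and]
      constructor
      · intro h; exact ⟨D, h, rfl⟩
      · rintro ⟨C, hC, h⟩; exact hst C hC D h.symm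
    have hb := hS.bound hq (S := Finset.univ.filter fun C : Ch B n => C.space i ∈ 𝓖) (by
      intro C hC D hD ho
      exact hG.2 _ (Finset.mem_filter.1 hC).2 _ (Finset.mem_filter.1 hD).2 (hS.opp_iff.1 ho i hin))
    rw [← hc] at hb
    have hle := le_of_mul_le_mul_right hb hqpos
    have hle' : (Finset.univ.filter fun C : Ch B n => C.space i ∈ 𝓖).card ≤ S.card := by
      exact_mod_cast hle
    rw [c1, c2'] at hle'
    exact Nat.le_of_mul_le_mul_right hle' r0'
  · ext Fl
    obtain ⟨D, hD⟩ := hS.exists_ext hJ Fl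
    have hres : resJ hJ D = Fl := (resJ_eq hJ D Fl).2 hD
    constructor
    · intro hFl
      exact ⟨D, (hmem D).2 (by rw [hres]; exact hFl), hD i hiJ⟩
    · rintro ⟨C, hC, h⟩
      have := hst C hC D (by rw [hD i hiJ, h])
      rw [hmem, hres] at this
      exact this
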